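/- Every almost planar simple graph G admits a drawing in the plane such that: every edge crosses at most one other edge; any two crossing edges have no common endpoint; and any two crossing edges cross in exactly one point. -/

import Mathlib

/-!
Given a 1-planar drawing, keep one crossing point for every crossing pair of independent edges (edges
without a common end) and regard it as a new node. Cut at these nodes, the edges no longer need to
cross: the only remaining intersections are those between adjacent edges, and superfluous ones
between the two edges of a pair. By a theorem of Hanani–Tutte type such intersections can be removed,
and a planar drawing of the cut graph is a 1-planar drawing of `G` in which only independent edges
cross, and every crossing pair does so in exactly its chosen point.

The graph is not assumed to be finite or countable. The vertices of degree at least three and the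
ends of crossing edges form a set `CDrawing.B`, which is countable by Moore's theorem that a family
of disjoint triods in the plane is countable (`Moore.countable`, proved from the nonplanarity of
`K₃,₃`). The components of the rest are paths and cycles (`Layout`). There may be uncountably many
of them, so every edge of the redrawn countable core comes with a one-parameter family of parallel
curves, among which the components joining the same two vertices of the core are distributed.

The redrawing theorem is `fat_redraw`. Each curve of the core is subdivided by a midpoint, close to
an end without crossings where necessary, so that pieces of different curves meet only when they lead
to the same node; thus disjoint edges of the subdivided graph are drawn in disjoint sets. The
topology of the plane enters through a single fact (`VKaux.turn_eq`, `VK.of_joined`): for two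
disjoint curves the turning numbers about each other's ends satisfy a relation modulo two. A family
of parities with these relations is a certificate `VK` of planarity, and the rest is combinatorial.
The subdivided graph has a normal spanning forest (`NST.exists`). The certificate assigns to each
back edge a side, left or right of the forest, which satisfies the conditions known from the
left-right planarity criterion (`NST.color_same`, `NST.color_diff`). These allow the children of every
vertex to be ordered so that all tree and back edges form a noncrossing arc diagram on a line
(`NST.Good.arcDiag`), with positions coded by integer sequences in lexicographic order. Such a
diagram is turned into explicit curves by `ArcDiag.hosts`.

Finally `CDrawing.core` applies this to the given drawing, `CDrawing.carriers` and
`CDrawing.nice_drawing` put the paths and cycles of low degree vertices back, and join the two halves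
of every crossing edge at the crossing point.
-/

open Set

/-- A drawing of a simple graph `G` in the plane: an injective placement of vertices
together with, for each edge, a continuous injective curve between the points of its
endpoints, whose interior avoids all vertex points; any two distinct edge curves meet in
finitely many points, and no point lies in the interiors of three distinct edge curves. -/
structure Drawing {V : Type*} (G : SimpleGraph V) where
  pos : V → ℝ × ℝ
  pos_inj : Function.Injective pos
  curve : G.edgeSet → ℝ → ℝ × ℝ
  curve_cont : ∀ e, ContinuousOn (curve e) (Icc 0 1)
  curve_inj : ∀ e, InjOn (curve e) (Icc 0 1)
  curve_ends : ∀ e : G.edgeSet, ∃ a b : V, (e : Sym2 V) = s(a, b) ∧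
      curve e 0 = pos a ∧ curve e 1 = pos b
  interior_no_vertex : ∀ e, ∀ t ∈ Ioo (0 : ℝ) 1, ∀ v, curve e t ≠ pos v
  finite_meet : ∀ e f, e ≠ f → (curve e '' Icc 0 1 ∩ curve f '' Icc 0 1).Finite
  no_triple_point : ∀ p : ℝ × ℝ, ∀ e f g, e ≠ f → e ≠ g → f ≠ g →
      p ∈ curve e '' Ioo 0 1 → p ∈ curve f '' Ioo 0 1 → p ∈ curve g '' Ioo 0 1 → False

/-- Two edges cross in a drawing if some point lies in the interiors of both curves. -/
def Drawing.Crosses {V : Type*} {G : SimpleGraph V} (D : Drawing G) (e f : G.edgeSet) : Prop :=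
  e ≠ f ∧ ∃ p : ℝ × ℝ, p ∈ D.curve e '' Ioo 0 1 ∧ p ∈ D.curve f '' Ioo 0 1

/-- A drawing is almost planar (1-planar) if every edge crosses at most one other edge. -/
def Drawing.IsAlmostPlanar {V : Type*} {G : SimpleGraph V} (D : Drawing G) : Prop :=
  ∀ e f g, D.Crosses e f → D.Crosses e g → f = g

/-- A graph is almost planar if it admits a drawing in which every edge crosses at most
one other edge. -/
def SimpleGraph.AlmostPlanar {V : Type*} (G : SimpleGraph V) : Prop :=
  ∃ D : Drawing G, D.IsAlmostPlanar

/-! ### Parities of turning numbers -/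

/-- A mod-2 certificate of planarity for `H`. For an edge `ab` and a vertex `v` off it, `n a b v` is
thought of as the parity of the number of turns of a curve drawing `ab` about `v`, and `o` as an
orientation of all pairs of vertices. The relation `eq` is what disjointness of two curves drawing
disjoint edges `ab` and `cd` implies. -/
structure VK {N : Type*} (H : SimpleGraph N) where
  n : N → N → N → ZMod 2
  o : N → N → ZMod 2
  n_symm : ∀ a b v, n a b v = n b a v
  o_anti : ∀ a b, a ≠ b → o a b + o b a = 1
  eq : ∀ a b c d, H.Adj a b → H.Adj c d → a ≠ c → a ≠ d → b ≠ c → b ≠ d →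
    n a b c + n a b d + n c d a + n c d b = o c a + o c b + o d a + o d b

namespace VKaux
open Complex

theorem exists_log {A : Type*} [TopologicalSpace A] [SimplyConnectedSpace A]
    [LocallyPathConnectedSpace A] (f : C(A, ℂ)) (hf : ∀ x, f x ≠ 0) :
    ∃ L : C(A, ℂ), ∀ x, exp (L x) = f x := by
  obtain ⟨a⟩ : Nonempty A := inferInstance
  obtain ⟨L, ⟨-, hL⟩, -⟩ := isCoveringMapOn_exp.existsUnique_continuousMap_lifts f
    (exp_log (hf a)) (fun x => hf x)
  exact ⟨L, fun x => congrFun hL x⟩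

theorem log_unique (L L' : C(ℝ, ℂ)) (h : ∀ x, exp (L x) = exp (L' x)) :
    L 1 - L 0 = L' 1 - L' 0 := by
  have h0 : L = L' + ContinuousMap.const ℝ (L 0 - L' 0) := by
    apply DFunLike.coe_injective
    refine isCoveringMap_exp.eq_of_comp_eq L.continuous (ContinuousMap.continuous _) ?_ 0 ?_
    · funext x
      apply Subtype.ext
      simp [exp_add, exp_sub, h, exp_ne_zero]
    · simp
  have := DFunLike.congr_fun h0 1
  simp at this
  rw [this]; ring

/-- The integer `k` counts the turns of `γ` around `v`. -/
def Turn (γ : C(ℝ, ℂ)) (v : ℂ) (k : ℤ) : Prop :=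
  ∀ L : C(ℝ, ℂ), (∀ t, exp (L t) = γ t - v) →
    (L 1 - L 0).im = arg (γ 1 - v) - arg (γ 0 - v) + 2 * Real.pi * k

theorem im_eq_arg {z w : ℂ} (h : exp z = w) : ∃ k : ℤ, z.im = arg w + 2 * Real.pi * k := by
  have hw : w ≠ 0 := h ▸ exp_ne_zero z
  have : exp z = exp (log w) := by rw [h, exp_log hw]
  obtain ⟨k, hk⟩ := exp_eq_exp_iff_exists_int.1 this
  refine ⟨k, ?_⟩
  rw [hk]; simp [log_im]; ring

theorem exists_turn (γ : C(ℝ, ℂ)) (v : ℂ) (h : ∀ t, γ t ≠ v) : ∃ k, Turn γ v k := by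
  obtain ⟨L, hL⟩ := exists_log (γ - ContinuousMap.const ℝ v) (fun x => sub_ne_zero.2 (h x))
  simp at hL
  obtain ⟨k1, h1⟩ := im_eq_arg (hL 1)
  obtain ⟨k0, h0⟩ := im_eq_arg (hL 0)
  refine ⟨k1 - k0, fun L' hL' => ?_⟩
  rw [log_unique L' L (fun x => by rw [hL, hL']), sub_im, h1, h0]
  push_cast; ring

theorem arg_sub_arg_neg {z : ℂ} (hz : z ≠ 0) :
    arg z - arg (-z) = Real.pi * (1 - 2 * (if 0 < arg z then 0 else 1)) := by
  split_ifs with h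
  · have : arg (-z) = arg z - Real.pi := by
      rw [arg_neg_eq_arg_sub_pi_iff]
      rcases (arg_nonneg_iff.1 h.le).lt_or_eq with h1 | h1
      · exact Or.inl h1
      · refine Or.inr ⟨h1.symm, ?_⟩
        by_contra h2
        have : arg z = 0 := arg_eq_zero_iff.2 ⟨not_lt.1 h2, h1.symm⟩
        linarith
    rw [this]; ring
  · have : arg (-z) = arg z + Real.pi := by
      rw [arg_neg_eq_arg_add_pi_iff]
      rcases lt_or_eq_of_le (not_lt.1 h) with h1 | h1
      · exact Or.inl (arg_neg_iff.1 h1)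
      · obtain ⟨h2, h3⟩ := arg_eq_zero_iff.1 h1
        refine Or.inr ⟨h3, lt_of_le_of_ne h2 ?_⟩
        intro h4
        exact hz (Complex.ext h4.symm h3)
    rw [this]; ring

/-- The parity telling in which of two opposite half-planes the direction from `x` to `y` lies. -/
noncomputable def sgn (x y : ℂ) : ℤ := if 0 < arg (y - x) then 0 else 1

theorem arg_sgn {x y : ℂ} (h : x ≠ y) :
    arg (y - x) - arg (x - y) = Real.pi * (1 - 2 * (sgn x y : ℝ)) := by
  have := arg_sub_arg_neg (sub_ne_zero.2 h.symm)
  rw [neg_sub] at this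
  rw [this, sgn]; split_ifs <;> simp

theorem sgn_anti {x y : ℂ} (h : x ≠ y) : sgn x y + sgn y x = 1 := by
  have h1 := arg_sgn h
  have h2 := arg_sgn h.symm
  have h3 : Real.pi * (1 - (sgn x y + sgn y x : ℝ)) = 0 := by linarith
  have h4 := (mul_eq_zero.1 h3).resolve_left Real.pi_ne_zero
  have : ((sgn x y + sgn y x : ℤ) : ℝ) = 1 := by push_cast; linarith
  exact_mod_cast this

/-- For disjoint curves `e` and `f` the difference `e s - f t` has a logarithm on the simply connected
square, so its changes along the four sides cancel. Modulo two this relates the turning numbers of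
each curve about the ends of the other one. -/
theorem turn_eq {e f : C(ℝ, ℂ)} (h : ∀ s t, e s ≠ f t) {k1 k2 k3 k4 : ℤ}
    (h1 : Turn e (f 0) k1) (h2 : Turn e (f 1) k2) (h3 : Turn f (e 0) k3) (h4 : Turn f (e 1) k4) :
    (k1 + k2 + k3 + k4 : ZMod 2) =
      sgn (f 0) (e 0) + sgn (f 0) (e 1) + sgn (f 1) (e 0) + sgn (f 1) (e 1) := by
  let F : C(ℝ × ℝ, ℂ) := ⟨fun p => e p.1 - f p.2, by fun_prop⟩
  obtain ⟨L, hL⟩ := exists_log F (fun p => sub_ne_zero.2 (h _ _))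
  replace hL : ∀ s t, exp (L (s, t)) = e s - f t := fun s t => hL (s, t)
  have a1 := h1 ⟨fun s => L (s, 0), by fun_prop⟩ (fun s => hL s 0)
  have a2 := h2 ⟨fun s => L (s, 1), by fun_prop⟩ (fun s => hL s 1)
  have hneg : ∀ s t, exp (L (s, t) + Real.pi * I) = f t - e s := by
    intro s t; rw [exp_add, hL, exp_pi_mul_I]; ring
  have a3 := h3 ⟨fun s => L (0, s) + Real.pi * I, by fun_prop⟩ (fun s => hneg 0 s)
  have a4 := h4 ⟨fun s => L (1, s) + Real.pi * I, by fun_prop⟩ (fun s => hneg 1 s)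
  simp only [ContinuousMap.coe_mk, add_sub_add_right_eq_sub, sub_im] at a1 a2 a3 a4
  have b1 := arg_sgn (h 0 0).symm
  have b2 := arg_sgn (h 1 0).symm
  have b3 := arg_sgn (h 0 1).symm
  have b4 := arg_sgn (h 1 1).symm
  have : Real.pi * ((k1 - k2 - k3 + k4 : ℝ) + (- sgn (f 0) (e 1) + sgn (f 0) (e 0)
     + sgn (f 1) (e 1) - sgn (f 1) (e 0))) = 0 := by linarith
  have h5 := (mul_eq_zero.1 this).resolve_left Real.pi_ne_zero
  have h6 : (k1 - k2 - k3 + k4) + (- sgn (f 0) (e 1) + sgn (f 0) (e 0)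
     + sgn (f 1) (e 1) - sgn (f 1) (e 0)) = 0 := by exact_mod_cast h5
  have h7 := congrArg (Int.cast : ℤ → ZMod 2) h6
  push_cast at h7
  have neg2 : ∀ x : ZMod 2, -x = x := by decide
  simp only [sub_eq_add_neg, neg2] at h7
  have add2 : ∀ x y : ZMod 2, x + y = 0 → x = y := by decide
  exact add2 _ _ (by rw [← h7]; abel)

end VKaux

open VKaux in
/-- A drawing of `H` in which disjoint edges are drawn in disjoint sets provides a planarity
certificate. Adjacent edges are allowed to meet arbitrarily. -/
theorem VK.of_joined {N : Type*} (H : SimpleGraph N) (pos : N → ℂ) (hpos : Function.Injective pos)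
    (S : N → N → Set ℂ)
    (hj : ∀ a b, H.Adj a b → JoinedIn (S a b) (pos a) (pos b))
    (hd : ∀ a b c d, H.Adj a b → H.Adj c d → a ≠ c → a ≠ d → b ≠ c → b ≠ d →
      Disjoint (S a b) (S c d))
    (hv : ∀ a b v, H.Adj a b → v ≠ a → v ≠ b → pos v ∉ S a b) : Nonempty (VK H) := by
  classical
  have key : ∀ a b, ∃ γ : C(ℝ, ℂ), H.Adj a b → (∀ t, γ t ∈ S a b) ∧ γ 0 = pos a ∧ γ 1 = pos b := by
    intro a b
    by_cases h : H.Adj a b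
    · refine ⟨⟨(hj a b h).somePath.extend, Path.continuous_extend _⟩, fun _ => ⟨fun t => ?_, ?_, ?_⟩⟩
      · have : (hj a b h).somePath.extend t ∈ range (hj a b h).somePath := by
          rw [← Path.extend_range]; exact mem_range_self t
        obtain ⟨s, hs⟩ := this
        change (hj a b h).somePath.extend t ∈ S a b
        rw [← hs]
        exact (hj a b h).somePath_mem s
      · exact Path.extend_zero _
      · exact Path.extend_one _
    · exact ⟨0, fun h' => absurd h' h⟩
  choose γ hγ using key
  have key2 : ∀ a b v, ∃ k, (H.Adj a b ∧ v ≠ a ∧ v ≠ b) → Turn (γ a b) (pos v) k := by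
    intro a b v
    by_cases h : H.Adj a b ∧ v ≠ a ∧ v ≠ b
    · obtain ⟨k, hk⟩ := exists_turn (γ a b) (pos v) (fun t ht =>
        hv a b v h.1 h.2.1 h.2.2 (ht ▸ (hγ a b h.1).1 t))
      exact ⟨k, fun _ => hk⟩
    · exact ⟨0, fun h' => absurd h' h⟩
  choose k hk using key2
  have key3 : ∀ a b c d, H.Adj a b → H.Adj c d → a ≠ c → a ≠ d → b ≠ c → b ≠ d →
      ((k a b c + k a b d + k c d a + k c d b : ℤ) : ZMod 2) =
        ((sgn (pos c) (pos a) + sgn (pos c) (pos b) + sgn (pos d) (pos a) + sgn (pos d) (pos b) : ℤ)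
          : ZMod 2) := by
    intro a b c d hab hcd h1 h2 h3 h4
    obtain ⟨e1, e2, e3⟩ := hγ a b hab
    obtain ⟨f1, f2, f3⟩ := hγ c d hcd
    have := turn_eq (e := γ a b) (f := γ c d) (k1 := k a b c) (k2 := k a b d) (k3 := k c d a)
      (k4 := k c d b) (fun s t h => Set.disjoint_left.1 (hd a b c d hab hcd h1 h2 h3 h4)
        (e1 s) (h ▸ f1 t)) (by rw [f2]; exact hk _ _ _ ⟨hab, h1.symm, h3.symm⟩)
        (by rw [f3]; exact hk _ _ _ ⟨hab, h2.symm, h4.symm⟩)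
        (by rw [e2]; exact hk _ _ _ ⟨hcd, h1, h2⟩) (by rw [e3]; exact hk _ _ _ ⟨hcd, h3, h4⟩)
    rw [e2, e3, f2, f3] at this
    push_cast
    exact this
  let r : N → N → Prop := WellOrderingRel
  refine ⟨⟨fun a b v => if r a b then k a b v else k b a v, fun a b => sgn (pos a) (pos b), ?_, ?_, ?_⟩⟩
  · intro a b v
    rcases trichotomous_of r a b with h | h | h
    · have : ¬ r b a := asymm_of r h
      simp [h, this]
    · subst h; rfl
    · have : ¬ r a b := asymm_of r h
      simp [h, this]
  · intro a b h
    have := sgn_anti (fun h' => h (hpos h') : pos a ≠ pos b)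
    exact_mod_cast congrArg (Int.cast : ℤ → ZMod 2) this
  · intro a b c d hab hcd h1 h2 h3 h4
    have e1 := key3 a b c d hab hcd h1 h2 h3 h4
    have e2 := key3 b a c d hab.symm hcd h3 h4 h1 h2
    have e3 := key3 a b d c hab hcd.symm h2 h1 h4 h3
    have e4 := key3 b a d c hab.symm hcd.symm h4 h3 h2 h1
    push_cast at e1 e2 e3 e4
    split_ifs
    · exact e1
    · rw [← sub_eq_zero] at e3 ⊢; rw [← e3]; abel
    · rw [← sub_eq_zero] at e2 ⊢; rw [← e2]; abel
    · rw [← sub_eq_zero] at e4 ⊢; rw [← e4]; abel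

/-! ### Nonplanarity of `K₃,₃` and countability of families of triods -/

/-- `K₃,₃` has no planarity certificate: the sum of the relations over all pairs of disjoint edges
is `0 = 1`. -/
theorem VK.false_of_K33 (K : VK (completeBipartiteGraph (Fin 3) (Fin 3))) : False := by
  have h : ∀ k j k' j' : Fin 3, k ≠ k' → j ≠ j' →
     K.n (.inl k) (.inr j) (.inl k') + K.n (.inl k) (.inr j) (.inr j') +
     K.n (.inl k') (.inr j') (.inl k) + K.n (.inl k') (.inr j') (.inr j) =
     K.o (.inl k') (.inl k) + K.o (.inl k') (.inr j) + K.o (.inr j') (.inl k) +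
     K.o (.inr j') (.inr j) := by
    intro k j k' j' hk hj
    apply K.eq <;> simp [hk, hj]
  have o := fun j j' : Fin 3 => K.o_anti (.inr j) (.inr j')
  have e1 := h 0 0 1 1 (by decide) (by decide)
  have e2 := h 0 0 1 2 (by decide) (by decide)
  have e3 := h 0 1 1 0 (by decide) (by decide)
  have e4 := h 0 1 1 2 (by decide) (by decide)
  have e5 := h 0 2 1 0 (by decide) (by decide)
  have e6 := h 0 2 1 1 (by decide) (by decide)
  have f1 := h 0 0 2 1 (by decide) (by decide)
  have f2 := h 0 0 2 2 (by decide) (by decide)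
  have f3 := h 0 1 2 0 (by decide) (by decide)
  have f4 := h 0 1 2 2 (by decide) (by decide)
  have f5 := h 0 2 2 0 (by decide) (by decide)
  have f6 := h 0 2 2 1 (by decide) (by decide)
  have g1 := h 1 0 2 1 (by decide) (by decide)
  have g2 := h 1 0 2 2 (by decide) (by decide)
  have g3 := h 1 1 2 0 (by decide) (by decide)
  have g4 := h 1 1 2 2 (by decide) (by decide)
  have g5 := h 1 2 2 0 (by decide) (by decide)
  have g6 := h 1 2 2 1 (by decide) (by decide)
  have o1 := o 0 1 (by decide)
  have o2 := o 0 2 (by decide)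
  have o3 := o 1 2 (by decide)
  clear h o
  grind

namespace Moore

/-- Position of `x` relative to two separators `p` and `q`: below `p`, between them, or above. -/
noncomputable def cl (p q x : ℝ) : Fin 3 := if x < p then 0 else if x < q then 1 else 2

theorem exists_exit (a : C(ℝ, ℂ)) (c : ℂ) (r : ℝ) (h0 : ‖a 0 - c‖ < r) (h1 : r < ‖a 1 - c‖) :
    ∃ t ∈ Icc (0 : ℝ) 1, ‖a t - c‖ = r ∧ ∀ s ∈ Icc (0 : ℝ) t, ‖a s - c‖ = r → s = t := by
  have hcont : Continuous fun t => ‖a t - c‖ := by fun_prop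
  let T : Set ℝ := Icc 0 1 ∩ {t | ‖a t - c‖ = r}
  have hT : IsCompact T := isCompact_Icc.inter_right (isClosed_eq hcont continuous_const)
  have hne : T.Nonempty := by
    obtain ⟨t, ht, h⟩ := intermediate_value_Icc (zero_le_one' ℝ) hcont.continuousOn ⟨h0.le, h1.le⟩
    exact ⟨t, ht, h⟩
  obtain ⟨t, ht, hmin⟩ := hT.exists_isLeast hne
  exact ⟨t, ht.1, ht.2, fun s hs h => le_antisymm hs.2
    (hmin ⟨⟨hs.1, hs.2.trans ht.1.2⟩, h⟩)⟩

theorem exists_sep (θ : Fin 3 → ℝ) (h : Function.Injective θ) :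
    ∃ (σ : Equiv.Perm (Fin 3)) (p q : ℚ), ∀ j, cl p q (θ (σ j)) = j := by
  have hm : StrictMono (θ ∘ Tuple.sort θ) :=
    (Tuple.monotone_sort θ).strictMono_of_injective (h.comp (Equiv.injective _))
  have h01 : θ (Tuple.sort θ 0) < θ (Tuple.sort θ 1) := hm (by decide)
  have h12 : θ (Tuple.sort θ 1) < θ (Tuple.sort θ 2) := hm (by decide)
  obtain ⟨p, hp1, hp2⟩ := exists_rat_btwn h01
  obtain ⟨q, hq1, hq2⟩ := exists_rat_btwn h12
  refine ⟨Tuple.sort θ, p, q, fun j => ?_⟩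
  fin_cases j
  · simp [cl, hp1]
  · simp [cl, hp2.le, hq1]
  · have : ¬ θ (Tuple.sort θ 2) < p := by linarith
    simp [cl, this, hq2.le]

/-- A triod has a rational disc containing its centre which all three legs leave, such that two
rational angles separate the first points where the legs (suitably ordered) reach the circle. -/
theorem exists_disc {a : Fin 3 → C(ℝ, ℂ)} {o : ℂ} (h0 : ∀ j, a j 0 = o) (h1 : ∀ j, a j 1 ≠ o)
    (hd : ∀ j j', j ≠ j' → ∀ s ∈ Icc (0 : ℝ) 1, ∀ t ∈ Icc (0 : ℝ) 1, a j s = a j' t → a j s = o) :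
    ∃ (x y r p q : ℚ) (b : Fin 3 → C(ℝ, ℂ)) (t : Fin 3 → ℝ), (∀ j, ∃ j', b j = a j') ∧
      ‖o - ⟨x, y⟩‖ < r ∧ (∀ j, t j ∈ Icc (0 : ℝ) 1) ∧
      (∀ j, ∀ s ∈ Icc 0 (t j), ‖b j s - ⟨x, y⟩‖ = r → s = t j) ∧
      (∀ j, ‖b j (t j) - ⟨x, y⟩‖ = r ∧ cl p q (Complex.arg (b j (t j) - ⟨x, y⟩)) = j) := by
  obtain ⟨m, hm0, hm⟩ : ∃ m > 0, ∀ j, m ≤ ‖a j 1 - o‖ := by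
    refine ⟨min (min ‖a 0 1 - o‖ ‖a 1 1 - o‖) ‖a 2 1 - o‖, ?_, ?_⟩
    · simp [sub_eq_zero, h1]
    · intro j; fin_cases j <;> simp
  obtain ⟨r, hr0, hr1⟩ := exists_rat_btwn (show (0 : ℝ) < m / 2 by linarith)
  obtain ⟨x, hx1, hx2⟩ := exists_rat_btwn (show o.re - r / 2 < o.re by linarith)
  obtain ⟨y, hy1, hy2⟩ := exists_rat_btwn (show o.im - r / 2 < o.im by linarith)
  have hc : ‖o - ⟨x, y⟩‖ < r := by
    refine (Complex.norm_le_abs_re_add_abs_im _).trans_lt ?_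
    simp only [Complex.sub_re, Complex.sub_im]
    rw [abs_of_pos (by linarith), abs_of_pos (by linarith)]; linarith
  have hex : ∀ j, ∃ t ∈ Icc (0 : ℝ) 1, ‖a j t - ⟨x, y⟩‖ = r ∧
      ∀ s ∈ Icc (0 : ℝ) t, ‖a j s - ⟨x, y⟩‖ = r → s = t := by
    intro j
    apply exists_exit
    · rw [h0]; exact hc
    · have h2 := hm j
      have h3 : ‖a j 1 - o‖ ≤ ‖a j 1 - ⟨x, y⟩‖ + ‖o - ⟨x, y⟩‖ := by
        rw [← norm_sub_rev _ o]
        exact norm_sub_le_norm_sub_add_norm_sub _ _ _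
      linarith
  choose t ht1 ht2 ht3 using hex
  have hinj : Function.Injective fun j => Complex.arg (a j (t j) - ⟨x, y⟩) := by
    intro j j' hjj
    by_contra hne
    have : a j (t j) - ⟨x, y⟩ = a j' (t j') - ⟨x, y⟩ := by
      apply Complex.ext_norm_arg _ hjj
      rw [ht2, ht2]
    have h5 := hd j j' hne _ (ht1 j) _ (ht1 j') (sub_left_injective this)
    have h6 := ht2 j
    rw [h5] at h6
    linarith
  obtain ⟨σ, p, q, hσ⟩ := exists_sep _ hinj
  exact ⟨x, y, r, p, q, fun j => a (σ j), fun j => t (σ j), fun j => ⟨_, rfl⟩, hc,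
    fun j => ht1 _, fun j => ht3 _, fun j => ⟨ht2 _, hσ j⟩⟩

/-- The part of a circle lying in a class of `cl` is an arc. -/
theorem arc_joined {c : ℂ} {r p q : ℝ} {z w : ℂ} {j : Fin 3} (hz : ‖z - c‖ = r)
    (hzj : cl p q (Complex.arg (z - c)) = j) (hw : ‖w - c‖ = r)
    (hwj : cl p q (Complex.arg (w - c)) = j) :
    JoinedIn {z | ‖z - c‖ = r ∧ cl p q (Complex.arg (z - c)) = j} z w := by
  rcases eq_or_ne r 0 with rfl | hr0
  · rw [norm_eq_zero, sub_eq_zero] at hz hw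
    subst hz; subst hw
    exact JoinedIn.refl ⟨by simp, hzj⟩
  have hr : 0 < r := lt_of_le_of_ne (hz ▸ norm_nonneg _) hr0.symm
  let f : ℝ → ℂ := fun θ => c + r * Complex.exp (θ * Complex.I)
  have hf : Continuous f := by fun_prop
  have hfz : ∀ z : ℂ, ‖z - c‖ = r → f (Complex.arg (z - c)) = z := by
    intro z hz
    simp only [f]
    rw [← hz, Complex.norm_mul_exp_arg_mul_I]; ring
  have hcv : Convex ℝ {θ : ℝ | θ ∈ Ioc (-Real.pi) Real.pi ∧ cl p q θ = j} := by
    rw [convex_iff_ordConnected]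
    refine ⟨fun u hu v hv s hs => ⟨⟨hu.1.1.trans_le hs.1, hs.2.trans hv.1.2⟩, ?_⟩⟩
    have h1 := hu.2
    have h2 := hv.2
    have h3 := hs.1
    have h4 := hs.2
    simp only [cl] at *
    grind
  have := (hcv.isPathConnected ⟨Complex.arg (z - c), ⟨Complex.arg_mem_Ioc _, hzj⟩⟩).joinedIn
    (Complex.arg (z - c)) ⟨Complex.arg_mem_Ioc _, hzj⟩ (Complex.arg (w - c))
    ⟨Complex.arg_mem_Ioc _, hwj⟩
  have h2 := (this.map hf).mono (V := {z | ‖z - c‖ = r ∧ cl p q (Complex.arg (z - c)) = j}) (by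
    rintro _ ⟨θ, ⟨hθ, hθj⟩, rfl⟩
    simp only [f, add_sub_cancel_left, mem_ofPred_eq]
    rw [Complex.arg_real_mul _ hr, Complex.arg_exp_mul_I, toIocMod_eq_self _ |>.2 (by
      have : -Real.pi + 2 * Real.pi = Real.pi := by ring
      rw [this]; exact hθ)]
    simp [abs_of_pos hr, hθj])
  rwa [hfz z hz, hfz w hw] at h2

end Moore

open Moore in
/-- Moore's theorem: a family of disjoint triods in the plane is countable. Otherwise three of them
share the rational data of `exists_disc`. Their centres, joined along the legs and along disjoint
arcs of the circle to one point on each of three arcs, would then give a drawing of `K₃,₃` in which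
disjoint edges are disjoint. -/
theorem Moore.countable {ι : Type*} (a : ι → Fin 3 → C(ℝ, ℂ)) (o : ι → ℂ)
    (h0 : ∀ i j, a i j 0 = o i) (h1 : ∀ i j, a i j 1 ≠ o i)
    (hd : ∀ i j j', j ≠ j' → ∀ s ∈ Icc (0 : ℝ) 1, ∀ t ∈ Icc (0 : ℝ) 1,
      a i j s = a i j' t → a i j s = o i)
    (hdd : ∀ i i', i ≠ i' → ∀ j j', ∀ s ∈ Icc (0 : ℝ) 1, ∀ t ∈ Icc (0 : ℝ) 1,
      a i j s ≠ a i' j' t) : Countable ι := by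
  have hex := fun i => exists_disc (h0 i) (h1 i) (hd i)
  choose x y r p q b t hb hor ht hfirst hexit using hex
  by_contra hunc
  let D : ι → ℚ × ℚ × ℚ × ℚ × ℚ := fun i => (x i, y i, r i, p i, q i)
  obtain ⟨d, hdinf⟩ : ∃ d, ¬ Countable {i // D i = d} := by
    by_contra hall
    push Not at hall
    exact hunc ((Equiv.sigmaFiberEquiv D).symm.injective.countable)
  have hinf : Infinite {i // D i = d} := by
    by_contra hfin
    rw [not_infinite_iff_finite] at hfin
    exact hdinf Finite.to_countable
  obtain ⟨x', y', r', p', q'⟩ := d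
  let g := Infinite.natEmbedding {i // D i = (x', y', r', p', q')}
  let i : Fin 3 → ι := fun k => (g k).1
  have hi : ∀ k k', k ≠ k' → i k ≠ i k' := by
    intro k k' hk h
    exact hk (Fin.val_injective (g.injective (Subtype.ext h)))
  have hD : ∀ k, x (i k) = x' ∧ y (i k) = y' ∧ r (i k) = r' ∧ p (i k) = p' ∧ q (i k) = q' := by
    intro k
    have := (g k).2
    simpa [D] using this
  let c : ℂ := ⟨x', y'⟩
  have hor' : ∀ k, ‖o (i k) - c‖ < r' := by
    intro k; have := hor (i k); obtain ⟨h1, h2, h3, h4, h5⟩ := hD k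
    simpa only [h1, h2, h3, h4, h5] using this
  have hfirst' : ∀ k j, ∀ s ∈ Icc 0 (t (i k) j), ‖b (i k) j s - c‖ = r' → s = t (i k) j := by
    intro k; have := hfirst (i k); obtain ⟨h1, h2, h3, h4, h5⟩ := hD k
    simpa only [h1, h2, h3, h4, h5] using this
  have hexit' : ∀ k j, ‖b (i k) j (t (i k) j) - c‖ = r' ∧
      cl p' q' (Complex.arg (b (i k) j (t (i k) j) - c)) = j := by
    intro k; have := hexit (i k); obtain ⟨h1, h2, h3, h4, h5⟩ := hD k
    simpa only [h1, h2, h3, h4, h5] using this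
  have hbd : ∀ k k', k ≠ k' → ∀ j j', ∀ s ∈ Icc (0 : ℝ) 1, ∀ t ∈ Icc (0 : ℝ) 1,
      b (i k) j s ≠ b (i k') j' t := by
    intro k k' hk j j'
    obtain ⟨l, hl⟩ := hb (i k) j
    obtain ⟨l', hl'⟩ := hb (i k') j'
    rw [hl, hl']
    exact hdd _ _ (hi k k' hk) l l'
  have hb0 : ∀ k j, b (i k) j 0 = o (i k) := by
    intro k j
    obtain ⟨l, hl⟩ := hb (i k) j
    rw [hl, h0]
  let A : Fin 3 → Set ℂ := fun j => {z | ‖z - c‖ = r' ∧ cl p' q' (Complex.arg (z - c)) = j}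
  have hA : ∀ j j' z, z ∈ A j → z ∈ A j' → j = j' := fun j j' z h h' => h.2.symm.trans h'.2
  let P : Fin 3 → Fin 3 → Set ℂ := fun k j => b (i k) j '' Icc 0 (t (i k) j)
  have hPA : ∀ k j j' z, z ∈ P k j → z ∈ A j' → j = j' := by
    rintro k j j' _ ⟨s, hs, rfl⟩ h2
    have := hfirst' k j s hs h2.1
    rw [this] at h2
    exact (hexit' k j).2.symm.trans h2.2
  have hPP : ∀ k j k' j' z, z ∈ P k j → z ∈ P k' j' → k = k' := by
    rintro k j k' j' _ ⟨s, hs, rfl⟩ ⟨s', hs', h⟩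
    by_contra hk
    exact hbd k k' hk j j' s ⟨hs.1, hs.2.trans (ht _ _).2⟩ s' ⟨hs'.1, hs'.2.trans (ht _ _).2⟩ h.symm
  have hoP : ∀ k j, o (i k) ∈ P k j := fun k j => ⟨0, ⟨le_rfl, (ht _ _).1⟩, hb0 k j⟩
  have hoA : ∀ k j, o (i k) ∉ A j := fun k j h => (hor' k).ne h.1
  have hzA : ∀ j, b (i 0) j (t (i 0) j) ∈ A j := fun j => hexit' 0 j
  let pos : Fin 3 ⊕ Fin 3 → ℂ := Sum.elim (fun k => o (i k)) (fun j => b (i 0) j (t (i 0) j))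
  let S : Fin 3 ⊕ Fin 3 → Fin 3 ⊕ Fin 3 → Set ℂ := fun u v => match u, v with
    | .inl k, .inr j => P k j ∪ A j
    | .inr j, .inl k => P k j ∪ A j
    | _, _ => ∅
  have hj : ∀ k j, JoinedIn (P k j ∪ A j) (o (i k)) (b (i 0) j (t (i 0) j)) := by
    intro k j
    have h1 : JoinedIn (P k j) (o (i k)) (b (i k) j (t (i k) j)) := by
      have := ((convex_Icc 0 (t (i k) j)).isPathConnected ⟨0, le_rfl, (ht _ _).1⟩).image
        (b (i k) j).continuous
      exact this.joinedIn _ (hoP k j) _ ⟨_, ⟨(ht _ _).1, le_rfl⟩, rfl⟩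
    have h2 : JoinedIn (A j) (b (i k) j (t (i k) j)) (b (i 0) j (t (i 0) j)) :=
      arc_joined (hexit' k j).1 (hexit' k j).2 (hexit' 0 j).1 (hexit' 0 j).2
    exact (h1.mono subset_union_left).trans (h2.mono subset_union_right)
  have hdis : ∀ k j k' j', k ≠ k' → j ≠ j' → Disjoint (P k j ∪ A j) (P k' j' ∪ A j') := by
    intro k j k' j' hk hj
    rw [Set.disjoint_left]
    rintro z (h | h) (h' | h')
    · exact hk (hPP _ _ _ _ _ h h')
    · exact hj (hPA _ _ _ _ h h')
    · exact hj (hPA _ _ _ _ h' h).symm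
    · exact hj (hA _ _ _ h h')
  suffices h : Nonempty (VK (completeBipartiteGraph (Fin 3) (Fin 3))) from h.elim VK.false_of_K33
  refine VK.of_joined (completeBipartiteGraph (Fin 3) (Fin 3)) pos ?_ S ?_ ?_ ?_
  · rintro (k | j) (k' | j') h
    · exact congrArg _ (hPP k 0 k' 0 _ (hoP k 0) (by simp only [pos, Sum.elim_inl] at h; rw [h]; exact hoP k' 0))
    · exact absurd (hzA j') (by simp only [pos, Sum.elim_inl, Sum.elim_inr] at h; rw [← h]; exact hoA _ _)
    · exact absurd (hzA j) (by simp only [pos, Sum.elim_inl, Sum.elim_inr] at h; rw [h]; exact hoA _ _)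
    · exact congrArg _ (hA _ _ _ (hzA j) (by simp only [pos, Sum.elim_inr] at h; rw [h]; exact hzA j'))
  · rintro (k | j) (k' | j') h
    · simp at h
    · exact hj k j'
    · exact (hj k' j).symm
    · simp at h
  · rintro (k | j) (k' | j') (l | m) (l' | m') h h' g1 g2 g3 g4 <;> simp at h h' g1 g2 g3 g4
    · exact hdis _ _ _ _ g1 g4
    · exact hdis _ _ _ _ g2 g3
    · exact hdis _ _ _ _ g3 g2
    · exact hdis _ _ _ _ g4 g1
  · have hlast : ∀ k j, ∀ v, v ≠ Sum.inl k → v ≠ Sum.inr j → pos v ∉ P k j ∪ A j := by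
      rintro k j (l | m) g1 g2 (h | h) <;> simp at g1 g2
      · exact g1 (hPP l 0 k j _ (hoP l 0) h)
      · exact hoA _ _ h
      · exact g2 (hPA _ _ _ _ h (hzA m)).symm
      · exact g2 (hA _ _ _ (hzA m) h)
    rintro (k | j) (k' | j') v h g1 g2
    · simp at h
    · exact hlast _ _ v g1 g2
    · exact hlast _ _ v g2 g1
    · simp at h

/-! ### Normal spanning forests -/

/-- A normal spanning forest of `H` with roots in `A0`: `dep v` is the depth of `v`, and `anc v k`
its ancestor at depth `k ≤ dep v`. Normality is the condition `cmp` that adjacent vertices are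
comparable. -/
structure NST {N : Type*} (H : SimpleGraph N) (A0 : N → Prop) where
  dep : N → ℕ
  anc : N → ℕ → N
  anc_dep : ∀ v, anc v (dep v) = v
  dep_anc : ∀ v k, k ≤ dep v → dep (anc v k) = k
  anc_anc : ∀ v k j, j ≤ k → k ≤ dep v → anc (anc v k) j = anc v j
  adj_anc : ∀ v k, k < dep v → H.Adj (anc v k) (anc v (k + 1))
  cmp : ∀ u v, H.Adj u v → (dep u < dep v ∧ anc v (dep u) = u) ∨ (dep v < dep u ∧ anc u (dep v) = v)
  root : ∀ v, A0 (anc v 0)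

namespace NSTaux
variable {N : Type*} (H : SimpleGraph N) (idx : N → ℕ)

/-- `w` is reached from `v` by a walk of length `n` inside `S`. -/
def Con (S : Set N) (n : ℕ) (v w : N) : Prop :=
  ∃ p : H.Walk v w, p.length = n ∧ ∀ z ∈ p.support, z ∈ S

/-- The connected component of `v` inside `S`. -/
def comp (S : Set N) (v : N) : Set N := {w | ∃ n, Con H S n v w}

variable {H} in
theorem Con.symm {S : Set N} {n v w} (h : Con H S n v w) : Con H S n w v := by
  obtain ⟨p, hp, hs⟩ := h
  exact ⟨p.reverse, by simpa using hp, by simpa using hs⟩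

variable {H} in
theorem Con.trans {S : Set N} {n m u v w} (h : Con H S n u v) (h' : Con H S m v w) :
    Con H S (n + m) u w := by
  obtain ⟨p, hp, hs⟩ := h
  obtain ⟨q, hq, hs'⟩ := h'
  refine ⟨p.append q, by simp [hp, hq], fun z hz => ?_⟩
  rcases SimpleGraph.Walk.mem_support_append_iff _ _ |>.1 hz with h | h
  exacts [hs z h, hs' z h]

variable {H} in
theorem Con.mono {S T : Set N} {n v w} (h : Con H S n v w) (hST : S ⊆ T) : Con H T n v w := by
  obtain ⟨p, hp, hs⟩ := h
  exact ⟨p, hp, fun z hz => hST (hs z hz)⟩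

variable {H} in
theorem Con.left {S : Set N} {n v w} (h : Con H S n v w) : v ∈ S := by
  obtain ⟨p, hp, hs⟩ := h
  exact hs v p.start_mem_support

variable {H} in
theorem Con.restrict {S : Set N} {n v w} (h : Con H S n v w) : Con H (comp H S v) n v w := by
  obtain ⟨p, hp, hs⟩ := h
  classical
  refine ⟨p, hp, fun z hz => ⟨_, p.takeUntil z hz, rfl, fun y hy => hs y ?_⟩⟩
  exact p.support_takeUntil_subset_support hz hy

theorem con_refl {S : Set N} {v} (h : v ∈ S) : Con H S 0 v v := ⟨.nil, rfl, by simpa using h⟩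

theorem con_adj {S : Set N} {v w} (h : v ∈ S) (h' : w ∈ S) (ha : H.Adj v w) : Con H S 1 v w :=
  ⟨.cons ha .nil, rfl, by simp [h, h']⟩

theorem comp_subset (S : Set N) (v : N) : comp H S v ⊆ S := fun _ ⟨_, h⟩ => h.symm.left

theorem mem_comp_self {S : Set N} {v : N} (h : v ∈ S) : v ∈ comp H S v := ⟨0, con_refl H h⟩

theorem comp_eq {S : Set N} {v w : N} (h : w ∈ comp H S v) : comp H S w = comp H S v := by
  obtain ⟨n, h⟩ := h
  ext z
  exact ⟨fun ⟨m, hm⟩ => ⟨_, h.trans hm⟩, fun ⟨m, hm⟩ => ⟨_, h.symm.trans hm⟩⟩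

/-- `x` is an element of `S ∩ E` whose distance inside `S` to the element of least index in `S` is
minimal. -/
def IsPick (S E : Set N) (x : N) : Prop :=
  x ∈ S ∧ x ∈ E ∧ ∃ t ∈ S, (∀ z ∈ S, idx t ≤ idx z) ∧ ∃ n, Con H S n x t ∧
    ∀ y ∈ S, y ∈ E → ∀ m, Con H S m y t → n ≤ m

open Classical in
/-- An element with `IsPick`, used as the root of the piece `S`. -/
noncomputable def pick (S E : Set N) (v : N) : N :=
  if h : ∃ x, IsPick H idx S E x then h.choose else v

theorem pick_spec {S E : Set N} {v : N} (hc : ∀ x ∈ S, ∀ y ∈ S, ∃ n, Con H S n x y)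
    (he : ∃ x ∈ S, x ∈ E) : IsPick H idx S E (pick H idx S E v) := by
  have h : ∃ x, IsPick H idx S E x := by
    obtain ⟨x, hx, hxE⟩ := he
    obtain ⟨t, ht, hmin⟩ : ∃ t ∈ S, ∀ z ∈ S, idx t ≤ idx z := by
      have := (measure idx).wf.has_min S ⟨x, hx⟩
      obtain ⟨t, ht, h⟩ := this
      exact ⟨t, ht, fun z hz => not_lt.1 (h z hz)⟩
    classical
    have hex : ∃ n, ∃ y ∈ S, y ∈ E ∧ Con H S n y t := by
      obtain ⟨n, hn⟩ := hc x hx t ht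
      exact ⟨n, x, hx, hxE, hn⟩
    obtain ⟨y, hy, hyE, hyn⟩ := Nat.find_spec hex
    exact ⟨y, hy, hyE, t, ht, hmin, _, hyn, fun z hz hzE m hm => Nat.find_min' hex ⟨z, hz, hzE, hm⟩⟩
  rw [pick, dif_pos h]
  exact h.choose_spec

variable (A0 : N → Prop)

/-- The piece of `v` after `k` steps, with the set in which its root is to be chosen. Each step
removes the root and passes to the component of `v` in the rest, whose root must be a neighbour of
the removed one. -/
noncomputable def seq (v : N) : ℕ → Set N × Set N
  | 0 => (comp H univ v, {x | A0 x})
  | k + 1 => (comp H ((seq v k).1 \ {pick H idx (seq v k).1 (seq v k).2 v}) v,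
      {x | H.Adj (pick H idx (seq v k).1 (seq v k).2 v) x})

/-- The root of the `k`-th piece. -/
noncomputable def rt (v : N) (k : ℕ) : N := pick H idx (seq H idx A0 v k).1 (seq H idx A0 v k).2 v

variable (h0 : ∀ v, ∃ w, A0 w ∧ H.Reachable v w)

theorem entry {S : Set N} {r u : N} (p : H.Walk u r) (hs : ∀ z ∈ p.support, z ∈ S) (hu : u ≠ r) :
    ∃ y, H.Adj r y ∧ y ∈ comp H (S \ {r}) u := by
  induction p with
  | nil => exact absurd rfl hu
  | @cons u u' r h q ih =>
    have huS : u ∈ S \ {r} := ⟨hs u (by simp), hu⟩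
    by_cases hu' : u' = r
    · subst hu'
      exact ⟨u, h.symm, mem_comp_self H huS⟩
    · obtain ⟨y, hy, n, hn⟩ := ih (fun z hz => hs z (by simp [hz])) hu'
      exact ⟨y, hy, _, (con_adj H huS hn.left h).trans hn⟩

include h0 in
theorem seq_spec (v : N) (k : ℕ) (hk : ∀ j < k, rt H idx A0 v j ≠ v) :
    v ∈ (seq H idx A0 v k).1 ∧ (∀ x ∈ (seq H idx A0 v k).1, ∀ y ∈ (seq H idx A0 v k).1,
      ∃ n, Con H (seq H idx A0 v k).1 n x y) ∧ ∃ x ∈ (seq H idx A0 v k).1, x ∈ (seq H idx A0 v k).2 := by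
  have hconn : ∀ (S : Set N) v, ∀ x ∈ comp H S v, ∀ y ∈ comp H S v, ∃ n, Con H (comp H S v) n x y := by
    rintro S v x ⟨n, hx⟩ y ⟨m, hy⟩
    exact ⟨_, hx.restrict.symm.trans hy.restrict⟩
  induction k with
  | zero =>
    refine ⟨mem_comp_self H (mem_univ v), hconn _ _, ?_⟩
    obtain ⟨w, hw, ⟨p⟩⟩ := h0 v
    exact ⟨w, ⟨_, p, rfl, fun _ _ => mem_univ _⟩, hw⟩
  | succ k ih =>
    obtain ⟨i1, i2, i3⟩ := ih (fun j hj => hk j (by omega))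
    have hne := hk k (by omega)
    refine ⟨mem_comp_self H ⟨i1, fun h => hne h.symm⟩, hconn _ _, ?_⟩
    obtain ⟨hr, -⟩ := pick_spec H idx (v := v) i2 i3
    obtain ⟨n, p, -, hp⟩ := i2 v i1 _ hr
    obtain ⟨y, h1, h2⟩ := entry H p hp hne.symm
    exact ⟨y, h2, h1⟩

include h0 in
theorem rt_spec (v : N) (k : ℕ) (hk : ∀ j < k, rt H idx A0 v j ≠ v) :
    IsPick H idx (seq H idx A0 v k).1 (seq H idx A0 v k).2 (rt H idx A0 v k) :=
  pick_spec H idx (seq_spec H idx A0 h0 v k hk).2.1 (seq_spec H idx A0 h0 v k hk).2.2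

theorem seq_subset (v : N) (k : ℕ) : (seq H idx A0 v (k + 1)).1 ⊆ (seq H idx A0 v k).1 :=
  (comp_subset H _ _).trans sdiff_subset

theorem seq_anti (v : N) {j k : ℕ} (h : j ≤ k) : (seq H idx A0 v k).1 ⊆ (seq H idx A0 v j).1 :=
  antitone_nat_of_succ_le (f := fun k => (seq H idx A0 v k).1) (seq_subset H idx A0 v) h

include h0 in
theorem seq_eq {v w : N} (k : ℕ) (hk : ∀ j < k, rt H idx A0 v j ≠ v)
    (hw : w ∈ (seq H idx A0 v k).1) : seq H idx A0 w k = seq H idx A0 v k ∧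
      rt H idx A0 w k = rt H idx A0 v k := by
  have main : seq H idx A0 w k = seq H idx A0 v k → rt H idx A0 w k = rt H idx A0 v k := by
    intro h
    have h1 := rt_spec H idx A0 h0 v k hk
    rw [rt, rt, h, pick, pick, dif_pos ⟨_, h1⟩, dif_pos ⟨_, h1⟩]
  refine ⟨?_, main ?_⟩ <;> clear main
  all_goals
    induction k with
    | zero => simp only [seq]; rw [comp_eq H hw]
    | succ k ih =>
      have hk' : ∀ j < k, rt H idx A0 v j ≠ v := fun j hj => hk j (by omega)
      have hs := ih hk' (seq_subset _ _ _ _ _ hw)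
      have h1 := rt_spec H idx A0 h0 v k hk'
      have hr : rt H idx A0 w k = rt H idx A0 v k := by
        rw [rt, rt, hs, pick, pick, dif_pos ⟨_, h1⟩, dif_pos ⟨_, h1⟩]
      have e1 : ∀ v, seq H idx A0 v (k + 1) = (comp H ((seq H idx A0 v k).1 \ {rt H idx A0 v k}) v,
        {x | H.Adj (rt H idx A0 v k) x}) := fun v => rfl
      have hw' : w ∈ comp H ((seq H idx A0 v k).1 \ {rt H idx A0 v k}) v := hw
      rw [e1, e1, hr, hs, comp_eq H hw']

include h0 in
/-- Every vertex `v` becomes a root. Otherwise the least index in the piece of `v` is eventually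
constant, being bounded by the index of `v`; from then on the distance of the chosen root to the
vertex of least index drops with each step, which cannot go on forever. -/
theorem exists_rt (hidx : ∀ u v, H.Reachable u v → idx u = idx v → u = v) (v : N) :
    ∃ k, rt H idx A0 v k = v := by
  by_contra hall
  push Not at hall
  have hp := fun k => rt_spec H idx A0 h0 v k (fun j _ => hall j)
  have hs := fun k => seq_spec H idx A0 h0 v k (fun j _ => hall j)
  choose p1 p2 t ht tmin n hn nmin using hp
  have mono : Monotone fun k => idx (t k) :=
    monotone_nat_of_le_succ fun k => tmin k _ (seq_subset _ _ _ _ _ (ht (k + 1)))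
  obtain ⟨k0, hk0⟩ : ∃ k0, ∀ k ≥ k0, idx (t k) = idx (t k0) := by
    have hbd : ∀ k, idx (t k) ≤ idx v := fun k => tmin k _ (hs k).1
    by_contra hno
    push Not at hno
    have : ∀ m, ∃ k, m ≤ idx (t k) := by
      intro m
      induction m with
      | zero => exact ⟨0, Nat.zero_le _⟩
      | succ m ih =>
        obtain ⟨k, hk⟩ := ih
        obtain ⟨k', h1, h2⟩ := hno k
        have := mono h1
        exact ⟨k', by simp only at this; omega⟩
    obtain ⟨k, hk⟩ := this (idx v + 1)
    have := hbd k
    omega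
  have hteq : ∀ k ≥ k0, t k = t k0 := by
    intro k hk
    apply hidx _ _ _ (hk0 k hk)
    obtain ⟨m, p, -⟩ := (hs k0).2.1 _ (seq_anti _ _ _ _ hk (ht k)) _ (ht k0)
    exact ⟨p⟩
  have hdesc : ∀ k ≥ k0, n (k + 1) < n k := by
    intro k hk
    obtain ⟨p, hpl, hps⟩ := hn k
    have htr : t k ≠ rt H idx A0 v k := by
      intro h
      have h2 := ht (k + 1)
      rw [hteq (k + 1) (by omega), ← hteq k hk, h] at h2
      exact (comp_subset H _ _ h2).2 rfl
    generalize hgr : rt H idx A0 v k = r at *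
    cases p with
    | nil => exact absurd rfl htr
    | @cons _ y _ h q =>
      classical
      have hr : rt H idx A0 v k ∉ q.support := by
        intro hmem
        have := nmin k _ (p1 k) (p2 k) _ ⟨q.dropUntil _ hmem, rfl, fun z hz =>
          hps z (by simp [q.support_dropUntil_subset_support hmem hz])⟩
        have h3 := q.length_dropUntil_le_length hmem
        simp at hpl
        omega
      have hc : Con H ((seq H idx A0 v k).1 \ {rt H idx A0 v k}) q.length y (t k) :=
        ⟨q, rfl, fun z hz => ⟨hps z (by simp [hz]), fun h => hr (h ▸ hz)⟩⟩
      have hte : t (k + 1) = t k := by rw [hteq (k + 1) (by omega), hteq k hk]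
      have htm : t k ∈ comp H ((seq H idx A0 v k).1 \ {rt H idx A0 v k}) v := hte ▸ ht (k + 1)
      have hc2 := hc.symm.restrict.symm
      rw [comp_eq H htm] at hc2
      subst hgr
      have := nmin (k + 1) y hc2.left h q.length (by rw [hte]; exact hc2)
      simp at hpl
      omega
  have hd2 : ∀ i, n (k0 + i) + i ≤ n k0 := by
    intro i
    induction i with
    | zero => simp
    | succ i ih => have := hdesc (k0 + i) (by omega); rw [← add_assoc k0 i 1]; omega
  have := hd2 (n k0 + 1)
  omega

end NSTaux

open NSTaux in
/-- Jung's theorem: a graph with countable components, numbered by `idx`, has a normal spanning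
forest with roots in `A0` if `A0` meets every component. -/
theorem NST.exists {N : Type*} (H : SimpleGraph N) (idx : N → ℕ)
    (hidx : ∀ u v, H.Reachable u v → idx u = idx v → u = v) (A0 : N → Prop)
    (h0 : ∀ v, ∃ w, A0 w ∧ H.Reachable v w) : Nonempty (NST H A0) := by
  classical
  have hex := exists_rt H idx A0 h0 hidx
  let dep : N → ℕ := fun v => Nat.find (hex v)
  have hd : ∀ v, rt H idx A0 v (dep v) = v := fun v => Nat.find_spec (hex v)
  have hlt : ∀ v k, k ≤ dep v → ∀ j < k, rt H idx A0 v j ≠ v := fun v k hk j hj =>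
    Nat.find_min (hex v) (lt_of_lt_of_le hj hk)
  have hsp := fun v k hk => rt_spec H idx A0 h0 v k (hlt v k hk)
  have hanti : ∀ v k, k ≤ dep v → ∀ w ∈ (seq H idx A0 v k).1, ∀ j ≤ k,
      rt H idx A0 w j = rt H idx A0 v j := by
    intro v k hk w hw j hj
    exact (seq_eq H idx A0 h0 j (hlt v j (hj.trans hk)) (seq_anti H idx A0 v hj hw)).2
  have hnot : ∀ v j, rt H idx A0 v j ∉ (seq H idx A0 v (j + 1)).1 :=
    fun v j h => (comp_subset H _ _ h).2 rfl
  have hdeq : ∀ v k, rt H idx A0 v k = v → (∀ j < k, rt H idx A0 v j ≠ v) → dep v = k :=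
    fun v k h1 h2 => (Nat.find_eq_iff (hex v)).2 ⟨h1, h2⟩
  have hcomm : ∀ u v, H.Adj u v → ∀ k, k ≤ dep u → k ≤ dep v → v ∈ (seq H idx A0 u k).1 := by
    intro u v huv k
    induction k with
    | zero => intro _ _; exact ⟨1, con_adj H (mem_univ _) (mem_univ _) huv⟩
    | succ k ih =>
      intro h1 h2
      have h3 := ih (by omega) (by omega)
      have h4 := hlt u (k + 1) h1 k (by omega)
      have h5 := hlt v (k + 1) h2 k (by omega)
      rw [hanti u k (by omega) v h3 k le_rfl] at h5
      exact ⟨1, con_adj H ⟨(seq_spec H idx A0 h0 u k (hlt u k (by omega))).1, fun h => h4 h.symm⟩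
        ⟨h3, fun h => h5 h.symm⟩ huv⟩
  refine ⟨⟨dep, rt H idx A0, hd, ?_, ?_, ?_, ?_, ?_⟩⟩
  · intro v k hk
    have hm := (hsp v k hk).1
    apply hdeq
    · exact hanti v k hk _ hm k le_rfl
    · intro j hj h
      rw [hanti v k hk _ hm j hj.le] at h
      exact hnot v j (h ▸ seq_anti H idx A0 v hj hm)
  · intro v k j hj hk
    exact hanti v k hk _ (hsp v k hk).1 j hj
  · intro v k hk
    exact (hsp v (k + 1) hk).2.1
  · intro u v huv
    have key : ∀ u v, H.Adj u v → dep u ≤ dep v → dep u < dep v ∧ rt H idx A0 v (dep u) = u := by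
      intro u v huv hle
      have h1 := hcomm u v huv _ le_rfl hle
      have h2 := hanti u _ le_rfl v h1 _ le_rfl
      rw [hd] at h2
      refine ⟨lt_of_le_of_ne hle fun h => ?_, h2⟩
      rw [h, hd] at h2
      exact huv.ne h2.symm
    rcases le_total (dep u) (dep v) with h | h
    · exact Or.inl (key u v huv h)
    · exact Or.inr (key v u huv.symm h)
  · intro v
    exact (hsp v 0 (Nat.zero_le _)).2.1

/-! ### Sides of back edges -/

/-- `K.Pth X a c φ`: there is a walk from `a` to `c` inside `X`, along which the values
`K.n _ _ v` of the edges add up to `φ v` for every `v`. -/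
inductive VK.Pth {N : Type*} {H : SimpleGraph N} (K : VK H) (X : Set N) :
    N → N → (N → ZMod 2) → Prop
  | nil (a : N) (ha : a ∈ X) : VK.Pth K X a a (fun _ => 0)
  | cons (a b c : N) (φ : N → ZMod 2) (ha : a ∈ X) (h : H.Adj a b) (hp : VK.Pth K X b c φ) :
      VK.Pth K X a c (fun v => K.n a b v + φ v)

namespace VK
variable {N : Type*} {H : SimpleGraph N} {K : VK H} {X Y : Set N} {a b c d : N}
  {φ ψ : N → ZMod 2}

theorem Pth.left (h : K.Pth X a b φ) : a ∈ X := by cases h <;> assumption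

theorem Pth.mono (h : K.Pth X a b φ) (hXY : X ⊆ Y) : K.Pth Y a b φ := by
  induction h with
  | nil a ha => exact .nil a (hXY ha)
  | cons a b c φ ha h hp ih => exact .cons a b c φ (hXY ha) h ih

theorem Pth.trans (h : K.Pth X a b φ) (h' : K.Pth X b c ψ) :
    K.Pth X a c (fun v => φ v + ψ v) := by
  induction h with
  | nil a ha => simpa using h'
  | cons a b c φ ha h hp ih =>
    simp only [add_assoc]
    exact .cons _ _ _ _ ha h (ih h')

theorem Pth.single (h : H.Adj a b) (ha : a ∈ X) (hb : b ∈ X) : K.Pth X a b (K.n a b) := by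
  simpa using Pth.cons a b b _ ha h (.nil b hb)

theorem Pth.edge_path (hab : H.Adj a b) (ha : a ∉ Y) (hb : b ∉ Y) (h' : K.Pth Y c d ψ) :
    K.n a b c + K.n a b d + ψ a + ψ b = K.o c a + K.o c b + K.o d a + K.o d b := by
  induction h' with
  | nil c hc => grind
  | cons c c' d ψ hc h hp ih =>
    have := K.eq a b c c' hab h (fun e => ha (e ▸ hc)) (fun e => ha (e ▸ hp.left))
      (fun e => hb (e ▸ hc)) (fun e => hb (e ▸ hp.left))
    grind

theorem Pth.path_path (h : K.Pth X a b φ) (h' : K.Pth Y c d ψ) (hd : ∀ x ∈ X, x ∉ Y) :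
    φ c + φ d + ψ a + ψ b = K.o c a + K.o c b + K.o d a + K.o d b := by
  induction h with
  | nil a ha => grind
  | cons a b e φ ha h hp ih =>
    have := Pth.edge_path h (hd _ ha) (hd _ hp.left) h'
    grind

/-- The theta lemma: let three walks lead from `m` via `a i` to `n`, the first part of each being
disjoint from the second parts of the others. Then the turns of each walk about the points `a j` of
the others add up to an odd number. -/
theorem theta {X' X'' : Fin 3 → Set N} {m n : N} {a : Fin 3 → N} {φ ψ : Fin 3 → N → ZMod 2}
    (h1 : ∀ i, K.Pth (X' i) m (a i) (φ i)) (h2 : ∀ i, K.Pth (X'' i) (a i) n (ψ i))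
    (hd : ∀ i j, i ≠ j → ∀ x ∈ X' i, x ∉ X'' j) (ha : ∀ i j, i ≠ j → a i ≠ a j) :
    φ 0 (a 1) + ψ 0 (a 1) + φ 0 (a 2) + ψ 0 (a 2) + φ 1 (a 0) + ψ 1 (a 0) +
    φ 1 (a 2) + ψ 1 (a 2) + φ 2 (a 0) + ψ 2 (a 0) + φ 2 (a 1) + ψ 2 (a 1) = 1 := by
  have key := fun i j hij => Pth.path_path (h1 i) (h2 j) (hd i j hij)
  have e1 := key 0 1 (by decide)
  have e2 := key 0 2 (by decide)
  have e3 := key 1 0 (by decide)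
  have e4 := key 1 2 (by decide)
  have e5 := key 2 0 (by decide)
  have e6 := key 2 1 (by decide)
  have o1 := K.o_anti _ _ (ha 0 1 (by decide))
  have o2 := K.o_anti _ _ (ha 0 2 (by decide))
  have o3 := K.o_anti _ _ (ha 1 2 (by decide))
  clear key
  grind

end VK

namespace NST
variable {N : Type*} {H : SimpleGraph N} {A0 : N → Prop} (T : NST H A0) (K : VK H)

/-- The edge from `u` back to its ancestor at depth `r`. -/
def Ret (u : N) (r : ℕ) : Prop := r + 1 < T.dep u ∧ H.Adj u (T.anc u r)

/-- A segment of the branch of `u`. -/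
def Seg (u : N) (i j : ℕ) : Set N := {x | ∃ k, i ≤ k ∧ k ≤ j ∧ x = T.anc u k}

/-- The sum along a segment. -/
def tsum (u : N) (i j : ℕ) (v : N) : ZMod 2 :=
  ∑ k ∈ Finset.Ico i j, K.n (T.anc u k) (T.anc u (k + 1)) v

theorem anc_eq_of_le {u v : N} {d j : ℕ} (h : T.anc u d = T.anc v d) (hu : d ≤ T.dep u)
    (hv : d ≤ T.dep v) (hj : j ≤ d) : T.anc u j = T.anc v j := by
  rw [← T.anc_anc u d j hj hu, h, T.anc_anc v d j hj hv]

theorem idx_eq {u v : N} {i j : ℕ} (h : T.anc u i = T.anc v j) (hu : i ≤ T.dep u)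
    (hv : j ≤ T.dep v) : i = j := by
  rw [← T.dep_anc u i hu, h, T.dep_anc v j hv]

theorem pth_seg {u : N} {i j : ℕ} (hij : i ≤ j) (hj : j ≤ T.dep u) :
    K.Pth (T.Seg u i j) (T.anc u i) (T.anc u j) (T.tsum K u i j) := by
  induction j, hij using Nat.le_induction with
  | base =>
    have := VK.Pth.nil (K := K) (X := T.Seg u i i) (T.anc u i) ⟨i, le_rfl, le_rfl, rfl⟩
    convert this using 1
    funext v; simp [tsum]
  | succ j hij ih =>
    have h1 := (ih (by omega)).mono (Y := T.Seg u i (j + 1))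
      (fun x ⟨k, h1, h2, h3⟩ => ⟨k, h1, by omega, h3⟩)
    have h2 := VK.Pth.single (K := K) (X := T.Seg u i (j + 1)) (T.adj_anc u j (by omega))
      ⟨j, hij, by omega, rfl⟩ ⟨j + 1, by omega, le_rfl, rfl⟩
    convert h1.trans h2 using 1
    funext v
    simp [tsum, Finset.sum_Ico_succ_top hij]

theorem pth_seg' {u : N} {i j : ℕ} (hij : i ≤ j) (hj : j ≤ T.dep u) :
    K.Pth (T.Seg u i j) (T.anc u j) (T.anc u i) (T.tsum K u i j) := by
  induction j, hij using Nat.le_induction with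
  | base =>
    have := VK.Pth.nil (K := K) (X := T.Seg u i i) (T.anc u i) ⟨i, le_rfl, le_rfl, rfl⟩
    convert this using 1
    funext v; simp [tsum]
  | succ j hij ih =>
    have h1 := (ih (by omega)).mono (Y := T.Seg u i (j + 1))
      (fun x ⟨k, h1, h2, h3⟩ => ⟨k, h1, by omega, h3⟩)
    have h2 := VK.Pth.single (K := K) (X := T.Seg u i (j + 1)) (T.adj_anc u j (by omega)).symm
      ⟨j + 1, by omega, le_rfl, rfl⟩ ⟨j, hij, by omega, rfl⟩
    convert h2.trans h1 using 1
    funext v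
    simp [tsum, Finset.sum_Ico_succ_top hij, K.n_symm (T.anc u (j + 1)), add_comm]

theorem tsum_add {u : N} {i j k : ℕ} (hij : i ≤ j) (hjk : j ≤ k) (v : N) :
    T.tsum K u i k v = T.tsum K u i j v + T.tsum K u j k v := by
  simp only [tsum]; rw [Finset.sum_Ico_consecutive _ hij hjk]

theorem tsum_one (u : N) (i : ℕ) (v : N) :
    T.tsum K u i (i + 1) v = K.n (T.anc u i) (T.anc u (i + 1)) v := by
  simp [tsum]

theorem tsum_congr {u v : N} {d i j : ℕ} (h : T.anc u d = T.anc v d) (hu : d ≤ T.dep u)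
    (hv : d ≤ T.dep v) (hj : j ≤ d) (x : N) : T.tsum K u i j x = T.tsum K v i j x := by
  simp only [tsum]
  refine Finset.sum_congr rfl fun k hk => ?_
  rw [Finset.mem_Ico] at hk
  rw [T.anc_eq_of_le h hu hv (by omega : k ≤ d), T.anc_eq_of_le h hu hv (by omega : k + 1 ≤ d)]

/-- The change of `kap` between two consecutive levels. It depends only on the branch, not on the
cycle through it. -/
def tau (u : N) (i : ℕ) : ZMod 2 :=
  let w0 := T.anc u i; let w := T.anc u (i + 1)
  let w2 := T.anc u (i + 2); let w3 := T.anc u (i + 3)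
  K.n w w2 w3 + K.n w w2 w0 + K.o w w3 + K.o w2 w3 + K.o w w0 + K.o w2 w0 +
    K.n w2 w3 w + K.n w0 w w2

/-- The side (left or right of the tree) on which the back edge from `u` to its ancestor at depth
`j + 1` runs. The sum of `tau` makes sides at different depths comparable. -/
def color (u : N) (j : ℕ) : ZMod 2 :=
  let w0 := T.anc u j; let w := T.anc u (j + 1); let w2 := T.anc u (j + 2)
  K.n u w w0 + K.n u w w2 + K.n w0 w u + K.n w w2 u + K.o u w2 + K.o u w0 + K.o w w2 + K.o w w0 +
    ∑ i ∈ Finset.range j, T.tau K u i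

/-- The sum along the fundamental cycle of `u1`. -/
def wC (u1 : N) (l : ℕ) (v : N) : ZMod 2 := T.tsum K u1 l (T.dep u1) v + K.n u1 (T.anc u1 l) v

/-- The sum at a vertex of the cycle over the edges not containing it. -/
def kap (u1 : N) (l j : ℕ) : ZMod 2 :=
  T.tsum K u1 (j + 2) (T.dep u1) (T.anc u1 (j + 1)) + K.n u1 (T.anc u1 l) (T.anc u1 (j + 1)) +
    T.tsum K u1 l j (T.anc u1 (j + 1))

theorem pth_around {u1 : N} {l i j : ℕ} (hr : T.Ret u1 l) (hl : l ≤ i) (hi : i ≤ T.dep u1)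
    (hj : j ≤ T.dep u1) :
    K.Pth (T.Seg u1 j (T.dep u1) ∪ T.Seg u1 l i) (T.anc u1 j) (T.anc u1 i)
      (fun v => T.tsum K u1 j (T.dep u1) v + K.n u1 (T.anc u1 l) v + T.tsum K u1 l i v) := by
  have h1 := (T.pth_seg K hj le_rfl).mono (subset_union_left (t := T.Seg u1 l i))
  have h2 := (T.pth_seg K hl hi).mono (subset_union_right (s := T.Seg u1 j (T.dep u1)))
  have h3 : K.Pth (T.Seg u1 j (T.dep u1) ∪ T.Seg u1 l i) u1 (T.anc u1 l) (K.n u1 (T.anc u1 l)) :=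
    VK.Pth.single hr.2 (Or.inl ⟨T.dep u1, hj, le_rfl, (T.anc_dep u1).symm⟩)
      (Or.inr ⟨l, le_rfl, hl, rfl⟩)
  rw [T.anc_dep] at h1
  exact (h1.trans h3).trans h2

theorem kap_tau {u1 : N} {l j : ℕ} (hr : T.Ret u1 l) (hl : l ≤ j) (hj : j + 3 ≤ T.dep u1) :
    T.kap K u1 l j + T.kap K u1 l (j + 1) = T.tau K u1 j := by
  have hq := T.pth_around K hr hl (by omega) hj
  have he := VK.Pth.edge_path (K := K) (T.adj_anc u1 (j + 1) (by omega)) (c := T.anc u1 (j + 3))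
    (d := T.anc u1 j) ?_ ?_ hq
  · simp only [kap, tau]
    rw [T.tsum_add K (by omega : j + 2 ≤ j + 2 + 1) (by omega : _ ≤ T.dep u1),
      T.tsum_add K (by omega : l ≤ j) (by omega : j ≤ j + 1), tsum_one, tsum_one]
    simp only [show j + 1 + 2 = j + 3 by ring, show j + 1 + 1 = j + 2 by ring,
      show j + 2 + 1 = j + 3 by ring] at he ⊢
    have a1 := K.o_anti (T.anc u1 (j + 3)) (T.anc u1 (j + 1))
      (fun h => by have := T.idx_eq h (by omega) (by omega); omega)
    have a2 := K.o_anti (T.anc u1 (j + 3)) (T.anc u1 (j + 2))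
      (fun h => by have := T.idx_eq h (by omega) (by omega); omega)
    have a3 := K.o_anti (T.anc u1 j) (T.anc u1 (j + 1))
      (fun h => by have := T.idx_eq h (by omega) (by omega); omega)
    have a4 := K.o_anti (T.anc u1 j) (T.anc u1 (j + 2))
      (fun h => by have := T.idx_eq h (by omega) (by omega); omega)
    grind
  · rintro (⟨k, h1, h2, h⟩ | ⟨k, h1, h2, h⟩) <;>
      (have := T.idx_eq h (by omega) (by omega); omega)
  · rintro (⟨k, h1, h2, h⟩ | ⟨k, h1, h2, h⟩) <;>
      (have := T.idx_eq h (by omega) (by omega); omega)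

/-- `u` and `v` lie below different children of their common ancestor at depth `d`. -/
structure Split (u v : N) (d : ℕ) : Prop where
  hu : d < T.dep u
  hv : d < T.dep v
  eq : T.anc u d = T.anc v d
  ne : T.anc u (d + 1) ≠ T.anc v (d + 1)

variable {T} in
theorem Split.symm {u v : N} {d : ℕ} (h : T.Split u v d) : T.Split v u d :=
  ⟨h.hv, h.hu, h.eq.symm, h.ne.symm⟩

variable {T} in
theorem Split.anc {u v : N} {d j : ℕ} (h : T.Split u v d) (hj : j ≤ d) : T.anc u j = T.anc v j :=
  T.anc_eq_of_le h.eq h.hu.le h.hv.le hj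

variable {T} in
theorem Split.ne' {u v : N} {d i j : ℕ} (h : T.Split u v d) (hi : d < i) (hiu : i ≤ T.dep u)
    (hj : j ≤ T.dep v) : T.anc u i ≠ T.anc v j := by
  intro e
  have := T.idx_eq e hiu hj
  subst this
  exact h.ne (T.anc_eq_of_le e hiu hj hi)

theorem kap_const {u1 : N} {l d i j : ℕ} (hr : T.Ret u1 l) (hl : l ≤ i) (hij : i ≤ j)
    (hjd : j + 2 ≤ d) (hd : d < T.dep u1) :
    T.kap K u1 l j + ∑ k ∈ Finset.range j, T.tau K u1 k =
      T.kap K u1 l i + ∑ k ∈ Finset.range i, T.tau K u1 k := by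
  induction j, hij using Nat.le_induction with
  | base => rfl
  | succ j hij ih =>
    have h1 := ih (by omega)
    have h2 := T.kap_tau K hr (hl.trans hij) (by omega)
    rw [Finset.sum_range_succ]
    grind

theorem sum_tau_congr {u v : N} {d j : ℕ} (h : T.Split u v d) (hj : j + 2 ≤ d) :
    ∑ k ∈ Finset.range j, T.tau K u k = ∑ k ∈ Finset.range j, T.tau K v k := by
  refine Finset.sum_congr rfl fun k hk => ?_
  rw [Finset.mem_range] at hk
  simp only [tau]
  rw [h.anc (by omega : k ≤ d), h.anc (by omega : k + 1 ≤ d), h.anc (by omega : k + 2 ≤ d),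
    h.anc (by omega : k + 3 ≤ d)]

/-- The side of the back edge of `u` is determined by the position of `u` with respect to the
fundamental cycle of a back edge starting below a different child and ending higher. -/
theorem wC_eq_color {u u1 : N} {l d j : ℕ} (hs : T.Split u u1 d) (hr : T.Ret u1 l) (hl : l ≤ j)
    (hjd : j + 2 ≤ d) (hru : T.Ret u (j + 1)) :
    T.color K u j = T.wC K u1 l u + T.kap K u1 l j + ∑ k ∈ Finset.range j, T.tau K u1 k := by
  have hd := hs.hv
  have hd' := hs.hu
  have hq := T.pth_around K hr hl (by omega) (by omega : j + 2 ≤ T.dep u1)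
  have he := VK.Pth.edge_path (K := K) hru.2 (c := T.anc u1 (j + 2)) (d := T.anc u1 j) ?_ ?_ hq
  · simp only [color, wC]
    rw [T.sum_tau_congr K hs hjd]
    rw [T.tsum_add K (by omega : l ≤ j) (by omega : j ≤ T.dep u1),
      T.tsum_add K (by omega : j ≤ j + 1) (by omega : j + 1 ≤ T.dep u1),
      T.tsum_add K (by omega : j + 1 ≤ j + 1 + 1) (by omega : j + 1 + 1 ≤ T.dep u1),
      tsum_one, tsum_one, kap]
    simp only [show j + 1 + 1 = j + 2 by ring] at he ⊢
    rw [hs.anc (by omega : j ≤ d), hs.anc (by omega : j + 1 ≤ d), hs.anc (by omega : j + 2 ≤ d)]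
    rw [hs.anc (by omega : j + 1 ≤ d)] at he
    have ha : ∀ k ≤ d, u ≠ T.anc u1 k := by
      intro k hk h
      have h1 := congrArg T.dep h
      rw [T.dep_anc u1 k (by omega)] at h1
      omega
    have a1 := K.o_anti u (T.anc u1 (j + 2)) (ha _ (by omega))
    have a2 := K.o_anti u (T.anc u1 j) (ha _ (by omega))
    have a3 := K.o_anti (T.anc u1 (j + 2)) (T.anc u1 (j + 1))
      (fun h => by have := T.idx_eq h (by omega) (by omega); omega)
    have a4 := K.o_anti (T.anc u1 j) (T.anc u1 (j + 1))
      (fun h => by have := T.idx_eq h (by omega) (by omega); omega)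
    grind
  · rintro (⟨k, h1, h2, h⟩ | ⟨k, h1, h2, h⟩)
    · exact hs.ne' (i := T.dep u) hd' le_rfl (by omega : k ≤ T.dep u1) (by rw [T.anc_dep]; exact h)
    · exact hs.ne' (i := T.dep u) hd' le_rfl (by omega : k ≤ T.dep u1) (by rw [T.anc_dep]; exact h)
  · rintro (⟨k, h1, h2, h⟩ | ⟨k, h1, h2, h⟩) <;>
      (have := T.idx_eq h (by omega) (by omega); omega)

/-- Tree paths disjoint from a fundamental cycle do not change the position with respect to it. -/
theorem wC_tree {u u1 : N} {l d : ℕ} (hs : T.Split u u1 d) (hr : T.Ret u1 l) (hl : l ≤ d) :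
    T.wC K u1 l u = T.wC K u1 l (T.anc u (d + 1)) := by
  have hd := hs.hv
  have hd' := hs.hu
  have h1 := T.pth_around K hr le_rfl (by omega : l ≤ T.dep u1) (by omega : l ≤ T.dep u1)
  have h2 := T.pth_seg K (by omega : d + 1 ≤ T.dep u) le_rfl
  have h3 := VK.Pth.path_path h2 h1 (by
    rintro x ⟨k, hk1, hk2, rfl⟩ (⟨i, hi1, hi2, h⟩ | ⟨i, hi1, hi2, h⟩)
    · exact hs.ne' (by omega) hk2 hi2 h
    · exact hs.ne' (by omega) hk2 (by omega) h)
  rw [T.anc_dep] at h3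
  simp only [wC]
  simp only [tsum, Finset.Ico_self, Finset.sum_empty] at h3 ⊢
  grind

/-- Two back edges starting below the same child of a vertex `w` and ending above `w` have the same
side if some back edge starting below another child of `w` ends higher than both. -/
theorem color_same {u u' u1 : N} {l d j j' : ℕ} (hs : T.Split u u1 d) (hd' : d < T.dep u')
    (hc : T.anc u (d + 1) = T.anc u' (d + 1)) (hr : T.Ret u1 l)
    (hru : T.Ret u (j + 1)) (hru' : T.Ret u' (j' + 1)) (hl : l ≤ j) (hl' : l ≤ j')
    (hj : j + 1 < d) (hj' : j' + 1 < d) : T.color K u j = T.color K u' j' := by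
  have hs' : T.Split u' u1 d := ⟨hd', hs.hv, by
    rw [← hs.eq]; exact (T.anc_eq_of_le hc hs.hu hd' (Nat.le_succ d)).symm, hc ▸ hs.ne⟩
  rw [T.wC_eq_color K hs hr hl hj hru, T.wC_eq_color K hs' hr hl' hj' hru', add_assoc, add_assoc,
    T.wC_tree K hs hr (by omega), T.wC_tree K hs' hr (by omega), hc,
    T.kap_const K hr le_rfl hl hj hs.hv, T.kap_const K hr le_rfl hl' hj' hs.hv]

/-- The theta lemma applied to the union of the fundamental cycles of two back edges starting below
different children of the same vertex. -/
theorem theta_sum {u0 u1 : N} {l0 l1 d j : ℕ} (hs : T.Split u0 u1 d) (h0 : T.Ret u0 l0)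
    (h1 : T.Ret u1 l1) (h10 : l1 ≤ l0) (h0j : l0 ≤ j) (hj : j + 1 < d) :
    T.wC K u1 l1 (T.anc u0 (d + 1)) + T.wC K u0 l0 (T.anc u1 (d + 1)) +
      T.kap K u0 l0 j + T.kap K u1 l1 j = 1 := by
  have hd0 := hs.hu
  have hd1 := hs.hv
  have e0 : ∀ k ≤ d, T.anc u1 k = T.anc u0 k := fun k hk => (hs.anc hk).symm
  have f00 : ∀ i k, i ≤ T.dep u0 → k ≤ T.dep u0 → T.anc u0 i = T.anc u0 k → i = k :=
    fun i k hi hk h => T.idx_eq h hi hk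
  have f01 : ∀ i k, i ≤ T.dep u0 → k ≤ T.dep u1 → T.anc u0 i = T.anc u1 k → i = k ∧ i ≤ d := by
    intro i k hi hk h
    have := T.idx_eq h hi hk
    refine ⟨this, ?_⟩
    by_contra hc
    exact hs.ne' (by omega) hi hk h
  let X' : Fin 3 → Set N := ![T.Seg u0 d (d + 1), T.Seg u1 d (d + 1), T.Seg u0 (j + 1) d]
  let X'' : Fin 3 → Set N := ![T.Seg u0 (d + 1) (T.dep u0) ∪ T.Seg u0 l0 l0,
    T.Seg u1 (d + 1) (T.dep u1) ∪ T.Seg u1 l1 l0, T.Seg u0 l0 (j + 1)]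
  let a : Fin 3 → N := ![T.anc u0 (d + 1), T.anc u1 (d + 1), T.anc u0 (j + 1)]
  let φ : Fin 3 → N → ZMod 2 := ![T.tsum K u0 d (d + 1), T.tsum K u1 d (d + 1),
    T.tsum K u0 (j + 1) d]
  let ψ : Fin 3 → N → ZMod 2 := ![fun v => T.tsum K u0 (d + 1) (T.dep u0) v +
     K.n u0 (T.anc u0 l0) v + T.tsum K u0 l0 l0 v, fun v => T.tsum K u1 (d + 1) (T.dep u1) v +
     K.n u1 (T.anc u1 l1) v + T.tsum K u1 l1 l0 v, T.tsum K u0 l0 (j + 1)]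
  have key := VK.theta (K := K) (X' := X') (X'' := X'') (m := T.anc u0 d) (n := T.anc u0 l0)
    (a := a) (φ := φ) (ψ := ψ) ?_ ?_ ?_ ?_
  · simp only [φ, ψ, a, Matrix.cons_val_zero, Matrix.cons_val_one, Matrix.cons_val] at key
    simp only [wC, kap]
    have c3 := fun x => T.tsum_congr K (i := l0) hs.eq hd0.le hd1.le (by omega : j ≤ d) x
    have c4 := fun x => T.tsum_congr K (i := j + 2) hs.eq hd0.le hd1.le le_rfl x
    have c5 := fun x => T.tsum_congr K (i := l0) hs.eq hd0.le hd1.le le_rfl x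
    have z : ∀ x, T.tsum K u0 l0 l0 x = 0 := fun x => by simp [tsum]
    have s1 := fun x => T.tsum_add K (u := u1) (by omega : l1 ≤ l0) (by omega : l0 ≤ T.dep u1) x
    have s2 := fun x => T.tsum_add K (u := u1) (by omega : l0 ≤ d) (by omega : d ≤ T.dep u1) x
    have s3 := fun x => T.tsum_add K (u := u1) (by omega : d ≤ d + 1) (by omega : d + 1 ≤ T.dep u1) x
    have s4 := fun x => T.tsum_add K (u := u0) (by omega : l0 ≤ d) (by omega : d ≤ T.dep u0) x
    have s5 := fun x => T.tsum_add K (u := u0) (by omega : d ≤ d + 1) (by omega : d + 1 ≤ T.dep u0) x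
    have s6 := fun x => T.tsum_add K (u := u0) (by omega : j + 2 ≤ d) (by omega : d ≤ T.dep u0) x
    have s7 := fun x => T.tsum_add K (u := u1) (by omega : j + 2 ≤ d) (by omega : d ≤ T.dep u1) x
    have s8 := fun x => T.tsum_add K (u := u1) (by omega : l1 ≤ l0) (by omega : l0 ≤ j) x
    have s9 := fun x => T.tsum_add K (u := u0) (by omega : l0 ≤ j + 1) (by omega : j + 1 ≤ d) x
    rw [e0 (j + 1) (by omega)]
    simp only [s1, s2, s3, s4, s5, s6, s7, s8, s9, z, ← c3, ← c4, ← c5] at key ⊢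
    grind
  · intro i; fin_cases i
    · exact T.pth_seg K (Nat.le_succ d) hd0
    · rw [← e0 d le_rfl]
      exact T.pth_seg K (Nat.le_succ d) hd1
    · exact T.pth_seg' K hj.le hd0.le
  · intro i; fin_cases i
    · exact T.pth_around K h0 le_rfl (by omega) hd0
    · rw [← e0 l0 (by omega)]
      exact T.pth_around K h1 h10 (by omega) hd1
    · exact T.pth_seg' K (by omega) (by omega)
  · intro i j' hij x hx hx'
    fin_cases i <;> fin_cases j' <;>
      simp only [X', X'', Seg, Fin.zero_eta, Fin.mk_one, Fin.reduceFinMk, ne_eq, not_true_eq_false,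
        Matrix.cons_val_zero, Matrix.cons_val_one, Matrix.cons_val, mem_ofPred_eq, mem_union]
        at hij hx hx'
    all_goals obtain ⟨k, hk1, hk2, rfl⟩ := hx
    · obtain ⟨k', h1, h2, h3⟩ | ⟨k', h1, h2, h3⟩ := hx'
      · have := f01 k k' (by omega) (by omega) h3; omega
      · have := f01 k k' (by omega) (by omega) h3; omega
    · obtain ⟨k', h1, h2, h3⟩ := hx'
      have := f00 k k' (by omega) (by omega) h3; omega
    · obtain ⟨k', h1, h2, h3⟩ | ⟨k', h1, h2, h3⟩ := hx'
      · have := f01 k' k (by omega) (by omega) h3.symm; omega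
      · have := f01 k' k (by omega) (by omega) h3.symm; omega
    · obtain ⟨k', h1, h2, h3⟩ := hx'
      have := f01 k' k (by omega) (by omega) h3.symm; omega
    · obtain ⟨k', h1, h2, h3⟩ | ⟨k', h1, h2, h3⟩ := hx'
      · have := f00 k k' (by omega) (by omega) h3; omega
      · have := f00 k k' (by omega) (by omega) h3; omega
    · obtain ⟨k', h1, h2, h3⟩ | ⟨k', h1, h2, h3⟩ := hx'
      · have := f01 k k' (by omega) (by omega) h3; omega
      · have := f01 k k' (by omega) (by omega) h3; omega
  · intro i j' hij h
    fin_cases i <;> fin_cases j' <;>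
      simp only [a, Fin.zero_eta, Fin.mk_one, Fin.reduceFinMk, ne_eq, not_true_eq_false,
        Matrix.cons_val_zero, Matrix.cons_val_one, Matrix.cons_val] at hij h
    · have := f01 _ _ (by omega) (by omega) h; omega
    · have := f00 _ _ (by omega) (by omega) h; omega
    · have := f01 _ _ (by omega) (by omega) h.symm; omega
    · have := f01 _ _ (by omega) (by omega) h.symm; omega
    · have := f00 _ _ (by omega) (by omega) h; omega
    · have := f01 _ _ (by omega) (by omega) h; omega

/-- Two back edges starting below different children of a vertex `w` and ending above `w` have
different sides if below the child of each of them some back edge starts that ends higher than the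
other one. -/
theorem color_diff {u u' u0 u1 : N} {l0 l1 d j j' : ℕ} (hs : T.Split u0 u1 d)
    (hu : d < T.dep u) (hu' : d < T.dep u') (hc : T.anc u (d + 1) = T.anc u0 (d + 1))
    (hc' : T.anc u' (d + 1) = T.anc u1 (d + 1)) (h0 : T.Ret u0 l0) (h1 : T.Ret u1 l1)
    (hr : T.Ret u (j + 1)) (hr' : T.Ret u' (j' + 1)) (hl1 : l1 ≤ j) (hl0 : l0 ≤ j')
    (hj : j + 1 < d) (hj' : j' + 1 < d) : T.color K u j ≠ T.color K u' j' := by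
  wlog h : l1 ≤ l0 generalizing u u' u0 u1 l0 l1 j j'
  · exact (this hs.symm hu' hu hc' hc h1 h0 hr' hr hl0 hl1 hj' hj (by omega)).symm
  have s1 : T.Split u u1 d := ⟨hu, hs.hv,
    by rw [T.anc_eq_of_le hc (by omega) hs.hu (Nat.le_succ d), hs.eq], by rw [hc]; exact hs.ne⟩
  have s0 : T.Split u' u0 d := ⟨hu', hs.hu,
    by rw [T.anc_eq_of_le hc' (by omega) hs.hv (Nat.le_succ d), hs.eq], by rw [hc']; exact hs.ne.symm⟩
  rw [T.wC_eq_color K s1 h1 hl1 hj hr, T.wC_eq_color K s0 h0 hl0 hj' hr',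
    T.wC_tree K s1 h1 (by omega), T.wC_tree K s0 h0 (by omega), hc, hc',
    T.sum_tau_congr K hs (by omega : j' + 2 ≤ d)]
  have key := T.theta_sum K hs h0 h1 h hl0 hj'
  have kc : T.kap K u1 l1 j + ∑ k ∈ Finset.range j, T.tau K u1 k =
      T.kap K u1 l1 j' + ∑ k ∈ Finset.range j', T.tau K u1 k := by
    rcases le_total j j' with hh | hh
    · exact (T.kap_const K h1 hl1 hh (by omega) hs.hv).symm
    · exact T.kap_const K h1 (by omega) hh (by omega) hs.hv
  intro hE
  grind

end NST

/-! ### Returning leaves and their aligned sides -/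

namespace NST
variable {N : Type*} {H : SimpleGraph N} {A0 : N → Prop} (T : NST H A0) (K : VK H)

/-- The hypotheses on a subdivided graph: `M` marks the subdividing vertices, which have exactly
two neighbours, both unmarked; roots are unmarked, and `idx` is an enumeration. -/
structure Good (M : N → Prop) (idx : N → ℕ) : Prop where
  bip : ∀ a b, H.Adj a b → (M a ↔ ¬ M b)
  root : ∀ v, ¬ M (T.anc v 0)
  two : ∀ m a b c, M m → H.Adj m a → H.Adj m b → H.Adj m c → a = b ∨ a = c ∨ b = c
  two' : ∀ m, M m → ∃ a b, a ≠ b ∧ H.Adj m a ∧ H.Adj m b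
  inj : Function.Injective idx

/-- `v` is a descendant of `x` (possibly `x` itself). -/
def Below (v x : N) : Prop := T.dep x ≤ T.dep v ∧ T.anc v (T.dep x) = x

/-- A returning leaf: a vertex with an edge to a proper ancestor other than its parent. -/
def Lf (u : N) : Prop := ∃ r, T.Ret u r

open Classical in
/-- The depth of the ancestor to which a returning leaf returns (`0` if there is none). -/
noncomputable def rr (u : N) : ℕ := if h : T.Lf u then h.choose else 0

variable {T} {M : N → Prop} {idx : N → ℕ}

theorem Lf.ret {u : N} (h : T.Lf u) : T.Ret u (T.rr u) := by
  rw [rr, dif_pos h]; exact h.choose_spec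

theorem anc_below {v : N} {k : ℕ} (h : k ≤ T.dep v) : T.Below v (T.anc v k) := by
  rw [Below, T.dep_anc v k h]; exact ⟨h, rfl⟩

theorem Below.anc {v x : N} {j : ℕ} (h : T.Below v x) (hj : j ≤ T.dep x) : T.anc v j = T.anc x j := by
  rw [← T.anc_anc v _ j hj h.1, h.2]

theorem Below.refl (v : N) : T.Below v v := ⟨le_rfl, T.anc_dep v⟩

theorem adj_parent {v : N} (h : 0 < T.dep v) : H.Adj v (T.anc v (T.dep v - 1)) := by
  have := T.adj_anc v (T.dep v - 1) (by omega)
  rw [show T.dep v - 1 + 1 = T.dep v by omega, T.anc_dep] at this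
  exact this.symm

theorem adj_child {v m : N} (h : T.Below v m) (hd : T.dep m < T.dep v) :
    H.Adj m (T.anc v (T.dep m + 1)) := by
  have := T.adj_anc v (T.dep m) hd
  rwa [h.2] at this

variable (G : T.Good M idx)
include G

theorem Good.dep_pos {m : N} (h : M m) : 0 < T.dep m := by
  rcases Nat.eq_zero_or_pos (T.dep m) with h0 | h0
  · have := G.root m
    rw [← h0, T.anc_dep] at this
    exact absurd h this
  · exact h0

theorem Good.ret_M {u : N} {r : ℕ} (h : T.Ret u r) : M u := by
  by_contra hu
  have hm : M (T.anc u r) := by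
    by_contra hm
    exact hu ((G.bip _ _ h.2).2 hm)
  have hd := T.dep_anc u r (by have := h.1; omega)
  have h1 := h.1
  have hp := G.dep_pos hm
  have a1 := T.adj_parent hp
  have a2 := T.adj_anc u r (by omega)
  rcases G.two _ _ _ _ hm a1 a2 h.2.symm with e | e | e
  · have := congrArg T.dep e
    rw [T.dep_anc _ _ (by omega : T.dep (T.anc u r) - 1 ≤ _), T.dep_anc u (r + 1) (by omega)] at this
    omega
  · have := congrArg T.dep e
    rw [T.dep_anc _ _ (by omega : T.dep (T.anc u r) - 1 ≤ _)] at this; omega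
  · have := congrArg T.dep e
    rw [T.dep_anc u (r + 1) (by omega)] at this; omega

theorem Good.ret_rr {u : N} {r : ℕ} (h : T.Ret u r) : r = T.rr u := by
  have h' := Lf.ret ⟨r, h⟩
  have h1 := h.1
  have h2 := h'.1
  rcases G.two _ _ _ _ (G.ret_M h) (T.adj_parent (by omega)) h.2 h'.2 with e | e | e
  · have := T.idx_eq e (by omega) (by omega); omega
  · have := T.idx_eq e (by omega) (by omega); omega
  · exact T.idx_eq e (by omega) (by omega)

theorem Good.leaf {u v : N} (h : T.Lf u) (hb : T.Below v u) : v = u := by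
  obtain ⟨r, h⟩ := h
  have h1 := h.1
  rcases hb.1.eq_or_lt with hd | hd
  · rw [← hb.2, hd, T.anc_dep]
  · have a3 := T.adj_child hb hd
    have e3 := T.dep_anc v (T.dep u + 1) hd
    rcases G.two _ _ _ _ (G.ret_M h) (T.adj_parent (by omega)) h.2 a3 with e | e | e
    · have := T.idx_eq e (by omega) (by omega); omega
    · have := congrArg T.dep e
      rw [T.dep_anc _ _ (by omega)] at this; omega
    · have := congrArg T.dep e
      rw [T.dep_anc _ _ (by omega)] at this; omega

theorem Good.child_unique {m v v' : N} (hm : M m) (h : T.Below v m) (h' : T.Below v' m)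
    (hd : T.dep m < T.dep v) (hd' : T.dep m < T.dep v') :
    T.anc v (T.dep m + 1) = T.anc v' (T.dep m + 1) := by
  have hp := G.dep_pos hm
  rcases G.two _ _ _ _ hm (T.adj_parent hp) (T.adj_child h hd) (T.adj_child h' hd') with e | e | e
  · have := congrArg T.dep e
    rw [T.dep_anc _ _ (by omega), T.dep_anc _ _ (by omega)] at this; omega
  · have := congrArg T.dep e
    rw [T.dep_anc _ _ (by omega), T.dep_anc _ _ (by omega)] at this; omega
  · exact e

theorem Good.leaf_or_child {m : N} (hm : M m) :
    T.Lf m ∨ ∃ y, T.Below y m ∧ T.dep y = T.dep m + 1 := by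
  obtain ⟨a, b, hab, ha, hb⟩ := G.two' m hm
  have key : ∀ a, H.Adj m a → (T.Lf m ∨ ∃ y, T.Below y m ∧ T.dep y = T.dep m + 1) ∨
      a = T.anc m (T.dep m - 1) := by
    intro a ha
    rcases T.cmp _ _ ha with ⟨h1, h2⟩ | ⟨h1, h2⟩
    · left; right
      refine ⟨T.anc a (T.dep m + 1), ⟨?_, ?_⟩, T.dep_anc _ _ h1⟩
      · rw [T.dep_anc _ _ h1]; omega
      · rw [T.anc_anc _ _ _ (by omega) h1, h2]
    · rcases (show T.dep a + 1 ≤ T.dep m from h1).eq_or_lt with h3 | h3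
      · right; rw [← h3, Nat.add_sub_cancel, h2]
      · left; left
        exact ⟨T.dep a, h3, by rw [h2]; exact ha⟩
  rcases key a ha with h | h
  · exact h
  · rcases key b hb with h' | h'
    · exact h'
    · exact absurd (h.trans h'.symm) hab

omit G

variable (T) in
open Classical in
/-- The least level `j` beyond the return level of `u` such that nothing below `anc u j` returns
higher than `u` does. -/
noncomputable def jst (u : N) : ℕ := sInf {j | T.rr u < j ∧ j ≤ T.dep u ∧
  ∀ v, T.Lf v → T.Below v (T.anc u j) → T.rr u ≤ T.rr v}

include G in
theorem Good.jst_mem {u : N} (h : T.Lf u) : T.rr u < T.jst u ∧ T.jst u ≤ T.dep u ∧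
    ∀ v, T.Lf v → T.Below v (T.anc u (T.jst u)) → T.rr u ≤ T.rr v := by
  refine Nat.sInf_mem (s := {j | T.rr u < j ∧ j ≤ T.dep u ∧
    ∀ v, T.Lf v → T.Below v (T.anc u j) → T.rr u ≤ T.rr v}) ⟨T.dep u, ?_, le_rfl, ?_⟩
  · have := h.ret.1; omega
  · intro v hv hb
    rw [T.anc_dep] at hb
    rw [G.leaf h hb]

theorem jst_le {u : N} {j : ℕ} (h1 : T.rr u < j) (h2 : j ≤ T.dep u)
    (h3 : ∀ v, T.Lf v → T.Below v (T.anc u j) → T.rr u ≤ T.rr v) : T.jst u ≤ j :=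
  Nat.sInf_le ⟨h1, h2, h3⟩

variable (T) in
/-- A leaf below `anc u (jst u)` with the same return level as `u`, chosen only in terms of these
two data. -/
noncomputable def rep (u : N) : N :=
  @Classical.epsilon N ⟨u⟩ fun v => T.Lf v ∧ T.Below v (T.anc u (T.jst u)) ∧ T.rr v = T.rr u

include G in
theorem Good.rep_spec {u : N} (h : T.Lf u) :
    T.Lf (T.rep u) ∧ T.Below (T.rep u) (T.anc u (T.jst u)) ∧ T.rr (T.rep u) = T.rr u :=
  @Classical.epsilon_spec N (fun v => T.Lf v ∧ T.Below v (T.anc u (T.jst u)) ∧ T.rr v = T.rr u)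
    ⟨u, h, anc_below (G.jst_mem h).2.1, rfl⟩

variable (T) in
/-- The side of a returning leaf, after alignment: leaves with the same representative `rep` get the
same side, that of the representative. -/
noncomputable def acol (u : N) : ZMod 2 := T.color K (T.rep u) (T.rr u - 1)

include G in
theorem Good.rep_split {u v : N} {d : ℕ} (h : T.Lf u) (hv : T.Lf v) (hd : d < T.dep u)
    (hdv : d ≤ T.dep v) (he : T.anc u d = T.anc v d) (hr : T.rr v < T.rr u) :
    d < T.dep (T.rep u) ∧ T.anc (T.rep u) (d + 1) = T.anc u (d + 1) := by
  obtain ⟨h1, h2, h3⟩ := G.jst_mem h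
  obtain ⟨h4, h5, h6⟩ := G.rep_spec h
  have hj : d < T.jst u := by
    by_contra hc
    have := h3 v hv ⟨?_, ?_⟩
    · omega
    · rw [T.dep_anc _ _ h2]; omega
    · rw [T.dep_anc _ _ h2, T.anc_eq_of_le he.symm hdv hd.le (by omega)]
  have h7 := h5.1
  rw [T.dep_anc _ _ h2] at h7
  refine ⟨by omega, ?_⟩
  rw [h5.anc (by rw [T.dep_anc _ _ h2]; omega), T.anc_anc _ _ _ (by omega) h2]

include G in
theorem Good.acol_same {u u' u1 : N} {d : ℕ} (h : T.Lf u) (h' : T.Lf u') (h1 : T.Lf u1)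
    (hs : T.Split u u1 d) (hd' : d < T.dep u') (hc : T.anc u (d + 1) = T.anc u' (d + 1))
    (hr : T.rr u1 < T.rr u) (hr' : T.rr u1 < T.rr u') (hd : T.rr u < d) (hd'' : T.rr u' < d) :
    T.acol K u = T.acol K u' := by
  have e' : T.anc u' d = T.anc u1 d := by
    rw [← hs.eq]; exact (T.anc_eq_of_le hc hs.hu hd' (Nat.le_succ d)).symm
  obtain ⟨a1, a2⟩ := G.rep_split h h1 hs.hu hs.hv.le hs.eq hr
  obtain ⟨b1, b2⟩ := G.rep_split h' h1 hd' hs.hv.le e' hr'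
  obtain ⟨c1, -, c2⟩ := G.rep_spec h
  obtain ⟨d1, -, d2⟩ := G.rep_spec h'
  have r1 := c1.ret
  have r2 := d1.ret
  rw [c2] at r1
  rw [d2] at r2
  have s : T.Split (T.rep u) u1 d := ⟨a1, hs.hv, by
    rw [T.anc_eq_of_le a2 a1 hs.hu (Nat.le_succ d), hs.eq], by rw [a2]; exact hs.ne⟩
  refine T.color_same K s b1 (by rw [a2, b2, hc]) h1.ret (j := T.rr u - 1) (j' := T.rr u' - 1)
    ?_ ?_ (by omega) (by omega) (by omega) (by omega)
  · rwa [show T.rr u - 1 + 1 = T.rr u by omega]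
  · rwa [show T.rr u' - 1 + 1 = T.rr u' by omega]

include G in
theorem Good.acol_diff {u u' u0 u1 : N} {d : ℕ} (h : T.Lf u) (h' : T.Lf u') (h0 : T.Lf u0)
    (h1 : T.Lf u1) (hs : T.Split u u' d) (hd0 : d < T.dep u0) (hd1 : d < T.dep u1)
    (hc : T.anc u (d + 1) = T.anc u0 (d + 1)) (hc' : T.anc u' (d + 1) = T.anc u1 (d + 1))
    (hr : T.rr u1 < T.rr u) (hr' : T.rr u0 < T.rr u') (hd : T.rr u < d) (hd' : T.rr u' < d) :
    T.acol K u ≠ T.acol K u' := by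
  have e1 : T.anc u1 d = T.anc u d := by
    rw [hs.eq]; exact (T.anc_eq_of_le hc' hs.hv hd1 (Nat.le_succ d)).symm
  have e0 : T.anc u0 d = T.anc u' d := by
    rw [← hs.eq]; exact (T.anc_eq_of_le hc hs.hu hd0 (Nat.le_succ d)).symm
  obtain ⟨a1, a2⟩ := G.rep_split h h1 hs.hu hd1.le e1.symm hr
  obtain ⟨b1, b2⟩ := G.rep_split h' h0 hs.hv hd0.le e0.symm hr'
  obtain ⟨c1, -, c2⟩ := G.rep_spec h
  obtain ⟨d1, -, d2⟩ := G.rep_spec h'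
  have r1 := c1.ret
  have r2 := d1.ret
  rw [c2] at r1
  rw [d2] at r2
  have s : T.Split u0 u1 d := ⟨hd0, hd1, by rw [e0, ← hs.eq, e1], by rw [← hc, ← hc']; exact hs.ne⟩
  refine T.color_diff K s a1 b1 (a2.trans hc) (b2.trans hc') h0.ret h1.ret (j := T.rr u - 1)
    (j' := T.rr u' - 1) ?_ ?_ (by omega) (by omega) (by omega) (by omega)
  · rwa [show T.rr u - 1 + 1 = T.rr u by omega]
  · rwa [show T.rr u' - 1 + 1 = T.rr u' by omega]

include G in
/-- Leaves below `x` that return to the same level, highest among all leaves below `x`, have the same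
side after alignment. -/
theorem Good.acol_align {u u' x : N} (h : T.Lf u) (h' : T.Lf u') (hr : T.rr u = T.rr u')
    (hb : T.Below u x) (hb' : T.Below u' x) (hx : T.rr u < T.dep x)
    (hv : ∀ v, T.Lf v → T.Below v x → T.rr u ≤ T.rr v) : T.acol K u = T.acol K u' := by
  have key : ∀ {u u'}, T.Lf u → T.Lf u' → T.rr u = T.rr u' → T.Below u x → T.Below u' x →
      T.rr u < T.dep x → (∀ v, T.Lf v → T.Below v x → T.rr u ≤ T.rr v) →
      T.jst u ≤ T.dep x ∧ T.jst u' ≤ T.jst u := by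
    intro u u' h h' hr hb hb' hx hv
    have hj : T.jst u ≤ T.dep x := jst_le hx hb.1 (by rw [hb.2]; exact hv)
    have hm := G.jst_mem h
    refine ⟨hj, jst_le (hr ▸ hm.1) (hj.trans hb'.1) ?_⟩
    rw [hb'.anc hj, ← hb.anc hj, ← hr]
    exact hm.2.2
  obtain ⟨k1, k2⟩ := key h h' hr hb hb' hx hv
  obtain ⟨k3, k4⟩ := key h' h hr.symm hb' hb (hr ▸ hx) (by rw [← hr]; exact hv)
  have e : T.jst u = T.jst u' := le_antisymm k4 k2
  have : T.rep u = T.rep u' := by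
    simp only [rep]
    rw [← e, hb.anc k1, hb'.anc k1, hr]
  rw [acol, acol, this, hr]

variable (T) in
open Classical in
/-- The position of the return edge of `u` relative to the tree: negative on the left. -/
noncomputable def key (u : N) : ℤ := if T.acol K u = 0 then -(T.rr u + 1) else T.rr u + 1

theorem key_or (u : N) : (T.acol K u = 0 ∧ T.key K u = -(T.rr u + 1)) ∨
    (T.acol K u ≠ 0 ∧ T.key K u = T.rr u + 1) := by
  rw [key]
  split_ifs with h
  · exact Or.inl ⟨h, rfl⟩
  · exact Or.inr ⟨h, rfl⟩

variable (T) in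
/-- The leaves below `x` returning above the parent of `x`. -/
def AA (x : N) : Set N := {u | T.Lf u ∧ T.Below u x ∧ T.rr u + 1 < T.dep x}

include G in
/-- The return edges leaving the subtrees of two siblings do not interlace with respect to `key`. -/
theorem Good.sep {x x' : N} (hx : T.dep x = T.dep x') (hne : x ≠ x')
    (hp : T.anc x (T.dep x - 1) = T.anc x' (T.dep x - 1)) :
    (∀ u ∈ T.AA x, ∀ u' ∈ T.AA x', T.key K u ≤ T.key K u') ∨
    (∀ u ∈ T.AA x, ∀ u' ∈ T.AA x', T.key K u' ≤ T.key K u) := by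
  rcases (T.AA x).eq_empty_or_nonempty with hA | hA
  · left; simp [hA]
  rcases (T.AA x').eq_empty_or_nonempty with hB | hB
  · left; simp [hB]
  obtain ⟨u0, hu0, m0⟩ := WellFounded.has_min (measure T.rr).wf _ hA
  obtain ⟨u1, hu1, m1⟩ := WellFounded.has_min (measure T.rr).wf _ hB
  replace m0 : ∀ u ∈ T.AA x, T.rr u0 ≤ T.rr u := fun u hu => not_lt.1 (m0 u hu)
  replace m1 : ∀ u ∈ T.AA x', T.rr u1 ≤ T.rr u := fun u hu => not_lt.1 (m1 u hu)
  wlog hw : T.rr u1 ≤ T.rr u0 generalizing x x' u0 u1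
  · exact (this hx.symm hne.symm (by rw [← hx]; exact hp.symm) hB hA u1 hu1 u0 hu0 m1 m0
      (by omega)).symm.imp (fun h u hu u' hu' => h u' hu' u hu) (fun h u hu u' hu' => h u' hu' u hu)
  obtain ⟨d, hd⟩ : ∃ d, T.dep x = d + 1 := ⟨T.dep x - 1, by have := hu0.2.2; omega⟩
  have hd' : T.dep x' = d + 1 := by omega
  rw [hd, Nat.add_sub_cancel] at hp
  have Ae : ∀ u ∈ T.AA x, d < T.dep u ∧ T.anc u (d + 1) = x ∧ T.anc u d = T.anc x d ∧ T.rr u < d := by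
    intro u hu
    have h1 := hu.2.1.1
    have h2 := hu.2.1.2
    have h3 := hu.2.2
    rw [hd] at h1 h2
    exact ⟨h1, h2, hu.2.1.anc (by omega), by omega⟩
  have Be : ∀ u ∈ T.AA x', d < T.dep u ∧ T.anc u (d + 1) = x' ∧ T.anc u d = T.anc x d ∧ T.rr u < d := by
    intro u hu
    have h1 := hu.2.1.1
    have h2 := hu.2.1.2
    have h3 := hu.2.2
    rw [hd'] at h1 h2
    exact ⟨h1, h2, by rw [hp]; exact hu.2.1.anc (by omega), by omega⟩
  have sAB : ∀ u ∈ T.AA x, ∀ u' ∈ T.AA x', T.Split u u' d := fun u hu u' hu' =>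
    ⟨(Ae u hu).1, (Be u' hu').1, (Ae u hu).2.2.1.trans (Be u' hu').2.2.1.symm, by
      rw [(Ae u hu).2.1, (Be u' hu').2.1]; exact hne⟩
  have same : ∀ u ∈ T.AA x, ∀ u' ∈ T.AA x, T.rr u1 < T.rr u → T.rr u1 < T.rr u' →
      T.acol K u = T.acol K u' := fun u hu u' hu' h h' =>
    G.acol_same K hu.1 hu'.1 hu1.1 (sAB u hu u1 hu1) (Ae u' hu').1
      ((Ae u hu).2.1.trans (Ae u' hu').2.1.symm) h h' (Ae u hu).2.2.2 (Ae u' hu').2.2.2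
  have same' : ∀ u ∈ T.AA x', ∀ u' ∈ T.AA x', T.rr u0 < T.rr u → T.rr u0 < T.rr u' →
      T.acol K u = T.acol K u' := fun u hu u' hu' h h' =>
    G.acol_same K hu.1 hu'.1 hu0.1 (sAB u0 hu0 u hu).symm (Be u' hu').1
      ((Be u hu).2.1.trans (Be u' hu').2.1.symm) h h' (Be u hu).2.2.2 (Be u' hu').2.2.2
  have diff : ∀ u ∈ T.AA x, ∀ u' ∈ T.AA x', T.rr u1 < T.rr u → T.rr u0 < T.rr u' →
      T.acol K u ≠ T.acol K u' := fun u hu u' hu' h h' =>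
    G.acol_diff K hu.1 hu'.1 hu0.1 hu1.1 (sAB u hu u' hu') (Ae u0 hu0).1 (Be u1 hu1).1
      ((Ae u hu).2.1.trans (Ae u0 hu0).2.1.symm) ((Be u' hu').2.1.trans (Be u1 hu1).2.1.symm)
      h h' (Ae u hu).2.2.2 (Be u' hu').2.2.2
  have z2 : ∀ a b c : ZMod 2, a ≠ c → b ≠ c → a = b := by decide
  rcases hw.lt_or_eq with hlt | heq
  · by_cases h0 : T.acol K u0 = 0
    · left
      intro u hu u' hu'
      have a1 := m0 u hu
      have a2 := same u hu u0 hu0 (by omega) hlt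
      have a3 := diff u0 hu0 u' hu' hlt
      rw [h0] at a2 a3
      rcases T.key_or K u with ⟨c, k⟩ | ⟨c, k⟩
      · rcases T.key_or K u' with ⟨c', k'⟩ | ⟨c', k'⟩
        · have : ¬ T.rr u0 < T.rr u' := fun h => a3 h c'.symm
          omega
        · omega
      · exact absurd a2 c
    · right
      intro u hu u' hu'
      have a1 := m0 u hu
      have a2 := same u hu u0 hu0 (by omega) hlt
      have a3 := diff u0 hu0 u' hu' hlt
      rcases T.key_or K u with ⟨c, k⟩ | ⟨c, k⟩
      · exact absurd (a2.symm.trans c) h0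
      · rcases T.key_or K u' with ⟨c', k'⟩ | ⟨c', k'⟩
        · omega
        · have : ¬ T.rr u0 < T.rr u' := fun h => a3 h (z2 _ _ 0 h0 c')
          omega
  by_cases hv : ∃ v, T.Lf v ∧ T.Below v (T.anc x d) ∧ T.rr v < T.rr u0
  · obtain ⟨v, v1, v2, v3⟩ := hv
    have hdm : T.dep (T.anc x d) = d := T.dep_anc _ _ (by omega)
    have v4 : d < T.dep v := by
      rcases v2.1.lt_or_eq with h | h
      · rwa [hdm] at h
      · exfalso
        have e : T.anc x d = v := by rw [← v2.2, h, T.anc_dep]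
        have e' : u0 = v := G.leaf v1 (e ▸ ⟨by rw [hdm]; exact (Ae u0 hu0).1.le, by
          rw [hdm]; exact (Ae u0 hu0).2.2.1⟩)
        rw [e'] at v3; omega
    have v5 : T.anc v d = T.anc x d := by have := v2.2; rwa [hdm] at this
    have w0 := (Ae u0 hu0).2.2.2
    have nx : x ≠ T.anc v (d + 1) := by
      intro h
      have := m0 v ⟨v1, by rw [h]; exact anc_below v4, by omega⟩
      omega
    have nx' : x' ≠ T.anc v (d + 1) := by
      intro h
      have := m1 v ⟨v1, by rw [h]; exact anc_below v4, by omega⟩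
      omega
    have sA : ∀ u ∈ T.AA x, ∀ u' ∈ T.AA x, T.acol K u = T.acol K u' := fun u hu u' hu' => by
      have := m0 u hu
      have := m0 u' hu'
      exact G.acol_same K hu.1 hu'.1 v1 ⟨(Ae u hu).1, v4, by rw [(Ae u hu).2.2.1, v5], by
        rw [(Ae u hu).2.1]; exact nx⟩ (Ae u' hu').1
        ((Ae u hu).2.1.trans (Ae u' hu').2.1.symm) (by omega) (by omega) (Ae u hu).2.2.2
        (Ae u' hu').2.2.2
    have sB : ∀ u ∈ T.AA x', ∀ u' ∈ T.AA x', T.acol K u = T.acol K u' := fun u hu u' hu' => by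
      have := m1 u hu
      have := m1 u' hu'
      exact G.acol_same K hu.1 hu'.1 v1 ⟨(Be u hu).1, v4, by rw [(Be u hu).2.2.1, v5], by
        rw [(Be u hu).2.1]; exact nx'⟩ (Be u' hu').1
        ((Be u hu).2.1.trans (Be u' hu').2.1.symm) (by omega) (by omega) (Be u hu).2.2.2
        (Be u' hu').2.2.2
    by_cases hA1 : ∃ u ∈ T.AA x, T.rr u0 < T.rr u
    · by_cases hB1 : ∃ u' ∈ T.AA x', T.rr u0 < T.rr u'
      · obtain ⟨p, hp1, hp2⟩ := hA1
        obtain ⟨q, hq1, hq2⟩ := hB1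
        have hpq := diff p hp1 q hq1 (by omega) hq2
        by_cases h0 : T.acol K p = 0
        · left
          intro u hu u' hu'
          have a1 := sA u hu p hp1
          have a2 := sB u' hu' q hq1
          have a3 : T.acol K q ≠ 0 := fun h => hpq (h0.trans h.symm)
          have k1 := T.key_or K u
          have k2 := T.key_or K u'
          rw [a1, h0] at k1
          rw [a2] at k2
          simp only [a3, ne_eq, not_true_eq_false, false_and, true_and, or_false, false_or, not_false_eq_true] at k1 k2
          omega
        · right
          intro u hu u' hu'
          have a1 := sA u hu p hp1
          have a2 := sB u' hu' q hq1
          have a3 : T.acol K q = 0 := by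
            by_contra h; exact hpq (z2 _ _ 0 h0 h)
          have k1 := T.key_or K u
          have k2 := T.key_or K u'
          rw [a1] at k1
          rw [a2, a3] at k2
          simp only [h0, ne_eq, not_true_eq_false, false_and, true_and, or_false, false_or, not_false_eq_true] at k1 k2
          omega
      · push Not at hB1
        by_cases h0 : T.acol K u0 = 0
        · left
          intro u hu u' hu'
          have a1 := sA u hu u0 hu0
          have a2 := m0 u hu
          have a3 := hB1 u' hu'
          have k1 := T.key_or K u
          have k2 := T.key_or K u'
          simp only [a1, h0] at k1 k2
          simp only [ne_eq, not_true_eq_false, false_and, true_and, or_false] at k1 k2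
          omega
        · right
          intro u hu u' hu'
          have a1 := sA u hu u0 hu0
          have a2 := m0 u hu
          have a3 := hB1 u' hu'
          have k1 := T.key_or K u
          have k2 := T.key_or K u'
          simp only [a1] at k1 k2
          simp only [h0, ne_eq, not_false_eq_true, false_and, true_and, false_or] at k1 k2
          omega
    · push Not at hA1
      by_cases h0 : T.acol K u1 = 0
      · right
        intro u hu u' hu'
        have a1 := sB u' hu' u1 hu1
        have a2 := m1 u' hu'
        have a3 := hA1 u hu
        have k1 := T.key_or K u
        have k2 := T.key_or K u'
        simp only [a1, h0] at k1 k2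
        simp only [ne_eq, not_true_eq_false, false_and, true_and, or_false] at k1 k2
        omega
      · left
        intro u hu u' hu'
        have a1 := sB u' hu' u1 hu1
        have a2 := m1 u' hu'
        have a3 := hA1 u hu
        have k1 := T.key_or K u
        have k2 := T.key_or K u'
        simp only [a1] at k1 k2
        simp only [h0, ne_eq, not_false_eq_true, false_and, true_and, false_or] at k1 k2
        omega
  · push Not at hv
    have hdm : T.dep (T.anc x d) = d := T.dep_anc _ _ (by omega)
    have bA : ∀ u ∈ T.AA x, T.Below u (T.anc x d) := fun u hu =>
      ⟨by rw [hdm]; exact (Ae u hu).1.le, by rw [hdm]; exact (Ae u hu).2.2.1⟩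
    have bB : ∀ u ∈ T.AA x', T.Below u (T.anc x d) := fun u hu =>
      ⟨by rw [hdm]; exact (Be u hu).1.le, by rw [hdm]; exact (Be u hu).2.2.1⟩
    have w0 := (Ae u0 hu0).2.2.2
    have al : ∀ u, (u ∈ T.AA x ∨ u ∈ T.AA x') → T.rr u = T.rr u0 → T.acol K u = T.acol K u0 := by
      intro u hu hr
      refine (G.acol_align K hu0.1 (hu.elim (·.1) (·.1)) hr.symm (bA _ hu0)
        (hu.elim (bA _) (bB _)) (by rw [hdm]; exact w0) hv).symm
    obtain ⟨α, hα, hα'⟩ : ∃ α : ZMod 2, (∀ u ∈ T.AA x, T.rr u0 < T.rr u → T.acol K u = α) ∧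
        (∀ u ∈ T.AA x', T.rr u0 < T.rr u → T.acol K u ≠ α) := by
      by_cases hA1 : ∃ u ∈ T.AA x, T.rr u0 < T.rr u
      · obtain ⟨p, hp1, hp2⟩ := hA1
        exact ⟨T.acol K p, fun u hu h => same u hu p hp1 (by omega) (by omega),
          fun u hu h => (diff p hp1 u hu (by omega) h).symm⟩
      · push Not at hA1
        by_cases hB1 : ∃ u' ∈ T.AA x', T.rr u0 < T.rr u'
        · obtain ⟨q, hq1, hq2⟩ := hB1
          refine ⟨T.acol K q + 1, fun u hu h => absurd (hA1 u hu) (by omega), fun u hu h => ?_⟩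
          rw [same' u hu q hq1 h hq2]
          simp
        · push Not at hB1
          exact ⟨0, fun u hu h => absurd (hA1 u hu) (by omega),
            fun u hu h => absurd (hB1 u hu) (by omega)⟩
    have fin : ∀ u ∈ T.AA x, ∀ u' ∈ T.AA x', (α = 0 → T.key K u ≤ T.key K u') ∧
        (α ≠ 0 → T.key K u' ≤ T.key K u) := by
      intro u hu u' hu'
      have a1 := m0 u hu
      have a2 := m1 u' hu'
      have a3 := al u (Or.inl hu)
      have a4 := al u' (Or.inr hu')
      have a5 := hα u hu
      have a6 := hα' u' hu'
      have a7 : α ≠ 0 → T.rr u0 < T.rr u' → T.acol K u' = 0 := fun h h' => by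
        by_contra h''; exact a6 h' (z2 _ _ 0 h'' h)
      rcases T.key_or K u with ⟨c1, k1⟩ | ⟨c1, k1⟩ <;>
        rcases T.key_or K u' with ⟨c2, k2⟩ | ⟨c2, k2⟩ <;> rw [k1, k2] <;>
        refine ⟨fun h => ?_, fun h => ?_⟩
      · have : ¬ T.rr u0 < T.rr u' := fun h6 => a6 h6 (c2.trans h.symm)
        omega
      · have : ¬ T.rr u0 < T.rr u := fun h5 => h ((a5 h5).symm.trans c1)
        omega
      · omega
      · exfalso
        by_cases h5 : T.rr u0 < T.rr u
        · exact h ((a5 h5).symm.trans c1)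
        · by_cases h6 : T.rr u0 < T.rr u'
          · exact c2 (a7 h h6)
          · exact c2 ((a4 (by omega)).trans ((a3 (by omega)).symm.trans c1))
      · exfalso
        by_cases h5 : T.rr u0 < T.rr u
        · exact c1 ((a5 h5).trans h)
        · by_cases h6 : T.rr u0 < T.rr u'
          · exact a6 h6 (c2.trans h.symm)
          · exact c1 ((a3 (by omega)).trans ((a4 (by omega)).symm.trans c2))
      · omega
      · have : ¬ T.rr u0 < T.rr u := fun h5 => c1 ((a5 h5).trans h)
        omega
      · have : ¬ T.rr u0 < T.rr u' := fun h5 => c2 (a7 h h5)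
        omega
    by_cases h0 : α = 0
    · left; exact fun u hu u' hu' => (fin u hu u' hu').1 h0
    · right; exact fun u hu u' hu' => (fin u hu u' hu').2 h0

end NST

/-! ### Lexicographic positions -/

namespace NST

/-- Lexicographic order on integer sequences. -/
def LLt (a b : ℕ → ℤ) : Prop := ∃ i, (∀ j < i, a j = b j) ∧ a i < b i

theorem LLt.convex {a b c : ℕ → ℤ} {n : ℕ} (h1 : LLt a b) (h2 : LLt b c)
    (h : ∀ i < n, a i = c i) : ∀ i < n, b i = a i := by
  intro i
  induction i using Nat.strong_induction_on with
  | _ i ih =>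
    intro hi
    obtain ⟨p, p1, p2⟩ := h1
    obtain ⟨q, q1, q2⟩ := h2
    have hp : i ≤ p := by
      by_contra hc
      have := ih p (by omega) (by omega); omega
    have hq : i ≤ q := by
      by_contra hc
      have := ih q (by omega) (by omega)
      have := h q (by omega)
      omega
    have := h i hi
    rcases hp.eq_or_lt with e | e
    · subst e
      rcases hq.eq_or_lt with e | e
      · subst e; omega
      · have := q1 i e; omega
    · exact (p1 i e).symm

theorem LLt.le_at {a b : ℕ → ℤ} {n : ℕ} (h1 : LLt a b) (h : ∀ i < n, a i = b i) : a n ≤ b n := by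
  obtain ⟨p, p1, p2⟩ := h1
  rcases lt_trichotomy n p with e | e | e
  · exact (p1 n e).le
  · subst e; exact p2.le
  · have := h p e; omega

theorem LLt.asymm {a b : ℕ → ℤ} (h : LLt a b) (h' : LLt b a) : False := by
  obtain ⟨i, h1, h2⟩ := h
  obtain ⟨j, h3, h4⟩ := h'
  rcases lt_trichotomy i j with e | e | e
  · have := h3 i e; omega
  · subst e; omega
  · have := h1 j e; omega

theorem LLt.trans {a b c : ℕ → ℤ} (h : LLt a b) (h' : LLt b c) : LLt a c := by
  obtain ⟨i, h1, h2⟩ := h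
  obtain ⟨j, h3, h4⟩ := h'
  rcases lt_trichotomy i j with e | e | e
  · exact ⟨i, fun k hk => (h1 k hk).trans (h3 k (by omega)), by rw [← h3 i e]; exact h2⟩
  · subst e; exact ⟨i, fun k hk => (h1 k hk).trans (h3 k hk), h2.trans h4⟩
  · exact ⟨j, fun k hk => (h1 k (by omega)).trans (h3 k hk), by rw [h1 j e]; exact h4⟩

variable {N : Type*} {H : SimpleGraph N} {A0 : N → Prop} (T : NST H A0) (K : VK H) (idx : N → ℕ)

/-- The value by which siblings are ordered: the sum of the least and the greatest key of a return
edge leaving the subtree of `x`. It is a substitute for the position of this set of keys, which for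
siblings do not overlap by `Good.sep`. -/
noncomputable def skey (x : N) : ℤ := sInf (T.key K '' T.AA x) + sSup (T.key K '' T.AA x)

open Classical in
/-- The sequence coding the position of `v` in the plane tree: three entries per level. -/
noncomputable def word (v : N) (i : ℕ) : ℤ :=
  if i / 3 ≤ T.dep v then
    (if i % 3 = 0 then T.skey K (T.anc v (i / 3)) else
      if i % 3 = 1 then (idx (T.anc v (i / 3)) : ℤ) + 1 else 0)
  else 0

/-- The position attached to `v`, cut at level `k`, with offset `p` there. The tail is negated, so
that return edges arriving at the same place are nested. -/
noncomputable def item (v : N) (k : ℕ) (p : ℤ) (i : ℕ) : ℤ :=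
  if i < 3 * k + 2 then T.word K idx v i else if i = 3 * k + 2 then p else -T.word K idx v i

variable {T} {idx} {M : N → Prop}

theorem key_bound {x u : N} (h : u ∈ T.AA x) : -(T.dep x : ℤ) ≤ T.key K u ∧ T.key K u ≤ T.dep x := by
  have := h.2.2
  rcases T.key_or K u with ⟨_, k⟩ | ⟨_, k⟩ <;> omega

theorem Good.key_le (G : T.Good M idx) {x x' : N} (hx : T.dep x = T.dep x') (hne : x ≠ x')
    (hp : T.anc x (T.dep x - 1) = T.anc x' (T.dep x - 1)) (hs : T.skey K x ≤ T.skey K x')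
    {u u' : N} (hu : u ∈ T.AA x) (hu' : u' ∈ T.AA x') : T.key K u ≤ T.key K u' := by
  rcases G.sep K hx hne hp with h | h
  · exact h u hu u' hu'
  · have bb : ∀ y, BddBelow (T.key K '' T.AA y) := fun y =>
      ⟨-(T.dep y : ℤ), by rintro _ ⟨v, hv, rfl⟩; exact (key_bound K hv).1⟩
    have ba : ∀ y, BddAbove (T.key K '' T.AA y) := fun y =>
      ⟨(T.dep y : ℤ), by rintro _ ⟨v, hv, rfl⟩; exact (key_bound K hv).2⟩
    have a1 := csInf_le (bb x) (mem_image_of_mem _ hu)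
    have a2 := le_csSup (ba x) (mem_image_of_mem _ hu)
    have a3 := csInf_le (bb x') (mem_image_of_mem _ hu')
    have a4 := le_csSup (ba x') (mem_image_of_mem _ hu')
    have a5 : sSup (T.key K '' T.AA x') ≤ sInf (T.key K '' T.AA x) := by
      refine csSup_le ⟨_, mem_image_of_mem _ hu'⟩ ?_
      rintro _ ⟨v, hv, rfl⟩
      refine le_csInf ⟨_, mem_image_of_mem _ hu⟩ ?_
      rintro _ ⟨w, hw, rfl⟩
      exact h w hw v hv
    simp only [skey] at hs
    omega

theorem word_zero {v : N} {k : ℕ} (h : k ≤ T.dep v) :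
    T.word K idx v (3 * k) = T.skey K (T.anc v k) := by
  have h1 : 3 * k / 3 = k := by omega
  have h2 : 3 * k % 3 = 0 := by omega
  simp [word, h1, h2, h]

theorem word_one {v : N} {k : ℕ} (h : k ≤ T.dep v) :
    T.word K idx v (3 * k + 1) = idx (T.anc v k) + 1 := by
  have h1 : (3 * k + 1) / 3 = k := by omega
  have h2 : (3 * k + 1) % 3 = 1 := by omega
  simp [word, h1, h2, h]

theorem word_two {v : N} {k : ℕ} : T.word K idx v (3 * k + 2) = 0 := by
  have h2 : (3 * k + 2) % 3 = 2 := by omega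
  simp [word, h2]

theorem word_big {v : N} {k : ℕ} (h : T.dep v < k) : T.word K idx v (3 * k + 1) = 0 := by
  have h1 : (3 * k + 1) / 3 = k := by omega
  rw [word, h1, if_neg (by omega)]

theorem word_congr {v v' : N} {k i : ℕ} (h : T.anc v k = T.anc v' k) (hv : k ≤ T.dep v)
    (hv' : k ≤ T.dep v') (hi : i < 3 * k + 3) : T.word K idx v i = T.word K idx v' i := by
  have h3 : i / 3 ≤ k := by omega
  simp only [word]
  rw [if_pos (h3.trans hv), if_pos (h3.trans hv'), T.anc_eq_of_le h hv hv' h3]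

variable (T M) in
/-- The triples `(v, k, p)` that occur as positions, for `v` marked or not: the start of the return
edge of `v`, its end on the left (`p = -2`) or right (`p = 1`) of the branch, the upper end of the
tree edges through a marked `v` (`p = -1`), and at an unmarked `v` the ends of its loop
(`p = -4, -3`) and the end of the tree edge from above (`p = -5`). -/
def Vd (v : N) (k : ℕ) (p : ℤ) : Prop :=
  (M v ∧ T.Lf v ∧ k = T.dep v ∧ p = 0) ∨ (M v ∧ T.Lf v ∧ k = T.rr v + 1 ∧ (p = -2 ∨ p = 1)) ∨
  (M v ∧ k = T.dep v ∧ p = -1) ∨ (¬ M v ∧ k = T.dep v ∧ (p = -3 ∨ p = -4 ∨ p = -5))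

theorem Vd.le {v : N} {k : ℕ} {p : ℤ} (h : T.Vd M v k p) : k ≤ T.dep v := by
  rcases h with h | h | h | h
  · omega
  · have := h.2.1.ret.1; omega
  · omega
  · omega

theorem item_lt {v : N} {k i : ℕ} {p : ℤ} (h : i < 3 * k + 2) :
    T.item K idx v k p i = T.word K idx v i := if_pos h

theorem item_eq {v : N} {k : ℕ} {p : ℤ} : T.item K idx v k p (3 * k + 2) = p := by
  rw [item, if_neg (by omega), if_pos rfl]

theorem item_gt {v : N} {k i : ℕ} {p : ℤ} (h : 3 * k + 2 < i) :
    T.item K idx v k p i = -T.word K idx v i := by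
  rw [item, if_neg (by omega), if_neg (by omega)]

variable (G : T.Good M idx)
include G

theorem Good.anc_of_word {v v' : N} {k : ℕ} (hv : k ≤ T.dep v)
    (hv' : k ≤ T.dep v') (h : T.word K idx v (3 * k + 1) = T.word K idx v' (3 * k + 1)) :
    T.anc v k = T.anc v' k := by
  rw [word_one K hv, word_one K hv'] at h
  exact G.inj (by omega)

/-- A position lies in the slot of `x` only if it is attached to a descendant of `x`. -/
theorem Good.slot {v x : N} {k : ℕ} {p : ℤ} (hV : T.Vd M v k p)
    (h : ∀ i < 3 * T.dep x + 2, T.item K idx v k p i = T.word K idx x i) :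
    T.dep x ≤ k ∧ T.anc v (T.dep x) = x := by
  have hk := hV.le
  have h1 : T.dep x ≤ k := by
    by_contra hc
    have h2 := h (3 * k + 2) (by omega)
    rw [item_eq, word_two] at h2
    have h3 := h (3 * k + 1) (by omega)
    rw [item_lt K (by omega)] at h3
    have h4 := G.anc_of_word K hk (by omega) h3
    rcases hV with h | h | h | h
    · obtain ⟨-, h5, h6, -⟩ := h
      rw [h6, T.anc_dep] at h4
      have := G.leaf h5 (v := x) ⟨by omega, h4.symm⟩
      rw [this] at hc; omega
    all_goals omega
  refine ⟨h1, ?_⟩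
  have h3 := h (3 * T.dep x + 1) (by omega)
  rw [item_lt K (by omega)] at h3
  have := G.anc_of_word K (h1.trans hk) le_rfl h3
  rwa [T.anc_dep] at this

omit G in
theorem slot_of {v x : N} {k i : ℕ} {p : ℤ} (hk : k ≤ T.dep v) (h1 : T.dep x ≤ k)
    (h2 : T.anc v (T.dep x) = x) (hi : i < 3 * T.dep x + 2) :
    T.item K idx v k p i = T.word K idx x i := by
  rw [item_lt K (by omega)]
  exact word_congr K (h2.trans (T.anc_dep x).symm) (by omega) le_rfl (by omega)

theorem Good.item_inj {v v' : N} {k k' : ℕ} {p p' : ℤ} (hV : T.Vd M v k p) (hV' : T.Vd M v' k' p')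
    (h : ∀ i, T.item K idx v k p i = T.item K idx v' k' p' i) : v = v' ∧ k = k' ∧ p = p' := by
  have key : ∀ {v v' : N} {k k' : ℕ} {p p' : ℤ} (hV : T.Vd M v k p) (hV' : T.Vd M v' k' p')
    (h : ∀ i, T.item K idx v k p i = T.item K idx v' k' p' i), k' ≤ k := by
    intro v v' k k' p p' hV hV' h
    have hk' := hV'.le
    have := G.slot K (x := T.anc v' k') hV (fun i hi => ?_)
    · rw [T.dep_anc _ _ hV'.le] at this; exact this.1
    · rw [h, slot_of K hV'.le]
      · rw [T.dep_anc _ _ hk']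
      · rw [T.dep_anc _ _ hk']
      · exact hi
  obtain rfl : k = k' := le_antisymm (key hV' hV fun i => (h i).symm) (key hV hV' h)
  have hk := hV.le
  have hk' := hV'.le
  have hp : p = p' := by have := h (3 * k + 2); rwa [item_eq, item_eq] at this
  subst hp
  have ha : T.anc v k = T.anc v' k := G.anc_of_word K hk hk' (by
    have := h (3 * k + 1)
    rwa [item_lt K (by omega), item_lt K (by omega)] at this)
  have hd : ∀ j, k < j → T.word K idx v (3 * j + 1) = T.word K idx v' (3 * j + 1) := by
    intro j hj
    have := h (3 * j + 1)
    rw [item_gt K (by omega), item_gt K (by omega)] at this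
    omega
  have hdd : T.dep v = T.dep v' := by
    rcases lt_trichotomy (T.dep v) (T.dep v') with e | e | e
    · have := hd (T.dep v') (by omega)
      rw [word_big K e, word_one K le_rfl] at this; omega
    · exact e
    · have := hd (T.dep v) (by omega)
      rw [word_big K e, word_one K le_rfl] at this; omega
  refine ⟨?_, rfl, rfl⟩
  have : T.anc v (T.dep v) = T.anc v' (T.dep v) := by
    rcases hk.eq_or_lt with e | e
    · rw [← e]; exact ha
    · exact G.anc_of_word K le_rfl hdd.le (hd _ e)
  rwa [T.anc_dep, hdd, T.anc_dep] at this

omit G in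
open Classical in
variable (T M) in
/-- The vertex to which a position is attached in the diagram. -/
noncomputable def bs (v : N) (k : ℕ) : N := if M v then T.anc v (k - 1) else v

theorem Good.Vd_pos {v : N} {k : ℕ} {p : ℤ} (hV : T.Vd M v k p) (hM : M v) : 0 < k := by
  have := G.dep_pos hM
  rcases hV with h | h | h | h <;> omega

theorem Good.bs_not_M {v : N} {k : ℕ} {p : ℤ} (hV : T.Vd M v k p) : ¬ M (T.bs M v k) := by
  rw [bs]
  split_ifs with hM
  · have hp := G.dep_pos hM
    have h1 : ¬ M (T.anc v (T.dep v - 1)) := (G.bip _ _ (T.adj_parent hp)).1 hM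
    rcases hV with h | h | h | h
    · rw [h.2.2.1]; exact h1
    · rw [h.2.2.1, Nat.add_sub_cancel]
      exact (G.bip _ _ h.2.1.ret.2).1 hM
    · rw [h.2.1]; exact h1
    · exact absurd hM h.1
  · exact hM

omit G in
theorem bs_slot {v : N} {k : ℕ} {p : ℤ} (hV : T.Vd M v k p) :
    T.dep (T.bs M v k) ≤ k ∧ T.anc v (T.dep (T.bs M v k)) = T.bs M v k := by
  have hk := hV.le
  rw [bs]
  split_ifs with hM
  · rw [T.dep_anc _ _ (by omega)]; exact ⟨by omega, rfl⟩
  · rcases hV with h | h | h | h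
    · exact absurd h.1 hM
    · exact absurd h.1 hM
    · exact absurd h.1 hM
    · rw [h.2.1]; exact ⟨le_rfl, T.anc_dep v⟩

/-- A position between two positions attached to the same vertex `w` is attached to `w` or to a vertex
of larger depth. -/
theorem Good.laminar {v v1 v2 : N} {k k1 k2 : ℕ} {p p1 p2 : ℤ} (hV : T.Vd M v k p)
    (h1 : T.Vd M v1 k1 p1) (h2 : T.Vd M v2 k2 p2)
    (l1 : LLt (T.item K idx v1 k1 p1) (T.item K idx v k p))
    (l2 : LLt (T.item K idx v k p) (T.item K idx v2 k2 p2)) (hb : T.bs M v1 k1 = T.bs M v2 k2)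
    (hne : T.bs M v k ≠ T.bs M v1 k1) : T.dep (T.bs M v1 k1) < T.dep (T.bs M v k) := by
  have s1 := bs_slot h1
  have s2 := bs_slot h2
  have nM := G.bs_not_M h1
  have nMk := G.bs_not_M hV
  rw [← hb] at s2
  generalize T.bs M v1 k1 = b at *
  have c1 := fun i hi => slot_of K (idx := idx) (p := p1) (i := i) h1.le s1.1 s1.2 hi
  have c2 := fun i hi => slot_of K (idx := idx) (p := p2) (i := i) h2.le s2.1 s2.2 hi
  have c3 := l1.convex l2 (n := 3 * T.dep b + 2) (fun i hi => (c1 i hi).trans (c2 i hi).symm)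
  obtain ⟨c4, c5⟩ := G.slot K hV (fun i hi => (c3 i hi).trans (c1 i hi))
  have hk := hV.le
  rw [bs] at hne ⊢
  split_ifs with hM
  · rw [if_pos hM] at hne
    rw [T.dep_anc _ _ (by omega)]
    by_contra hc
    have hpos := G.Vd_pos hV hM
    rcases c4.eq_or_lt with e | e
    · rcases hV with h | h | h | h
      · rw [e, h.2.2.1, T.anc_dep] at c5; exact nM (c5 ▸ hM)
      · rw [bs, if_pos hM] at nMk
        have := T.adj_anc v (k - 1) (by omega)
        rw [show k - 1 + 1 = k by omega, ← e, c5] at this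
        rw [← e] at nMk
        exact nMk ((G.bip _ _ this).2 nM)
      · rw [e, h.2.1, T.anc_dep] at c5; exact nM (c5 ▸ hM)
      · exact h.1 hM
    · apply hne
      rw [← c5]; congr 1; omega
  · rw [if_neg hM] at hne
    rcases (c4.trans hk).eq_or_lt with e | e
    · rw [e, T.anc_dep] at c5; exact absurd c5 hne
    · exact e

omit G in
theorem exc {v x : N} {k : ℕ} {p c : ℤ} (h1 : T.dep x ≤ k)
    (hc : T.item K idx v k p (3 * T.dep x + 2) = c) (h0 : c ≠ 0) : k = T.dep x ∧ p = c := by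
  rcases h1.eq_or_lt with e | e
  · rw [e, item_eq] at hc; exact ⟨e.symm, hc⟩
  · rw [item_lt K (by omega), word_two] at hc
    exact absurd hc.symm h0

omit G in
theorem eq_of_exc {v x : N} {k : ℕ} {p : ℤ} (hV : T.Vd M v k p)
    (h2 : T.anc v (T.dep x) = x) (hk : k = T.dep x) (h3 : p ≠ -2) (h4 : p ≠ 1) :
    v = x := by
  have : k = T.dep v := by
    rcases hV with h | h | h | h
    · omega
    · exfalso; obtain ⟨_, _, _, h | h⟩ := h
      · exact h3 h
      · exact h4 h
    · exact h.2.1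
    · exact h.2.1
  rw [← hk, this, T.anc_dep] at h2
  exact h2

/-- No position lies between the two ends of a loop. -/
theorem Good.loop {v x : N} {k : ℕ} {p : ℤ} (hV : T.Vd M v k p)
    (l1 : LLt (T.item K idx x (T.dep x) (-4)) (T.item K idx v k p))
    (l2 : LLt (T.item K idx v k p) (T.item K idx x (T.dep x) (-3))) : False := by
  have c3 := l1.convex l2 (n := 3 * T.dep x + 2) (fun i hi => by
    rw [item_lt K hi, item_lt K hi])
  obtain ⟨d1, d2⟩ := G.slot K hV (fun i hi => (c3 i hi).trans (item_lt K hi))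
  have e1 := l1.le_at (n := 3 * T.dep x + 2) (fun i hi => (c3 i hi).symm)
  have e2 := l2.le_at (n := 3 * T.dep x + 2) (fun i hi => (c3 i hi).trans
    (by rw [item_lt K hi, item_lt K hi]))
  rw [item_eq] at e1 e2
  obtain ⟨f1, f2⟩ := exc (c := T.item K idx v k p (3 * T.dep x + 2)) K d1 rfl (by omega)
  have f3 := eq_of_exc hV d2 f1 (by omega) (by omega)
  subst f3; subst f1
  rw [← f2] at e1 e2
  rcases (by omega : p = -4 ∨ p = -3) with rfl | rfl
  · exact l1.asymm l1
  · exact l2.asymm l2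

/-- No position lies between the two ends of a tree edge (through the marked vertex `m`). -/
theorem Good.tree {v m y : N} {k : ℕ} {p : ℤ} (hV : T.Vd M v k p) (hM : M m) (hm : ¬ T.Lf m)
    (hy : T.Below y m) (hyd : T.dep y = T.dep m + 1)
    (l1 : LLt (T.item K idx m (T.dep m) (-1)) (T.item K idx v k p))
    (l2 : LLt (T.item K idx v k p) (T.item K idx y (T.dep y) (-5))) : False := by
  have hmy : ∀ i < 3 * T.dep m + 2, T.item K idx m (T.dep m) (-1) i =
      T.item K idx y (T.dep y) (-5) i := fun i hi => by
    rw [item_lt K hi, item_lt K (by omega)]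
    exact (word_congr K (hy.2.trans (T.anc_dep m).symm) hy.1 le_rfl (by omega)).symm
  have c3 := l1.convex l2 (n := 3 * T.dep m + 2) hmy
  obtain ⟨d1, d2⟩ := G.slot K hV (fun i hi => (c3 i hi).trans (item_lt K hi))
  have e1 := l1.le_at (n := 3 * T.dep m + 2) (fun i hi => (c3 i hi).symm)
  have e2 := l2.le_at (n := 3 * T.dep m + 2) (fun i hi => (c3 i hi).trans (hmy i hi))
  rw [item_eq] at e1
  rw [item_lt (v := y) K (by omega), word_two] at e2
  by_cases h0 : T.item K idx v k p (3 * T.dep m + 2) = 0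
  · have hk := hV.le
    have h5 : T.dep m < k := by
      rcases d1.eq_or_lt with e | e
      · exfalso
        rw [e, item_eq] at h0
        rcases hV with h | h | h | h
        · rw [e, h.2.2.1, T.anc_dep] at d2
          exact hm (d2 ▸ h.2.1)
        all_goals omega
      · exact e
    have h6 := G.child_unique hM (v := v) (v' := y) ⟨by omega, d2⟩ hy (by omega) (by omega)
    rw [← hyd, T.anc_dep] at h6
    have c4 : ∀ i < 3 * T.dep y + 2, T.item K idx v k p i = T.item K idx y (T.dep y) (-5) i :=
      fun i hi => (slot_of K hk (by omega) h6 hi).trans (item_lt K hi).symm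
    have e3 := l2.le_at c4
    rw [item_eq] at e3
    obtain ⟨f1, f2⟩ := exc (T := T) (idx := idx) (v := v) (p := p) K (by omega : T.dep y ≤ k) rfl (by omega)
    have f4 : p = -5 := by rcases hV with h | h | h | h <;> omega
    have f3 := eq_of_exc hV h6 f1 (by omega) (by omega)
    subst f3; subst f1; subst f4
    exact l2.asymm l2
  · obtain ⟨f1, f2⟩ := exc K d1 rfl h0
    have f4 : p = -1 := by omega
    have f3 := eq_of_exc hV d2 f1 (by omega) (by omega)
    subst f3; subst f1; subst f4
    exact l1.asymm l1

end NST

/-! ### Planar arc diagrams -/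

namespace NST
variable {N : Type*} {H : SimpleGraph N} {A0 : N → Prop} {T : NST H A0} (K : VK H) {idx : N → ℕ}
  {M : N → Prop}

/-- Two distinct returning leaves have distinct ancestors at some first level. -/
theorem Good.exists_split (G : T.Good M idx) {u u' : N} (h : T.Lf u) (h' : T.Lf u') (hne : u ≠ u') :
    ∃ e, e ≤ T.dep u ∧ e ≤ T.dep u' ∧ T.anc u e ≠ T.anc u' e ∧ ∀ j < e, T.anc u j = T.anc u' j := by
  classical
  have ex : ∃ e, e ≤ T.dep u ∧ e ≤ T.dep u' ∧ T.anc u e ≠ T.anc u' e := by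
    by_contra hc
    push Not at hc
    rcases le_total (T.dep u) (T.dep u') with hl | hl
    · have := hc _ le_rfl hl
      rw [T.anc_dep] at this
      exact hne (G.leaf h ⟨hl, this.symm⟩).symm
    · have := hc _ hl le_rfl
      rw [T.anc_dep] at this
      exact hne (G.leaf h' ⟨hl, this⟩)
  obtain ⟨h1, h2, h3⟩ := Nat.find_spec ex
  refine ⟨Nat.find ex, h1, h2, h3, fun j hj => ?_⟩
  have := Nat.find_min ex hj
  push Not at this
  exact this (by omega) (by omega)

variable (G : T.Good M idx)
include G

/-- Comparison of two return edges that leave the subtrees of two siblings: the order of the siblings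
determines the order of the keys and of the ends of the edges, and edges returning on the same side
are nested. -/
theorem Good.noncross_aux {u u' : N} (h : T.Lf u) (h' : T.Lf u') {e : ℕ}
    (hu : e ≤ T.dep u) (hu' : e ≤ T.dep u') (hne : T.anc u e ≠ T.anc u' e)
    (hlt : ∀ j < e, T.anc u j = T.anc u' j) (hr : T.rr u + 1 < e) (hr' : T.rr u' + 1 < e)
    (hs : T.skey K (T.anc u e) < T.skey K (T.anc u' e) ∨
      T.skey K (T.anc u e) = T.skey K (T.anc u' e) ∧ idx (T.anc u e) < idx (T.anc u' e)) :
    T.key K u ≤ T.key K u' ∧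
    LLt (T.item K idx u (T.dep u) 0) (T.item K idx u' (T.dep u') 0) ∧
    (T.rr u' ≤ T.rr u → LLt (T.item K idx u' (T.rr u' + 1) (-2)) (T.item K idx u (T.rr u + 1) (-2))) ∧
    (T.rr u ≤ T.rr u' → LLt (T.item K idx u' (T.rr u' + 1) 1) (T.item K idx u (T.rr u + 1) 1)) := by
  have hd : T.dep (T.anc u e) = e := T.dep_anc _ _ hu
  have hd' : T.dep (T.anc u' e) = e := T.dep_anc _ _ hu'
  obtain ⟨i, hi, hi2, hi3⟩ : ∃ i, 3 * e ≤ i ∧ (∀ j < i, T.word K idx u j = T.word K idx u' j) ∧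
      i < 3 * e + 2 ∧ T.word K idx u i < T.word K idx u' i := by
    have hpre : ∀ j < 3 * e, T.word K idx u j = T.word K idx u' j := fun j hj =>
      word_congr K (hlt (e - 1) (by omega)) (by omega) (by omega) (by omega)
    rcases hs with hs | ⟨hs, hs'⟩
    · exact ⟨3 * e, le_rfl, hpre, by omega, by rw [word_zero K hu, word_zero K hu']; exact hs⟩
    · refine ⟨3 * e + 1, by omega, fun j hj => ?_, by omega, by
        rw [word_one K hu, word_one K hu']; omega⟩
      rcases (by omega : j < 3 * e ∨ j = 3 * e) with hj | rfl
      · exact hpre j hj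
      · rw [word_zero K hu, word_zero K hu']; exact hs
  have hq : ∀ {p : ℤ}, T.rr u' = T.rr u →
      LLt (T.item K idx u' (T.rr u' + 1) p) (T.item K idx u (T.rr u + 1) p) := by
    intro p hrr
    refine ⟨i, fun j hj => ?_, ?_⟩
    · simp only [item, hi2 j hj, hrr]
    · rw [item_gt K (by omega), item_gt K (by omega)]; omega
  refine ⟨?_, ?_, ?_, ?_⟩
  · refine G.key_le K (hd.trans hd'.symm) hne ?_ (by omega) ⟨h, anc_below hu, by omega⟩
      ⟨h', anc_below hu', by omega⟩
    rw [hd, T.anc_anc _ _ _ (by omega) hu, T.anc_anc _ _ _ (by omega) hu']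
    exact hlt _ (by omega)
  · refine ⟨i, fun j hj => ?_, ?_⟩
    · rw [item_lt K (by omega), item_lt K (by omega), hi2 j hj]
    · rw [item_lt K (by omega), item_lt K (by omega)]; exact hi3.2
  · intro hrr
    rcases hrr.eq_or_lt with he | he
    · exact hq he
    · refine ⟨3 * (T.rr u' + 1) + 2, fun j hj => ?_, ?_⟩
      · rw [item_lt K (by omega), item_lt K (by omega), hi2 j (by omega)]
      · rw [item_eq, item_lt K (by omega), word_two]; omega
  · intro hrr
    rcases hrr.eq_or_lt with he | he
    · exact hq he.symm
    · refine ⟨3 * (T.rr u + 1) + 2, fun j hj => ?_, ?_⟩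
      · rw [item_lt K (by omega), item_lt K (by omega), hi2 j (by omega)]
      · rw [item_eq, item_lt K (by omega), word_two]; omega

omit G

variable (T M) in
open Classical in
/-- The two ends of the arc indexed by `n`: a loop at an unmarked vertex, a return edge, or a tree
edge. -/
noncomputable def ends (n : N) (b : Bool) : N × ℕ × ℤ :=
  if M n then
    if T.Lf n then
      (if (T.acol K n = 0) = (b = false) then (n, T.rr n + 1, if b then 1 else -2)
        else (n, T.dep n, 0))
    else if b then
      (let y := @Classical.epsilon N ⟨n⟩ fun y => T.Below y n ∧ T.dep y = T.dep n + 1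
       (y, T.dep y, -5))
    else (n, T.dep n, -1)
  else (n, T.dep n, if b then -3 else -4)

variable (T M idx) in
/-- The position of an end of an arc. -/
noncomputable def code (n : N) (b : Bool) : ℕ → ℤ :=
  T.item K idx (T.ends K M n b).1 (T.ends K M n b).2.1 (T.ends K M n b).2.2

variable (T M) in
/-- The vertex at an end of an arc. -/
noncomputable def base (n : N) (b : Bool) : N := T.bs M (T.ends K M n b).1 (T.ends K M n b).2.1

theorem ends_node {n : N} (h : ¬ M n) (b : Bool) :
    T.ends K M n b = (n, T.dep n, if b then -3 else -4) := by
  rw [ends, if_neg h]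

theorem ends_tree {n : N} (G : T.Good M idx) (h : M n) (hl : ¬ T.Lf n) :
    ∃ y, T.Below y n ∧ T.dep y = T.dep n + 1 ∧ T.ends K M n false = (n, T.dep n, -1) ∧
      T.ends K M n true = (y, T.dep y, -5) := by
  have hs := @Classical.epsilon_spec N (fun y => T.Below y n ∧ T.dep y = T.dep n + 1)
    ((G.leaf_or_child h).resolve_left hl)
  refine ⟨_, hs.1, hs.2, ?_, ?_⟩
  · rw [ends, if_pos h, if_neg hl]; simp
  · rw [ends, if_pos h, if_neg hl]; simp

theorem ends_L {n : N} (h : M n) (hl : T.Lf n) (hc : T.acol K n = 0) :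
    T.ends K M n false = (n, T.rr n + 1, -2) ∧ T.ends K M n true = (n, T.dep n, 0) := by
  constructor
  · rw [ends, if_pos h, if_pos hl]; simp [hc]
  · rw [ends, if_pos h, if_pos hl]; simp [hc]

theorem ends_R {n : N} (h : M n) (hl : T.Lf n) (hc : T.acol K n ≠ 0) :
    T.ends K M n false = (n, T.dep n, 0) ∧ T.ends K M n true = (n, T.rr n + 1, 1) := by
  constructor
  · rw [ends, if_pos h, if_pos hl]; simp [hc]
  · rw [ends, if_pos h, if_pos hl]; simp [hc]

include G in
theorem Good.ends_Vd (n : N) (b : Bool) :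
    T.Vd M (T.ends K M n b).1 (T.ends K M n b).2.1 (T.ends K M n b).2.2 := by
  by_cases h : M n
  · by_cases hl : T.Lf n
    · by_cases hc : T.acol K n = 0
      · obtain ⟨e1, e2⟩ := ends_L K h hl hc
        cases b
        · rw [e1]; exact Or.inr (Or.inl ⟨h, hl, rfl, Or.inl rfl⟩)
        · rw [e2]; exact Or.inl ⟨h, hl, rfl, rfl⟩
      · obtain ⟨e1, e2⟩ := ends_R K h hl hc
        cases b
        · rw [e1]; exact Or.inl ⟨h, hl, rfl, rfl⟩
        · rw [e2]; exact Or.inr (Or.inl ⟨h, hl, rfl, Or.inr rfl⟩)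
    · obtain ⟨y, h1, h2, e1, e2⟩ := ends_tree K G h hl
      cases b
      · rw [e1]; exact Or.inr (Or.inr (Or.inl ⟨h, rfl, rfl⟩))
      · rw [e2]
        have := T.adj_child h1 (by omega)
        rw [← h2, T.anc_dep] at this
        exact Or.inr (Or.inr (Or.inr ⟨(G.bip _ _ this).1 h, rfl, Or.inr (Or.inr rfl)⟩))
  · rw [ends_node K h]
    cases b <;> simp [Vd, h]

include G in
theorem Good.code_inj {n n' : N} {b b' : Bool} (h : T.code K idx M n b = T.code K idx M n' b') :
    n = n' ∧ b = b' := by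
  obtain ⟨e1, e2, e3⟩ := G.item_inj K (G.ends_Vd K n b) (G.ends_Vd K n' b') (congrFun h)
  have he : T.ends K M n b = T.ends K M n' b' := Prod.ext e1 (Prod.ext e2 e3)
  have desc : ∀ n b, ((T.ends K M n b).2.2 = -5 ∧
      n = T.anc (T.ends K M n b).1 ((T.ends K M n b).2.1 - 1)) ∨
      ((T.ends K M n b).2.2 ≠ -5 ∧ n = (T.ends K M n b).1) := by
    intro n b
    by_cases h : M n
    · by_cases hl : T.Lf n
      · by_cases hc : T.acol K n = 0
        · obtain ⟨e1, e2⟩ := ends_L K h hl hc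
          cases b
          · rw [e1]; simp
          · rw [e2]; simp
        · obtain ⟨e1, e2⟩ := ends_R K h hl hc
          cases b
          · rw [e1]; simp
          · rw [e2]; simp
      · obtain ⟨y, h1, h2, e1, e2⟩ := ends_tree K G h hl
        cases b
        · rw [e1]; simp
        · rw [e2]
          left
          refine ⟨rfl, ?_⟩
          simp only [h2, Nat.add_sub_cancel]
          exact h1.2.symm
    · rw [ends_node K h]
      cases b <;> simp
  have ne : ∀ n, (T.ends K M n false).2.2 ≠ (T.ends K M n true).2.2 := by
    intro n
    by_cases h : M n
    · by_cases hl : T.Lf n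
      · by_cases hc : T.acol K n = 0
        · obtain ⟨e1, e2⟩ := ends_L K h hl hc
          rw [e1, e2]; simp
        · obtain ⟨e1, e2⟩ := ends_R K h hl hc
          rw [e1, e2]; simp
      · obtain ⟨y, h1, h2, e1, e2⟩ := ends_tree K G h hl
        rw [e1, e2]; simp
    · rw [ends_node K h, ends_node K h]; simp
  have d1 := desc n b
  have d2 := desc n' b'
  rw [he] at d1
  have hn : n = n' := by
    rcases d1 with ⟨a1, a2⟩ | ⟨a1, a2⟩ <;> rcases d2 with ⟨b1, b2⟩ | ⟨b1, b2⟩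
    · exact a2.trans b2.symm
    · exact absurd a1 b1
    · exact absurd b1 a1
    · exact a2.trans b2.symm
  refine ⟨hn, ?_⟩
  subst hn
  cases b <;> cases b'
  · rfl
  · exact absurd e3 (ne n)
  · exact absurd e3.symm (ne n)
  · rfl

include G in
theorem Good.code_lt (n : N) : LLt (T.code K idx M n false) (T.code K idx M n true) := by
  simp only [code]
  by_cases h : M n
  · by_cases hl : T.Lf n
    · have hr := hl.ret.1
      by_cases hc : T.acol K n = 0
      · obtain ⟨e1, e2⟩ := ends_L K h hl hc
        rw [e1, e2]
        refine ⟨3 * (T.rr n + 1) + 2, fun j hj => ?_, ?_⟩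
        · rw [item_lt K hj, item_lt K (by simp only; omega)]
        · rw [item_eq, item_lt K (by simp only; omega), word_two]; simp
      · obtain ⟨e1, e2⟩ := ends_R K h hl hc
        rw [e1, e2]
        refine ⟨3 * (T.rr n + 1) + 2, fun j hj => ?_, ?_⟩
        · rw [item_lt (k := T.rr n + 1) K hj, item_lt K (by simp only; omega)]
        · rw [item_eq (k := T.rr n + 1), item_lt K (by simp only; omega), word_two]; simp
    · obtain ⟨y, h1, h2, e1, e2⟩ := ends_tree K G h hl
      rw [e1, e2]
      refine ⟨3 * T.dep n + 2, fun j hj => ?_, ?_⟩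
      · rw [item_lt K hj, item_lt K (by simp only; omega)]
        exact (word_congr K (h1.2.trans (T.anc_dep n).symm) h1.1 le_rfl (by omega)).symm
      · rw [item_eq, item_lt K (by simp only; omega), word_two]; simp
  · rw [ends_node K h, ends_node K h]
    refine ⟨3 * T.dep n + 2, fun j hj => ?_, ?_⟩
    · rw [item_lt K hj, item_lt K hj]
    · rw [item_eq, item_eq]; simp

include G in
/-- Nothing lies strictly between the ends of a loop or of a tree edge. -/
theorem Good.code_triv {n : N} (hn : ¬ (M n ∧ T.Lf n)) (n' : N) (b : Bool)
    (l1 : LLt (T.code K idx M n false) (T.code K idx M n' b))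
    (l2 : LLt (T.code K idx M n' b) (T.code K idx M n true)) : False := by
  have hV := G.ends_Vd K n' b
  rw [code] at l1
  rw [code, code] at l2
  by_cases h : M n
  · obtain ⟨y, h1, h2, e1, e2⟩ := ends_tree K G h (fun hl => hn ⟨h, hl⟩)
    rw [e1] at l1
    rw [e2] at l2
    exact G.tree K hV h (fun hl => hn ⟨h, hl⟩) h1 h2 l1 l2
  · rw [ends_node K h] at l1 l2
    exact G.loop K hV l1 l2

include G in
theorem Good.noncross (n n' : N) (l1 : LLt (T.code K idx M n false) (T.code K idx M n' false))
    (l2 : LLt (T.code K idx M n' false) (T.code K idx M n true))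
    (l3 : LLt (T.code K idx M n true) (T.code K idx M n' true)) : False := by
  by_cases hn : M n ∧ T.Lf n
  swap
  · exact G.code_triv K hn n' false l1 l2
  by_cases hn' : M n' ∧ T.Lf n'
  swap
  · exact G.code_triv K hn' n true l2 l3
  obtain ⟨hM, hl⟩ := hn
  obtain ⟨hM', hl'⟩ := hn'
  have hne : n ≠ n' := by rintro rfl; exact l1.asymm l1
  obtain ⟨e, he, he', hee, hej⟩ := G.exists_split hl hl' hne
  have hr := hl.ret.1
  have hr' := hl'.ret.1
  have hends : ∀ u, M u → T.Lf u → ∀ b, ((T.ends K M u b).1 = u) ∧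
      ((T.ends K M u b).2.1 = T.dep u ∨ (T.ends K M u b).2.1 = T.rr u + 1) := by
    intro u hu hlu b
    by_cases hc : T.acol K u = 0
    · obtain ⟨e1, e2⟩ := ends_L K hu hlu hc
      cases b <;> simp [e1, e2]
    · obtain ⟨e1, e2⟩ := ends_R K hu hlu hc
      cases b <;> simp [e1, e2]
  -- an arc both of whose ends lie in the slot at level `e` cannot cross an arc leaving from another
  have slot : ∀ u u', M u → T.Lf u → M u' → T.Lf u' → e ≤ T.dep u → e ≤ T.dep u' →
      T.anc u e ≠ T.anc u' e → e ≤ T.rr u + 1 → ∀ b,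
      LLt (T.code K idx M u false) (T.code K idx M u' b) →
      LLt (T.code K idx M u' b) (T.code K idx M u true) → False := by
    intro u u' h1 h2 h3 h4 h5 h6 h7 h8 b m1 m2
    have hr := h2.ret.1
    have hd : T.dep (T.anc u e) = e := T.dep_anc _ _ h5
    have cc : ∀ b, ∀ i < 3 * e + 2, T.code K idx M u b i = T.word K idx (T.anc u e) i := by
      intro b i hi
      obtain ⟨f1, f2⟩ := hends u h1 h2 b
      refine slot_of K (G.ends_Vd K u b).le (x := T.anc u e) ?_ ?_ (by rw [hd]; exact hi)
      · rw [hd]; omega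
      · rw [hd, f1]
    have c3 := m1.convex m2 (n := 3 * e + 2) (fun i hi => (cc _ i hi).trans (cc _ i hi).symm)
    obtain ⟨-, d2⟩ := G.slot K (x := T.anc u e) (G.ends_Vd K u' b) (by
      rw [hd]; exact fun i hi => (c3 i hi).trans (cc _ i hi))
    rw [hd, (hends u' h3 h4 b).1] at d2
    exact h7 d2.symm
  by_cases c1 : e ≤ T.rr n + 1
  · exact slot n n' hM hl hM' hl' he he' hee c1 false l1 l2
  by_cases c2 : e ≤ T.rr n' + 1
  · exact slot n' n hM' hl' hM hl he' he hee.symm c2 true l2 l3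
  have fin : ∀ u u', M u → T.Lf u → M u' → T.Lf u' → T.key K u ≤ T.key K u' →
      LLt (T.item K idx u (T.dep u) 0) (T.item K idx u' (T.dep u') 0) →
      (T.rr u' ≤ T.rr u →
        LLt (T.item K idx u' (T.rr u' + 1) (-2)) (T.item K idx u (T.rr u + 1) (-2))) →
      (T.rr u ≤ T.rr u' →
        LLt (T.item K idx u' (T.rr u' + 1) 1) (T.item K idx u (T.rr u + 1) 1)) →
      LLt (T.code K idx M u true) (T.code K idx M u' false) ∨
      LLt (T.code K idx M u' false) (T.code K idx M u false) ∧
        LLt (T.code K idx M u true) (T.code K idx M u' true) ∨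
      LLt (T.code K idx M u false) (T.code K idx M u' false) ∧
        LLt (T.code K idx M u' true) (T.code K idx M u true) := by
    intro u u' h1 h2 h3 h4 hk p1 p2 p3
    have L := G.code_lt K u
    have L' := G.code_lt K u'
    simp only [code] at L L' ⊢
    by_cases cu : T.acol K u = 0
    · obtain ⟨a1, a2⟩ := ends_L K h1 h2 cu
      by_cases cu' : T.acol K u' = 0
      · obtain ⟨a3, a4⟩ := ends_L K h3 h4 cu'
        rw [a1, a2, a3, a4] at *
        rw [key, key, if_pos cu, if_pos cu'] at hk
        exact Or.inr (Or.inl ⟨p2 (by omega), p1⟩)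
      · obtain ⟨a3, a4⟩ := ends_R K h3 h4 cu'
        rw [a2, a3] at *
        exact Or.inl p1
    · obtain ⟨a1, a2⟩ := ends_R K h1 h2 cu
      by_cases cu' : T.acol K u' = 0
      · rw [key, key, if_neg cu, if_pos cu'] at hk
        omega
      · obtain ⟨a3, a4⟩ := ends_R K h3 h4 cu'
        rw [a1, a2, a3, a4] at *
        rw [key, key, if_neg cu, if_neg cu'] at hk
        exact Or.inr (Or.inr ⟨p1, p3 (by omega)⟩)
  have hi : idx (T.anc n e) ≠ idx (T.anc n' e) := fun h => hee (G.inj h)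
  have L := G.code_lt K n
  have L' := G.code_lt K n'
  have tri : (T.skey K (T.anc n e) < T.skey K (T.anc n' e) ∨
      T.skey K (T.anc n e) = T.skey K (T.anc n' e) ∧ idx (T.anc n e) < idx (T.anc n' e)) ∨
      (T.skey K (T.anc n' e) < T.skey K (T.anc n e) ∨
      T.skey K (T.anc n' e) = T.skey K (T.anc n e) ∧ idx (T.anc n' e) < idx (T.anc n e)) := by
    omega
  rcases tri with hs | hs
  · obtain ⟨q1, q2, q3, q4⟩ := G.noncross_aux K hl hl' he he' hee hej (by omega) (by omega) hs
    rcases fin n n' hM hl hM' hl' q1 q2 q3 q4 with h | ⟨h, -⟩ | ⟨-, h⟩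
    · exact h.asymm l2
    · exact h.asymm l1
    · exact h.asymm l3
  · obtain ⟨q1, q2, q3, q4⟩ := G.noncross_aux K hl' hl he' he hee.symm
      (fun j hj => (hej j hj).symm) (by omega) (by omega) hs
    rcases fin n' n hM' hl' hM hl q1 q2 q3 q4 with h | ⟨-, h⟩ | ⟨h, -⟩
    · exact (L'.trans h).asymm l1
    · exact h.asymm l3
    · exact h.asymm l1

end NST

/-- A planar arc diagram of a graph whose vertices are either unmarked or of degree two and marked.
Every vertex `n` has an arc with ends at the positions `c n false < c n true` of a line, attached
to the unmarked vertices `base n b`: a loop if `n` is unmarked, and an arc between its two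
neighbours if `n` is marked. Arcs do not cross, and an end may only separate two ends at a
vertex `w` if it is attached to a vertex of larger depth. -/
structure ArcDiag {N : Type*} (H : SimpleGraph N) (M : N → Prop) where
  c : N → Bool → Lex (ℕ → ℤ)
  base : N → Bool → N
  dep : N → ℕ
  inj : ∀ n n' b b', c n b = c n' b' → n = n' ∧ b = b'
  lt : ∀ n, c n false < c n true
  noncross : ∀ n n', c n false < c n' false → c n' false < c n true → c n true < c n' true → False
  laminar : ∀ n n1 n2 b b1 b2, c n1 b1 < c n b → c n b < c n2 b2 → base n1 b1 = base n2 b2 →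
    base n b ≠ base n1 b1 → dep (base n1 b1) < dep (base n b)
  unm : ∀ n b, ¬ M (base n b)
  node : ∀ n b, ¬ M n → base n b = n
  mid : ∀ n b, M n → H.Adj n (base n b)
  mid_ne : ∀ n, M n → base n false ≠ base n true

/-- A planarity certificate on a subdivided graph with a normal spanning forest yields a planar arc
diagram: tree edges join neighbouring positions, and return edges run to the left or to the right of
the branch, according to their side. -/
theorem NST.Good.arcDiag {N : Type*} {H : SimpleGraph N} {A0 : N → Prop} {T : NST H A0} (K : VK H)
    {idx : N → ℕ} {M : N → Prop} (G : T.Good M idx) : Nonempty (ArcDiag H M) := by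
  have nodeb : ∀ n b, ¬ M n → T.base K M n b = n := by
    intro n b h
    rw [base, ends_node K h, bs, if_neg h]
  have midb : ∀ n, M n → (∀ b, H.Adj n (T.base K M n b)) ∧
      T.base K M n false ≠ T.base K M n true := by
    intro n h
    have hp := G.dep_pos h
    have pa := T.adj_parent hp
    by_cases hl : T.Lf n
    · have hne : T.anc n (T.dep n - 1) ≠ T.anc n (T.rr n) := by
        intro he
        have := hl.ret.1
        have h1 := congrArg T.dep he
        rw [T.dep_anc _ _ (by omega), T.dep_anc _ _ (by omega)] at h1
        omega
      have ha := hl.ret.2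
      by_cases hc : T.acol K n = 0
      · obtain ⟨e1, e2⟩ := ends_L K h hl hc
        have b1 : T.base K M n false = T.anc n (T.rr n) := by
          rw [base, e1, bs, if_pos h, Nat.add_sub_cancel]
        have b2 : T.base K M n true = T.anc n (T.dep n - 1) := by rw [base, e2, bs, if_pos h]
        rw [b1, b2]
        refine ⟨fun b => ?_, hne.symm⟩
        cases b
        · rw [b1]; exact ha
        · rw [b2]; exact pa
      · obtain ⟨e1, e2⟩ := ends_R K h hl hc
        have b1 : T.base K M n true = T.anc n (T.rr n) := by
          rw [base, e2, bs, if_pos h, Nat.add_sub_cancel]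
        have b2 : T.base K M n false = T.anc n (T.dep n - 1) := by rw [base, e1, bs, if_pos h]
        rw [b1, b2]
        refine ⟨fun b => ?_, hne⟩
        cases b
        · rw [b2]; exact pa
        · rw [b1]; exact ha
    · obtain ⟨y, h1, h2, e1, e2⟩ := ends_tree K G h hl
      have adj := T.adj_child h1 (by omega)
      rw [← h2, T.anc_dep] at adj
      have nM : ¬ M y := (G.bip _ _ adj).1 h
      have b1 : T.base K M n false = T.anc n (T.dep n - 1) := by rw [base, e1, bs, if_pos h]
      have b2 : T.base K M n true = y := by rw [base, e2, bs, if_neg nM]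
      rw [b1, b2]
      refine ⟨fun b => ?_, fun he => ?_⟩
      · cases b
        · rw [b1]; exact pa
        · rw [b2]; exact adj
      · have := congrArg T.dep he
        rw [T.dep_anc _ _ (by omega)] at this
        omega
  exact ⟨{
    c := fun n b => toLex (T.code K idx M n b)
    base := T.base K M
    dep := T.dep
    inj := fun n n' b b' h => G.code_inj K h
    lt := fun n => G.code_lt K n
    noncross := fun n n' h1 h2 h3 => G.noncross K n n' h1 h2 h3
    laminar := fun n n1 n2 b b1 b2 h1 h2 h3 h4 => G.laminar K (G.ends_Vd K n b) (G.ends_Vd K n1 b1)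
      (G.ends_Vd K n2 b2) h1 h2 h3 h4
    unm := fun n b => G.bs_not_M (G.ends_Vd K n b)
    node := nodeb
    mid := fun n b h => (midb n h).1 b
    mid_ne := fun n h => (midb n h).2 }⟩

/-! ### From arc diagrams to curves -/

namespace ArcDiag
variable {N : Type*} {H : SimpleGraph N} {M : N → Prop} (A : ArcDiag H M)

/-- Fat positions: the end `c n b` is replaced by a whole interval of real positions `z n b s`,
`0 < s < 1`, running in opposite directions at the two ends of an arc. -/
theorem exists_pos [Countable N] : ∃ z : N → Bool → ℝ → ℝ,
    (∀ n n' b b', A.c n b < A.c n' b' → ∀ s ∈ Ioo (0 : ℝ) 1, ∀ s' ∈ Ioo (0 : ℝ) 1,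
      z n b s < z n' b' s') ∧
    (∀ n s s', s < s' → z n false s < z n false s' ∧ z n true s' < z n true s) ∧
    (∀ n b, ∀ s ∈ Ioo (0 : ℝ) 1, z n b s ∈ Ioo (0 : ℝ) 1) := by
  let α := (range fun p : N × Bool => A.c p.1 p.2) ×ₗ Bool
  have : Nontrivial (Ioo (0 : ℝ) 1) :=
    ⟨⟨⟨1/2, by norm_num, by norm_num⟩, ⟨1/3, by norm_num, by norm_num⟩, by
      intro h; have := congrArg Subtype.val h; norm_num at this⟩⟩
  have : Countable (range fun p : N × Bool => A.c p.1 p.2) := (countable_range _).to_subtype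
  have : Countable α := inferInstanceAs (Countable (_ × Bool))
  obtain ⟨φ⟩ := Order.embedding_from_countable_to_dense α (Ioo (0 : ℝ) 1)
  let i : N → Bool → range fun p : N × Bool => A.c p.1 p.2 := fun n b => ⟨A.c n b, (n, b), rfl⟩
  let lo : N → Bool → ℝ := fun n b => φ (toLex (i n b, false))
  let hi : N → Bool → ℝ := fun n b => φ (toLex (i n b, true))
  have lh : ∀ n b, lo n b < hi n b := by
    intro n b
    refine Subtype.coe_lt_coe.2 (φ.lt_iff_lt.2 ?_)
    exact Prod.Lex.toLex_lt_toLex.2 (Or.inr ⟨rfl, Bool.false_lt_true⟩)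
  have hl : ∀ n n' b b', A.c n b < A.c n' b' → hi n b < lo n' b' := by
    intro n n' b b' h
    refine Subtype.coe_lt_coe.2 (φ.lt_iff_lt.2 ?_)
    exact Prod.Lex.toLex_lt_toLex.2 (Or.inl h)
  have b0 : ∀ n b, 0 < lo n b := fun n b => (φ (toLex (i n b, false))).2.1
  have b1 : ∀ n b, hi n b < 1 := fun n b => (φ (toLex (i n b, true))).2.2
  refine ⟨fun n b s => if b then hi n b - s * (hi n b - lo n b) else lo n b + s * (hi n b - lo n b),
    ?_, ?_, ?_⟩
  · have bd : ∀ n b, ∀ s ∈ Ioo (0 : ℝ) 1,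
      lo n b < (if b then hi n b - s * (hi n b - lo n b) else lo n b + s * (hi n b - lo n b)) ∧
      (if b then hi n b - s * (hi n b - lo n b) else lo n b + s * (hi n b - lo n b)) < hi n b := by
      intro n b s hs
      have := lh n b
      have h1 := mul_pos hs.1 (sub_pos.2 this)
      have h2 := mul_pos (sub_pos.2 hs.2) (sub_pos.2 this)
      cases b <;> simp only [if_true, Bool.false_eq_true, if_false] <;> constructor <;> linarith
    intro n n' b b' h s hs s' hs'
    exact ((bd n b s hs).2.trans (hl _ _ _ _ h)).trans (bd n' b' s' hs').1
  · intro n s s' h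
    simp only [if_true, Bool.false_eq_true, if_false]
    have h1 := mul_lt_mul_of_pos_right h (sub_pos.2 (lh n false))
    have h2 := mul_lt_mul_of_pos_right h (sub_pos.2 (lh n true))
    constructor <;> linarith
  · intro n b s hs
    have := lh n b
    have h1 := mul_pos hs.1 (sub_pos.2 this)
    have h2 := mul_pos (sub_pos.2 hs.2) (sub_pos.2 this)
    have := b0 n b
    have := b1 n b
    cases b <;> simp only [if_true, Bool.false_eq_true, if_false] <;> constructor <;> linarith

/-- The weight with which a stem at a vertex of depth `d` is bent towards that vertex at height
`y`: it vanishes up to height `1 / (d + 2)` and is `1` at height `1 / (d + 1)`. -/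
noncomputable def bend (d : ℕ) (y : ℝ) : ℝ :=
  max 0 ((y - 1 / (d + 2)) / (1 / (d + 1) - 1 / (d + 2)))

theorem bend_gap (d : ℕ) : (0 : ℝ) < 1 / (d + 1) - 1 / (d + 2) := by
  rw [sub_pos]; apply one_div_lt_one_div_of_lt <;> [positivity; linarith]

theorem bend_nonneg (d : ℕ) (y : ℝ) : 0 ≤ bend d y := le_max_left _ _

theorem bend_zero {d : ℕ} {y : ℝ} (h : y ≤ 1 / (d + 2)) : bend d y = 0 :=
  max_eq_left (div_nonpos_of_nonpos_of_nonneg (by linarith) (bend_gap d).le)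

theorem bend_top (d : ℕ) : bend d (1 / (d + 1)) = 1 := by
  rw [bend, div_self (bend_gap d).ne']; simp

theorem bend_le {d : ℕ} {y : ℝ} (h : y ≤ 1 / (d + 1)) : bend d y ≤ 1 :=
  max_le zero_le_one ((div_le_one (bend_gap d)).2 (by linarith))

theorem bend_lt {d : ℕ} {y : ℝ} (h : y < 1 / (d + 1)) : bend d y < 1 :=
  max_lt zero_lt_one ((div_lt_one (bend_gap d)).2 (by linarith))

theorem bend_cont (d : ℕ) : Continuous (bend d) := by
  unfold bend; fun_prop

/-- A half of an arc, parametrized by its height. -/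
noncomputable def leg (x z σ : ℝ) (d : ℕ) (y : ℝ) : ℝ × ℝ :=
  (z + (x - z) * bend d y + σ * max (-y) 0, y)

theorem leg_cont (x z σ : ℝ) (d : ℕ) : Continuous (leg x z σ d) := by
  have := bend_cont d
  unfold leg; fun_prop

/-- An arc diagram can be realized by curves: arcs are drawn as nested angular curves in the lower
half-plane, and above the line the positions attached to a vertex are joined to a point, the higher
the smaller the depth. Every arc is thickened to a one-parameter family of curves. -/
theorem hosts [Countable N] : ∃ (P : N → ℝ × ℝ) (host : N → ℝ → ℝ → ℝ × ℝ),
    P.Injective ∧ (∀ n, ∀ s ∈ Ioo (0 : ℝ) 1, Continuous (host n s)) ∧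
    (∀ n, ∀ s ∈ Ioo (0 : ℝ) 1, host n s 0 = P (A.base n false)) ∧
    (∀ n, ∀ s ∈ Ioo (0 : ℝ) 1, host n s 1 = P (A.base n true)) ∧
    (∀ n, ∀ s ∈ Ioo (0 : ℝ) 1, ∀ t ∈ Icc (0 : ℝ) 1, ‖host n s t‖ ≤ 3) ∧
    (∀ n n', ∀ s ∈ Ioo (0 : ℝ) 1, ∀ s' ∈ Ioo (0 : ℝ) 1, ∀ t ∈ Ioo (0 : ℝ) 1, ∀ t' ∈ Icc (0 : ℝ) 1,
      host n s t = host n' s' t' → n = n' ∧ s = s' ∧ t = t') := by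
  obtain ⟨z, z1, z2, z3⟩ := A.exists_pos
  have hhalf : (1 / 2 : ℝ) ∈ Ioo (0 : ℝ) 1 := by constructor <;> norm_num
  have zinj : ∀ n n' b b', ∀ s ∈ Ioo (0 : ℝ) 1, ∀ s' ∈ Ioo (0 : ℝ) 1, z n b s = z n' b' s' →
      n = n' ∧ b = b' ∧ s = s' := by
    intro n n' b b' s hs s' hs' h
    rcases lt_trichotomy (A.c n b) (A.c n' b') with e | e | e
    · exact absurd h (z1 _ _ _ _ e s hs s' hs').ne
    · obtain ⟨rfl, rfl⟩ := A.inj _ _ _ _ e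
      refine ⟨rfl, rfl, ?_⟩
      rcases lt_trichotomy s s' with f | f | f
      · have := z2 n s s' f
        cases b
        · exact absurd h this.1.ne
        · exact absurd h this.2.ne'
      · exact f
      · have := z2 n s' s f
        cases b
        · exact absurd h this.1.ne'
        · exact absurd h this.2.ne
    · exact absurd h (z1 _ _ _ _ e s' hs' s hs).ne'
  have zc : ∀ n n' b b', ∀ s ∈ Ioo (0 : ℝ) 1, ∀ s' ∈ Ioo (0 : ℝ) 1, z n b s < z n' b' s' →
      (n = n' ∧ b = b') ∨ A.c n b < A.c n' b' := by
    intro n n' b b' s hs s' hs' h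
    rcases lt_trichotomy (A.c n b) (A.c n' b') with e | e | e
    · exact Or.inr e
    · exact Or.inl (A.inj _ _ _ _ e)
    · exact absurd h (z1 _ _ _ _ e s' hs' s hs).asymm
  let x : N → ℝ := fun v => z v false (1 / 2)
  let h : N → ℝ := fun v => 1 / ((A.dep v : ℝ) + 1)
  have hpos : ∀ v, 0 < h v := fun v => by positivity
  have hle1 : ∀ v, h v ≤ 1 := fun v => by
    rw [div_le_one (by positivity)]; linarith [(Nat.cast_nonneg (A.dep v) : (0 : ℝ) ≤ _)]
  -- comparison of a position with the abscissa of a vertex that is at least as deep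
  have xlt : ∀ n n' b b', ∀ s ∈ Ioo (0 : ℝ) 1, ∀ s' ∈ Ioo (0 : ℝ) 1, z n b s < z n' b' s' →
      A.base n b ≠ A.base n' b' → A.dep (A.base n' b') ≤ A.dep (A.base n b) →
      x (A.base n b) < z n' b' s' := by
    intro n n' b b' s hs s' hs' hz hne hd
    by_contra hc
    have hb := A.node (A.base n b) false (A.unm n b)
    rcases (not_lt.1 hc).eq_or_lt with e | e
    · obtain ⟨e1, e2, -⟩ := zinj _ _ _ _ _ hs' _ hhalf e
      apply hne
      rw [e1, e2, hb]
    · rcases zc _ _ _ _ _ hs' _ hhalf e with ⟨e1, e2⟩ | e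
      · apply hne; rw [e1, e2, hb]
      rcases zc _ _ _ _ _ hs _ hs' hz with ⟨e1, e2⟩ | e'
      · apply hne; rw [e1, e2]
      have := A.laminar _ _ _ _ _ _ e' e hb.symm hne.symm
      omega
  have ltx : ∀ n n' b b', ∀ s ∈ Ioo (0 : ℝ) 1, ∀ s' ∈ Ioo (0 : ℝ) 1, z n b s < z n' b' s' →
      A.base n b ≠ A.base n' b' → A.dep (A.base n b) ≤ A.dep (A.base n' b') →
      z n b s < x (A.base n' b') := by
    intro n n' b b' s hs s' hs' hz hne hd
    by_contra hc
    have hb := A.node (A.base n' b') false (A.unm n' b')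
    rcases (not_lt.1 hc).eq_or_lt with e | e
    · obtain ⟨e1, e2, -⟩ := zinj _ _ _ _ _ hhalf _ hs e
      apply hne
      rw [← e1, ← e2, hb]
    · rcases zc _ _ _ _ _ hhalf _ hs e with ⟨e1, e2⟩ | e
      · apply hne; rw [← e1, ← e2, hb]
      rcases zc _ _ _ _ _ hs _ hs' hz with ⟨e1, e2⟩ | e'
      · apply hne; rw [e1, e2]
      have := A.laminar _ _ _ _ _ _ e e' hb (by rw [hb]; exact hne)
      rw [hb] at this
      omega
  have conv : ∀ p q r θ : ℝ, p < r → q < r → 0 ≤ θ → θ ≤ 1 → p + (q - p) * θ < r := by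
    intro p q r θ h1 h2 h3 h4
    nlinarith [mul_nonneg h3 (sub_nonneg.2 h2.le), mul_nonneg (sub_nonneg.2 h4) (sub_nonneg.2 h1.le)]
  have conv' : ∀ p q r θ : ℝ, r < p → r < q → 0 ≤ θ → θ ≤ 1 → r < p + (q - p) * θ := by
    intro p q r θ h1 h2 h3 h4
    nlinarith [mul_nonneg h3 (sub_nonneg.2 h2.le), mul_nonneg (sub_nonneg.2 h4) (sub_nonneg.2 h1.le)]
  have htop : ∀ {v w : N}, A.dep v < A.dep w → h w ≤ 1 / ((A.dep v : ℝ) + 2) := by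
    intro v w hd
    apply one_div_le_one_div_of_le (by positivity)
    have : (A.dep v : ℝ) + 1 ≤ A.dep w := by exact_mod_cast hd
    linarith
  -- stems do not cross
  have stem : ∀ n n' b b', ∀ s ∈ Ioo (0 : ℝ) 1, ∀ s' ∈ Ioo (0 : ℝ) 1, z n b s < z n' b' s' →
      ∀ y, y < h (A.base n b) → y ≤ h (A.base n' b') →
      z n b s + (x (A.base n b) - z n b s) * bend (A.dep (A.base n b)) y <
      z n' b' s' + (x (A.base n' b') - z n' b' s') * bend (A.dep (A.base n' b')) y := by
    intro n n' b b' s hs s' hs' hz y hy hy'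
    by_cases hb : A.base n b = A.base n' b'
    · rw [← hb]
      have := bend_lt hy
      nlinarith
    have t0 := bend_nonneg (A.dep (A.base n b)) y
    have t1 := bend_le hy.le
    have t0' := bend_nonneg (A.dep (A.base n' b')) y
    have t1' := bend_le hy'
    rcases lt_trichotomy (A.dep (A.base n b)) (A.dep (A.base n' b')) with e | e | e
    · rw [bend_zero (hy'.trans (htop e))]
      have := ltx _ _ _ _ _ hs _ hs' hz hb e.le
      have := conv' _ _ _ _ hz this t0' t1'
      linarith
    · have a1 := ltx _ _ _ _ _ hs _ hs' hz hb e.le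
      have a2 := xlt _ _ _ _ _ hs _ hs' hz hb e.ge
      have a3 : x (A.base n b) < x (A.base n' b') := by
        have hb' := A.node (A.base n' b') false (A.unm n' b')
        refine xlt n (A.base n' b') b false _ hs _ hhalf a1 ?_ ?_
        · rw [hb']; exact hb
        · rw [hb', e]
      have c1 := conv _ _ _ _ hz a2 t0 t1
      have c2 := conv _ _ _ _ a1 a3 t0 t1
      exact conv' _ _ _ _ c1 c2 t0' t1'
    · rw [bend_zero (hy.le.trans (htop e))]
      have := xlt _ _ _ _ _ hs _ hs' hz hb e.le
      have := conv _ _ _ _ hz this t0 t1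
      linarith
  have LR : ∀ n, ∀ s ∈ Ioo (0 : ℝ) 1, z n false s < z n true s := fun n s hs =>
    z1 _ _ _ _ (A.lt n) s hs s hs
  have nest : ∀ n n', ∀ s ∈ Ioo (0 : ℝ) 1, ∀ s' ∈ Ioo (0 : ℝ) 1, (n = n' ∧ s = s') ∨
      z n true s < z n' false s' ∨ z n' true s' < z n false s ∨
      (z n false s < z n' false s' ∧ z n' true s' < z n true s) ∨
      (z n' false s' < z n false s ∧ z n true s < z n' true s') := by
    intro n n' s hs s' hs'
    by_cases hn : n = n'
    · subst hn
      rcases lt_trichotomy s s' with e | e | e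
      · exact Or.inr (Or.inr (Or.inr (Or.inl (z2 n _ _ e))))
      · exact Or.inl ⟨rfl, e⟩
      · exact Or.inr (Or.inr (Or.inr (Or.inr (z2 n _ _ e))))
    have cmp : ∀ b b', A.c n b < A.c n' b' ∨ A.c n' b' < A.c n b := fun b b' =>
      lt_or_gt_of_ne fun e => hn (A.inj _ _ _ _ e).1
    rcases cmp true false with e | e
    · exact Or.inr (Or.inl (z1 _ _ _ _ e _ hs _ hs'))
    rcases cmp false true with f | f
    swap
    · exact Or.inr (Or.inr (Or.inl (z1 _ _ _ _ f _ hs' _ hs)))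
    rcases cmp false false with i | i <;> rcases cmp true true with j | j
    · exact (A.noncross n n' i e j).elim
    · exact Or.inr (Or.inr (Or.inr (Or.inl ⟨z1 _ _ _ _ i _ hs _ hs', z1 _ _ _ _ j _ hs' _ hs⟩)))
    · exact Or.inr (Or.inr (Or.inr (Or.inr ⟨z1 _ _ _ _ i _ hs' _ hs, z1 _ _ _ _ j _ hs _ hs'⟩)))
    · exact (A.noncross n' n i f j).elim
  let a : N → ℝ → ℝ := fun n s => (z n true s - z n false s) / 2
  let σ : Bool → ℝ := fun b => if b then -1 else 1
  let lg : N → ℝ → Bool → ℝ → ℝ × ℝ := fun n s b y =>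
    leg (x (A.base n b)) (z n b s) (σ b) (A.dep (A.base n b)) y
  have uniq : ∀ n n', ∀ s ∈ Ioo (0 : ℝ) 1, ∀ s' ∈ Ioo (0 : ℝ) 1, ∀ b b' y y',
      -a n s ≤ y → y < h (A.base n b) → -a n' s' ≤ y' → y' ≤ h (A.base n' b') →
      lg n s b y = lg n' s' b' y' → n = n' ∧ s = s' ∧ y = y' ∧ (b = b' ∨ y = -a n s) := by
    intro n n' s hs s' hs' b b' y y' h1 h2 h3 h4 he
    obtain rfl : y = y' := congrArg Prod.snd he
    have he1 := congrArg Prod.fst he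
    simp only [lg, leg] at he1
    rcases le_or_gt 0 y with hy | hy
    · rw [max_eq_right (by linarith)] at he1
      simp only [mul_zero, add_zero] at he1
      rcases lt_trichotomy (z n b s) (z n' b' s') with e | e | e
      · exact absurd he1 (stem _ _ _ _ _ hs _ hs' e y h2 h4).ne
      · obtain ⟨e1, e2, e3⟩ := zinj _ _ _ _ _ hs _ hs' e
        exact ⟨e1, e3, rfl, Or.inl e2⟩
      · rcases h4.eq_or_lt with h5 | h5
        · by_cases hb : A.base n b = A.base n' b'
          · rw [← hb] at h5; exact absurd h2 h5.not_lt
          · -- at the top of the second stem its abscissa is that of the vertex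
            exfalso
            have hd : A.dep (A.base n b) < A.dep (A.base n' b') := by
              by_contra hc
              have : h (A.base n b) ≤ h (A.base n' b') := by
                apply one_div_le_one_div_of_le (by positivity)
                have : (A.dep (A.base n' b') : ℝ) ≤ A.dep (A.base n b) := by
                  exact_mod_cast not_lt.1 hc
                linarith
              linarith
            have g1 := xlt _ _ _ _ _ hs' _ hs e (Ne.symm hb) hd.le
            rw [bend_zero (h4.trans (htop hd)), h5, bend_top] at he1
            linarith
        · exact absurd he1 (stem _ _ _ _ _ hs' _ hs e y h5 h2.le).ne'
    · have bz : ∀ d : ℕ, bend d y = 0 := fun d => bend_zero (hy.le.trans (by positivity))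
      rw [max_eq_left (by linarith), bz, bz] at he1
      have l := LR n s hs
      have l' := LR n' s' hs'
      simp only [a] at h1 h3
      rcases nest n n' s hs s' hs' with ⟨e1, e2⟩ | e | e | e | e
      · subst e1 e2
        refine ⟨rfl, rfl, rfl, ?_⟩
        cases b <;> cases b' <;> simp [σ, a] at he1 ⊢ <;> linarith
      all_goals exfalso; cases b <;> cases b' <;> simp [σ] at he1 <;> linarith
  let host : N → ℝ → ℝ → ℝ × ℝ := fun n s t =>
    if t ≤ 1 / 2 then lg n s false (h (A.base n false) - 2 * t * (h (A.base n false) + a n s))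
    else lg n s true (-a n s + (2 * t - 1) * (h (A.base n true) + a n s))
  have apos : ∀ n, ∀ s ∈ Ioo (0 : ℝ) 1, 0 < a n s := fun n s hs => by
    have := LR n s hs; simp only [a]; linarith
  have hostcase : ∀ n, ∀ s ∈ Ioo (0 : ℝ) 1, ∀ t ∈ Icc (0 : ℝ) 1, ∃ b y, host n s t = lg n s b y ∧
      -a n s ≤ y ∧ y ≤ h (A.base n b) ∧ (t ∈ Ioo (0 : ℝ) 1 → y < h (A.base n b)) ∧
      t * (2 * (h (A.base n b) + a n s)) = if b then (h (A.base n b) + a n s) + (y + a n s)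
        else h (A.base n b) - y := by
    intro n s hs t ht
    have hp := apos n s hs
    by_cases htt : t ≤ 1 / 2
    · have hh := hpos (A.base n false)
      refine ⟨false, _, by simp only [host]; rw [if_pos htt], ?_, ?_, fun ht => ?_, ?_⟩
      · nlinarith
      · nlinarith [ht.1]
      · nlinarith [ht.1]
      · simp; ring
    · have hh := hpos (A.base n true)
      refine ⟨true, _, by simp only [host]; rw [if_neg htt], ?_, ?_, fun ht => ?_, ?_⟩
      · nlinarith
      · nlinarith [ht.2]
      · nlinarith [ht.2]
      · simp; ring
  have lgtop : ∀ n s b, lg n s b (h (A.base n b)) = (x (A.base n b), h (A.base n b)) := by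
    intro n s b
    simp only [lg, leg]
    rw [bend_top, max_eq_right (by linarith [hpos (A.base n b)])]
    simp
  refine ⟨fun v => (x v, h v), host, ?_, ?_, ?_, ?_, ?_, ?_⟩
  · intro v w hvw
    exact (zinj _ _ _ _ _ hhalf _ hhalf (congrArg Prod.fst hvw)).1
  · intro n s hs
    have hp := apos n s hs
    have lc : ∀ b, Continuous (lg n s b) := fun b => leg_cont _ _ _ _
    refine Continuous.if_le ?_ ?_ continuous_id continuous_const ?_
    · exact (lc false).comp (by fun_prop)
    · exact (lc true).comp (by fun_prop)
    · intro t ht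
      have ht : t = 1 / 2 := ht
      subst ht
      have e1 : h (A.base n false) - 2 * (1 / 2) * (h (A.base n false) + a n s) = -a n s := by ring
      have e2 : -a n s + (2 * (1 / 2) - 1) * (h (A.base n true) + a n s) = -a n s := by ring
      rw [e1, e2]
      have bz : ∀ d : ℕ, bend d (-a n s) = 0 := fun d =>
        bend_zero ((by linarith : -a n s ≤ 0).trans (by positivity))
      simp only [lg, leg, bz, neg_neg, max_eq_left hp.le, σ]
      refine Prod.ext ?_ rfl
      simp [a]; ring
  · intro n s hs
    simp only [host]
    rw [if_pos (by norm_num), mul_zero, zero_mul, sub_zero, lgtop]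
  · intro n s hs
    simp only [host]
    rw [if_neg (by norm_num)]
    rw [show -a n s + (2 * 1 - 1) * (h (A.base n true) + a n s) = h (A.base n true) by ring, lgtop]
  · intro n s hs t ht
    obtain ⟨b, y, h1, h2, h3, -⟩ := hostcase n s hs t ht
    have q1 := z3 n false s hs
    have q2 := z3 n true s hs
    have q3 := hle1 (A.base n b)
    have q4 := z3 n b s hs
    have q5 : x (A.base n b) ∈ Ioo (0 : ℝ) 1 := z3 _ _ _ hhalf
    simp only [a] at h2
    rw [h1, Prod.norm_def, max_le_iff, Real.norm_eq_abs, Real.norm_eq_abs, abs_le, abs_le]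
    have m1 : max (-y) 0 ≤ 1 := max_le (by linarith [q1.1, q2.2]) zero_le_one
    have m0 : 0 ≤ max (-y) 0 := le_max_right _ _
    have c1 := conv (z n b s) (x (A.base n b)) 1 _ q4.2 q5.2 (bend_nonneg _ y) (bend_le h3)
    have c2 := conv' (z n b s) (x (A.base n b)) 0 _ q4.1 q5.1 (bend_nonneg _ y) (bend_le h3)
    have hs : σ b * max (-y) 0 ≤ 1 ∧ -1 ≤ σ b * max (-y) 0 := by
      cases b <;> simp only [σ, Bool.false_eq_true, if_true, if_false] <;> constructor <;> linarith
    simp only [lg, leg]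
    refine ⟨⟨?_, ?_⟩, ?_, ?_⟩ <;> linarith [q1.1, q2.2]
  · intro n n' s hs s' hs' t ht t' ht' he
    obtain ⟨b, y, h1, h2, h3, h4, h5⟩ := hostcase n s hs t (Ioo_subset_Icc_self ht)
    obtain ⟨b', y', h1', h2', h3', -, h5'⟩ := hostcase n' s' hs' t' ht'
    rw [h1, h1'] at he
    obtain ⟨rfl, rfl, rfl, hb⟩ := uniq _ _ _ hs _ hs' _ _ _ _ h2 (h4 ht) h2' h3' he
    refine ⟨rfl, rfl, ?_⟩
    have hp := apos n s hs
    rcases eq_or_ne b b' with rfl | hbb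
    · have := hpos (A.base n b)
      exact mul_right_cancel₀ (by linarith) (h5.trans h5'.symm)
    · have hy := hb.resolve_left hbb
      have half : ∀ b, ∀ t : ℝ, t * (2 * (h (A.base n b) + a n s)) =
          (if b then (h (A.base n b) + a n s) + (y + a n s) else h (A.base n b) - y) →
          t = 1 / 2 := by
        intro b t ht
        have := hpos (A.base n b)
        refine mul_right_cancel₀ (b := 2 * (h (A.base n b) + a n s)) (by linarith) (ht.trans ?_)
        split_ifs <;> rw [hy] <;> ring
      rw [half b t h5, half b' t' h5']

end ArcDiag

/-! ### Layout of the vertices of degree at most two -/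

/-- In a graph of maximal degree at most two the vertices of every component can be numbered. -/
theorem exists_idx {V : Type*} (F : SimpleGraph V)
    (h2 : ∀ v a b c, F.Adj v a → F.Adj v b → F.Adj v c → a = b ∨ a = c ∨ b = c) :
    ∃ idx : V → ℕ, ∀ u v, F.Reachable u v → idx u = idx v → u = v := by
  classical
  have fin : ∀ v, {u | F.Adj v u}.Finite := by
    intro v
    by_contra hc
    obtain ⟨t, ht, hcard⟩ := Set.Infinite.exists_subset_card_eq hc 3
    obtain ⟨a, b, c, hab, hac, hbc, rfl⟩ := Finset.card_eq_three.1 hcard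
    have := h2 v a b c (ht (by simp)) (ht (by simp)) (ht (by simp))
    tauto
  have cnt : ∀ v, {w | F.Reachable v w}.Countable := by
    intro v
    let S : ℕ → Set V := fun n => Nat.rec {v} (fun _ s => ⋃ u ∈ s, {w | F.Adj u w}) n
    have hS : ∀ n, (S n).Countable := by
      intro n
      induction n with
      | zero => exact countable_singleton v
      | succ n ih => exact ih.biUnion fun u _ => (fin u).countable
    refine (countable_iUnion hS).mono ?_
    intro w (hw : F.Reachable v w)
    rw [SimpleGraph.reachable_iff_reflTransGen] at hw
    induction hw with
    | refl => exact mem_iUnion.2 ⟨0, rfl⟩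
    | tail _ hbc ih =>
      obtain ⟨n, hn⟩ := mem_iUnion.1 ih
      exact mem_iUnion.2 ⟨n + 1, mem_biUnion hn hbc⟩
  have : ∀ c : F.ConnectedComponent, ∃ f : V → ℕ, InjOn f {w | F.connectedComponentMk w = c} := by
    intro c
    induction c using SimpleGraph.ConnectedComponent.ind with
    | _ v =>
      refine countable_iff_exists_injOn.1 ((cnt v).mono fun w hw => ?_)
      exact (SimpleGraph.ConnectedComponent.eq.1 hw).symm
  choose f hf using this
  refine ⟨fun v => f (F.connectedComponentMk v) v, fun u v huv he => ?_⟩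
  have h1 := SimpleGraph.ConnectedComponent.eq.2 huv
  refine hf (F.connectedComponentMk v) h1 rfl ?_
  simpa only [h1] using he

/-- Linear (or cyclic) arrangement of the part of `G` outside `B`, where all degrees are at most
two. Each component is represented by a root `ρ v` and laid out on the interval `[0, 1]` by `τ`;
the vertices of `B` at which the component leaves on the left and on the right are recorded by
`lo` and `hi`. A cycle (`cyc`) has its root at `0`, which is then identified with `1`. -/
structure Layout {V : Type*} (G : SimpleGraph V) (B : Set V) where
  ρ : V → V
  τ : V → ℝ
  lo : V → V → Prop
  hi : V → V → Prop
  cyc : V → Prop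
  ρ_mem : ∀ v ∉ B, ρ v ∉ B
  ρ_reach : ∀ v ∉ B, Relation.ReflTransGen (fun a b => G.Adj a b ∧ a ∉ B ∧ b ∉ B) (ρ v) v
  ρ_adj : ∀ u v, G.Adj u v → u ∉ B → v ∉ B → ρ u = ρ v
  τ_mem : ∀ v ∉ B, τ v ∈ Ico (0 : ℝ) 1
  τ_zero : ∀ v ∉ B, τ v = 0 → cyc (ρ v) ∧ v = ρ v
  τ_inj : ∀ u ∉ B, ∀ v ∉ B, ρ u = ρ v → τ u = τ v → u = v
  cyc_root : ∀ c, cyc c → ρ c = c ∧ τ c = 0 ∧ c ∉ B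
  cyc_lo : ∀ c b, cyc c → ¬ lo c b
  cyc_hi : ∀ c b, cyc c → ¬ hi c b
  lo_unique : ∀ c b b', lo c b → lo c b' → b = b'
  hi_unique : ∀ c b b', hi c b → hi c b' → b = b'
  lo_spec : ∀ c b, lo c b → b ∈ B ∧ ∃ v ∉ B, ρ v = c ∧ G.Adj v b
  hi_spec : ∀ c b, hi c b → b ∈ B ∧ ∃ v ∉ B, ρ v = c ∧ G.Adj v b
  edge : ∀ a b, G.Adj a b → a ∉ B ∨ b ∉ B → ∃ (c u w : V) (α β : ℝ), s(a, b) = s(u, w) ∧ α < β ∧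
    c ∉ B ∧ ρ c = c ∧ (u ∉ B ∧ ρ u = c ∧ τ u = α ∨ u ∈ B ∧ α = 0 ∧ lo c u) ∧
    (w ∉ B ∧ ρ w = c ∧ (τ w = β ∨ β = 1 ∧ w = c ∧ cyc c) ∨ w ∈ B ∧ β = 1 ∧ hi c w) ∧
    ∀ v ∉ B, ρ v = c → τ v ∉ Ioo α β

/-- Outside `B` all degrees are at most two, so every component there is a path or a cycle. -/
theorem Layout.exists {V : Type*} (G : SimpleGraph V) (B : Set V)
    (h2 : ∀ v ∉ B, ∀ a b c, G.Adj v a → G.Adj v b → G.Adj v c → a = b ∨ a = c ∨ b = c) :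
    Nonempty (Layout G B) := by
  classical
  let F : SimpleGraph V :=
    { Adj := fun a b => G.Adj a b ∧ a ∉ B ∧ b ∉ B
      symm := ⟨fun a b h => ⟨h.1.symm, h.2.2, h.2.1⟩⟩
      loopless := ⟨fun a h => G.loopless.irrefl a h.1⟩ }
  obtain ⟨idx, hidx⟩ := exists_idx F fun v a b c ha hb hc => h2 v ha.2.1 a b c ha.1 hb.1 hc.1
  obtain ⟨T⟩ := NST.exists F idx hidx (fun _ => True) (fun v => ⟨v, trivial, SimpleGraph.Reachable.rfl⟩)
  have ancB : ∀ v ∉ B, ∀ k ≤ T.dep v, T.anc v k ∉ B := by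
    intro v hv k hk
    rcases hk.eq_or_lt with e | e
    · rw [e, T.anc_dep]; exact hv
    · exact (T.adj_anc v k e).2.1
  let ρ : V → V := fun v => T.anc v 0
  have dρ : ∀ v, T.dep (ρ v) = 0 := fun v => T.dep_anc v 0 (Nat.zero_le _)
  have ρρ : ∀ v, ρ (ρ v) = ρ v := fun v => T.anc_anc v 0 0 le_rfl (Nat.zero_le _)
  have ρanc : ∀ v k, k ≤ T.dep v → ρ (T.anc v k) = ρ v := fun v k hk =>
    T.anc_anc v k 0 (Nat.zero_le _) hk
  have ρeq : ∀ v, T.dep v = 0 → ρ v = v := fun v h => by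
    have := T.anc_dep v; rwa [h] at this
  have ρadj : ∀ u v, F.Adj u v → ρ u = ρ v := by
    intro u v h
    rcases T.cmp u v h with ⟨h1, h2⟩ | ⟨h1, h2⟩
    · rw [← ρanc v _ h1.le, h2]
    · rw [← ρanc u _ h1.le, h2]
  -- a chosen neighbour of each vertex, preferably a child
  have exR : ∀ v, ∃ r, ((∃ u, F.Adj v u ∧ T.dep u = 1) → F.Adj v r ∧ T.dep r = 1) ∧
      ((∃ u, G.Adj v u) → G.Adj v r) := by
    intro v
    by_cases h1 : ∃ u, F.Adj v u ∧ T.dep u = 1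
    · obtain ⟨u, hu⟩ := h1
      exact ⟨u, fun _ => hu, fun _ => hu.1.1⟩
    · by_cases h3 : ∃ u, G.Adj v u
      · obtain ⟨u, hu⟩ := h3
        exact ⟨u, fun h => absurd h h1, fun _ => hu⟩
      · exact ⟨v, fun h => absurd h h1, fun h => absurd h h3⟩
  choose R R1 R2 using exR
  let f : V → ℤ := fun v => if T.anc v 1 = R (ρ v) then T.dep v else -T.dep v
  have fpos : ∀ v, 0 < f v ↔ 0 < T.dep v ∧ T.anc v 1 = R (ρ v) := by
    intro v; simp only [f]; split_ifs with h <;> simp [h]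
  have fneg : ∀ v, f v < 0 ↔ 0 < T.dep v ∧ T.anc v 1 ≠ R (ρ v) := by
    intro v; simp only [f]; split_ifs with h <;> simp [h]
  have fzero : ∀ v, f v = 0 ↔ T.dep v = 0 := by
    intro v; simp only [f]; split_ifs with h <;> simp
  have fabs : ∀ v, f v = T.dep v ∨ f v = -T.dep v := by
    intro v; simp only [f]; split_ifs <;> simp
  have adj1 : ∀ v, 0 < T.dep v → F.Adj (ρ v) (T.anc v 1) := fun v hv => T.adj_anc v 0 hv
  -- below a child of the root the tree is a path
  have path : ∀ u v, u ∉ B → v ∉ B → ∀ k, 1 ≤ k → k ≤ T.dep u → k ≤ T.dep v →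
      T.anc u 1 = T.anc v 1 → T.anc u k = T.anc v k := by
    intro u v hu hv k hk
    induction k, hk using Nat.le_induction with
    | base => exact fun _ _ h => h
    | succ k hk ih =>
      intro h3 h4 h
      have e := ih (by omega) (by omega) h
      have a1 := T.adj_anc u k (by omega)
      have a2 := T.adj_anc v k (by omega)
      have a3 := T.adj_anc u (k - 1) (by omega)
      rw [show k - 1 + 1 = k by omega] at a3
      rw [← e] at a2
      have d1 := T.dep_anc u (k + 1) h3
      have d2 := T.dep_anc v (k + 1) h4
      have d3 := T.dep_anc u (k - 1) (by omega)
      rcases h2 _ a1.2.1 _ _ _ a1.1 a2.1 a3.1.symm with h | h | h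
      · exact h
      · rw [h] at d1; omega
      · rw [h] at d2; omega
  have branch : ∀ u v, u ∉ B → v ∉ B → ρ u = ρ v → (0 < f u ∧ 0 < f v ∨ f u < 0 ∧ f v < 0) →
      T.anc u 1 = T.anc v 1 := by
    intro u v hu hv hr h
    rcases h with ⟨h, h'⟩ | ⟨h, h'⟩
    · rw [fpos] at h h'
      rw [h.2, h'.2, hr]
    · rw [fneg] at h h'
      have a1 := adj1 u h.1
      have a2 := adj1 v h'.1
      rw [← hr] at a2
      have a3 := R2 (ρ u) ⟨_, a1.1⟩
      rcases h2 _ a1.2.1 _ _ _ a1.1 a2.1 a3 with e | e | e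
      · exact e
      · exact absurd e h.2
      · exact absurd (hr ▸ e) h'.2
  have below : ∀ u v, u ∉ B → v ∉ B → ρ u = ρ v → (0 < f u ∧ 0 < f v ∨ f u < 0 ∧ f v < 0) →
      T.dep u ≤ T.dep v → T.anc v (T.dep u) = u := by
    intro u v hu hv hr h hd
    have hp : 0 < T.dep u := by
      rcases h with h | h
      · exact ((fpos u).1 h.1).1
      · exact ((fneg u).1 h.1).1
    rw [← path u v hu hv (T.dep u) hp le_rfl hd (branch u v hu hv hr h), T.anc_dep]
  have finj : ∀ u v, u ∉ B → v ∉ B → ρ u = ρ v → f u = f v → u = v := by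
    intro u v hu hv hr h
    have hd : T.dep u = T.dep v := by
      rcases fabs u with e | e <;> rcases fabs v with e' | e' <;> omega
    rcases lt_trichotomy (f u) 0 with e | e | e
    · rw [← below u v hu hv hr (Or.inr ⟨e, h ▸ e⟩) hd.le, hd, T.anc_dep]
    · rw [← ρeq u ((fzero u).1 e), ← ρeq v ((fzero v).1 (h ▸ e)), hr]
    · rw [← below u v hu hv hr (Or.inl ⟨e, h ▸ e⟩) hd.le, hd, T.anc_dep]
  have tn : ∀ v ∉ B, ∀ a b c, G.Adj v a → G.Adj v b → G.Adj v c → a ≠ b → a ≠ c → b ≠ c → False := by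
    intro v hv a b c h3 h4 h5 h6 h7 h8
    rcases h2 v hv a b c h3 h4 h5 with h | h | h <;> contradiction
  have nd : ∀ {a b : V}, T.dep a ≠ T.dep b → a ≠ b := fun h e => h (congrArg _ e)
  have nB : ∀ {a b : V}, a ∉ B → b ∈ B → a ≠ b := fun h h' e => h (e ▸ h')
  have par : ∀ v ∉ B, 0 < T.dep v → G.Adj v (T.anc v (T.dep v - 1)) ∧ T.anc v (T.dep v - 1) ∉ B ∧
      T.dep (T.anc v (T.dep v - 1)) = T.dep v - 1 := fun v hv h =>
    ⟨(T.adj_parent h).1, (T.adj_parent h).2.2, T.dep_anc _ _ (by omega)⟩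
  have chi : ∀ v u, T.anc u (T.dep v) = v → T.dep v < T.dep u →
      G.Adj v (T.anc u (T.dep v + 1)) ∧ T.anc u (T.dep v + 1) ∉ B ∧
      T.dep (T.anc u (T.dep v + 1)) = T.dep v + 1 := by
    intro v u h h'
    have := T.adj_child ⟨h'.le, h⟩ h'
    exact ⟨this.1, this.2.2, T.dep_anc _ _ (by omega)⟩
  have ext : ∀ v ∉ B, ∀ b ∈ B, G.Adj v b → 0 < T.dep v → ∀ u, T.anc u (T.dep v) = v →
      T.dep u ≤ T.dep v := by
    intro v hv b hb hvb hd u hu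
    by_contra hc
    obtain ⟨p1, p2, p3⟩ := par v hv hd
    obtain ⟨q1, q2, q3⟩ := chi v u hu (by omega)
    exact tn v hv _ _ _ p1 q1 hvb (nd (by omega)) (nB p2 hb) (nB q2 hb)
  have fmax : ∀ v ∉ B, ∀ b ∈ B, G.Adj v b → (0 < f v ∨ f v = 0 ∧ b = R v) →
      ∀ u ∉ B, ρ u = ρ v → f u ≤ f v := by
    intro v hv b hb hvb hp u hu hr
    by_contra hc
    rcases hp with hp | ⟨hp, hR⟩
    · have hd : T.dep v ≤ T.dep u := by
        rcases fabs u with e | e <;> rcases fabs v with e' | e' <;> omega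
      have := ext v hv b hb hvb ((fpos v).1 hp).1 u
        (below v u hv hu hr.symm (Or.inl ⟨hp, by omega⟩) hd)
      rcases fabs u with e | e <;> rcases fabs v with e' | e' <;> omega
    · obtain ⟨g1, g2⟩ := (fpos u).1 (by omega)
      rw [hr, ρeq v ((fzero v).1 hp), ← hR] at g2
      exact ancB u hu 1 g1 (g2 ▸ hb)
  have fmin : ∀ v ∉ B, ∀ b ∈ B, G.Adj v b → (f v < 0 ∨ f v = 0 ∧ b ≠ R v) →
      ∀ u ∉ B, ρ u = ρ v → f v ≤ f u := by
    intro v hv b hb hvb hp u hu hr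
    by_contra hc
    rcases hp with hp | ⟨hp, hR⟩
    · have hd : T.dep v ≤ T.dep u := by
        rcases fabs u with e | e <;> rcases fabs v with e' | e' <;> omega
      have := ext v hv b hb hvb ((fneg v).1 hp).1 u
        (below v u hv hu hr.symm (Or.inr ⟨hp, by omega⟩) hd)
      rcases fabs u with e | e <;> rcases fabs v with e' | e' <;> omega
    · obtain ⟨g1, g2⟩ := (fneg u).1 (by omega)
      have hρ : ρ u = v := by rw [hr, ρeq v ((fzero v).1 hp)]
      have a1 := (adj1 u g1).1
      rw [hρ] at g2 a1
      exact tn v hv _ _ _ a1 (R2 v ⟨_, hvb⟩) hvb g2 (nB (ancB u hu 1 g1) hb) hR.symm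
  let cyc : V → Prop := fun c => T.dep c = 0 ∧ ∃ v, F.Adj c v ∧ 2 ≤ T.dep v
  have cycf : ∀ c v, F.Adj c v → T.dep c = 0 → 2 ≤ T.dep v → (∀ u ∉ B, ρ u = c →
      (u ≠ c → 0 < f u) ∧ f u ≤ f v ∧ ∀ b ∈ B, ¬ G.Adj u b) := by
    intro c v hcv hc hv u hu huc
    have hρ : ρ v = c := by rw [← ρadj _ _ hcv, ρeq c hc]
    have a1 := adj1 v (by omega)
    have d1 := T.dep_anc v 1 (by omega)
    rw [hρ] at a1
    have hv' := hcv.2.2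
    obtain ⟨r1, r2⟩ := R1 c ⟨_, a1, d1⟩
    have one : ∀ w, F.Adj c w → T.dep w = 1 → w = R c := by
      intro w hw hw1
      by_contra hne
      exact tn c hcv.2.1 _ _ _ hw.1 r1.1 hcv.1 hne (nd (by omega)) (nd (by omega))
    have fd : ∀ u ∉ B, ρ u = c → u ≠ c → 0 < T.dep u ∧ f u = T.dep u := by
      intro u hu huc hne
      have hd : 0 < T.dep u := by
        by_contra h0
        exact hne (by rw [← huc, ρeq u (by omega)])
      have := adj1 u hd
      rw [huc] at this
      refine ⟨hd, if_pos ?_⟩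
      rw [huc]
      exact one _ this (T.dep_anc _ _ hd)
    have fv := fd v hv' hρ (nd (by omega))
    obtain ⟨p1, p2, p3⟩ := par v hv' (by omega)
    have bel : u ≠ c → T.dep u ≤ T.dep v := by
      intro hne
      obtain ⟨g1, g2⟩ := fd u hu huc hne
      by_contra hlt
      have hb := below v u hv' hu (hρ.trans huc.symm) (Or.inl ⟨by omega, by omega⟩) (by omega)
      obtain ⟨q1, q2, q3⟩ := chi v u hb (by omega)
      exact tn v hv' _ _ _ p1 q1 hcv.1.symm (nd (by omega)) (nd (by omega)) (nd (by omega))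
    refine ⟨fun hne => ?_, ?_, ?_⟩
    · have := fd u hu huc hne; omega
    · by_cases hne : u = c
      · have := (fzero u).2 (by rw [hne]; exact hc)
        omega
      · have := fd u hu huc hne
        have := bel hne
        omega
    · intro b hb hub
      by_cases hne : u = c
      · rw [hne] at hub
        exact tn c hcv.2.1 _ _ _ a1.1 hcv.1 hub (nd (by omega)) (nB a1.2.2 hb) (nB hv' hb)
      · obtain ⟨g1, g2⟩ := fd u hu huc hne
        have g3 := bel hne
        rcases g3.eq_or_lt with e | e
        · have : u = v := finj u v hu hv' (huc.trans hρ.symm) (by omega)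
          rw [this] at hub
          exact tn v hv' _ _ _ p1 hcv.1.symm hub (nd (by omega)) (nB p2 hb) (nB hcv.2.1 hb)
        · have hb' := below u v hu hv' (huc.trans hρ.symm) (Or.inl ⟨by omega, by omega⟩) (by omega)
          have := ext u hu b hb hub g1 v hb'
          omega
  obtain ⟨g, g01, gm⟩ : ∃ g : ℤ → ℝ, (∀ k, g k ∈ Ioo (0 : ℝ) 1) ∧ StrictMono g := by
    have : Nontrivial (Ioo (0 : ℝ) 1) :=
      ⟨⟨⟨1/2, by norm_num, by norm_num⟩, ⟨1/3, by norm_num, by norm_num⟩, by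
        intro h; have := congrArg Subtype.val h; norm_num at this⟩⟩
    obtain ⟨φ⟩ := Order.embedding_from_countable_to_dense ℤ (Ioo (0 : ℝ) 1)
    exact ⟨fun k => φ k, fun k => (φ k).2, fun a b h => φ.strictMono h⟩
  let τ : V → ℝ := fun v => if cyc v then 0 else g (f v)
  have τg : ∀ v, ¬ cyc v → τ v = g (f v) := fun v h => if_neg h
  have τ0 : ∀ v, cyc v → τ v = 0 := fun v h => if_pos h
  have ncyc : ∀ v b, v ∉ B → b ∈ B → G.Adj v b → ¬ cyc (ρ v) := by
    rintro v b hv hb hvb ⟨h3, w, hw, hw2⟩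
    exact (cycf _ w hw h3 hw2 v hv rfl).2.2 b hb hvb
  have ncyc' : ∀ v b, v ∉ B → b ∈ B → G.Adj v b → ∀ u, ρ u = ρ v → ¬ cyc u := by
    intro v b hv hb hvb u hu hc
    apply ncyc v b hv hb hvb
    rw [← hu, ρeq u hc.1]; exact hc
  let hi : V → V → Prop := fun c b => b ∈ B ∧ ∃ v ∉ B, ρ v = c ∧ G.Adj v b ∧
    (0 < f v ∨ f v = 0 ∧ b = R v)
  let lo : V → V → Prop := fun c b => b ∈ B ∧ ∃ v ∉ B, ρ v = c ∧ G.Adj v b ∧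
    (f v < 0 ∨ f v = 0 ∧ b ≠ R v)
  have one : ∀ v ∉ B, ∀ b ∈ B, ∀ b' ∈ B, G.Adj v b → G.Adj v b' → 0 < T.dep v → b = b' := by
    intro v hv b hb b' hb' h h' hd
    by_contra hne
    obtain ⟨p1, p2, p3⟩ := par v hv hd
    exact tn v hv _ _ _ p1 h h' (nB p2 hb) (nB p2 hb') hne
  refine ⟨{
    ρ := ρ, τ := τ, lo := lo, hi := hi, cyc := cyc
    ρ_mem := fun v hv => ancB v hv 0 (Nat.zero_le _)
    ρ_reach := ?_
    ρ_adj := fun u v h hu hv => ρadj u v ⟨h, hu, hv⟩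
    τ_mem := ?_
    τ_zero := ?_
    τ_inj := ?_
    cyc_root := ?_
    cyc_lo := ?_
    cyc_hi := ?_
    lo_unique := ?_
    hi_unique := ?_
    lo_spec := fun c b ⟨h1, v, h2, h3, h4, _⟩ => ⟨h1, v, h2, h3, h4⟩
    hi_spec := fun c b ⟨h1, v, h2, h3, h4, _⟩ => ⟨h1, v, h2, h3, h4⟩
    edge := ?_ }⟩
  · intro v hv
    have : ∀ k ≤ T.dep v, Relation.ReflTransGen (fun a b => G.Adj a b ∧ a ∉ B ∧ b ∉ B) (ρ v)
        (T.anc v k) := by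
      intro k
      induction k with
      | zero => exact fun _ => Relation.ReflTransGen.refl
      | succ k ih => exact fun h => (ih (by omega)).tail (T.adj_anc v k (by omega))
    have := this _ le_rfl
    rwa [T.anc_dep] at this
  · intro v hv
    by_cases hc : cyc v
    · rw [τ0 v hc]; simp
    · rw [τg v hc]; exact Ioo_subset_Ico_self (g01 _)
  · intro v hv h
    by_cases hc : cyc v
    · have := ρeq v hc.1
      exact ⟨by rw [this]; exact hc, this.symm⟩
    · rw [τg v hc] at h; exact absurd h (g01 _).1.ne'
  · intro u hu v hv hr h
    by_cases hc : cyc u <;> by_cases hc' : cyc v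
    · rw [← ρeq u hc.1, ← ρeq v hc'.1, hr]
    · rw [τ0 u hc, τg v hc'] at h; exact absurd h (g01 _).1.ne
    · rw [τg u hc, τ0 v hc'] at h; exact absurd h (g01 _).1.ne'
    · rw [τg u hc, τg v hc'] at h; exact finj u v hu hv hr (gm.injective h)
  · intro c hc
    exact ⟨ρeq c hc.1, τ0 c hc, hc.2.choose_spec.1.2.1⟩
  · rintro c b hc ⟨hb, v, hv, hvc, hvb, -⟩
    exact ncyc v b hv hb hvb (by rw [hvc]; exact hc)
  · rintro c b hc ⟨hb, v, hv, hvc, hvb, -⟩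
    exact ncyc v b hv hb hvb (by rw [hvc]; exact hc)
  · rintro c b b' ⟨hb, v, hv, hvc, hvb, h⟩ ⟨hb', v', hv', hvc', hvb', h'⟩
    have e : v = v' := finj v v' hv hv' (hvc.trans hvc'.symm)
      (le_antisymm (fmin v hv b hb hvb h v' hv' (hvc'.trans hvc.symm))
        (fmin v' hv' b' hb' hvb' h' v hv (hvc.trans hvc'.symm)))
    subst e
    by_cases hd : T.dep v = 0
    · have f0 := (fzero v).2 hd
      by_contra hne
      exact tn v hv _ _ _ hvb hvb' (R2 v ⟨_, hvb⟩) hne (by grind) (by grind)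
    · exact one v hv b hb b' hb' hvb hvb' (by omega)
  · rintro c b b' ⟨hb, v, hv, hvc, hvb, h⟩ ⟨hb', v', hv', hvc', hvb', h'⟩
    have e : v = v' := finj v v' hv hv' (hvc.trans hvc'.symm)
      (le_antisymm (fmax v' hv' b' hb' hvb' h' v hv (hvc.trans hvc'.symm))
        (fmax v hv b hb hvb h v' hv' (hvc'.trans hvc.symm)))
    subst e
    by_cases hd : T.dep v = 0
    · have f0 := (fzero v).2 hd
      grind
    · exact one v hv b hb b' hb' hvb hvb' (by omega)
  · -- edges inside, the upper end being `y`
    have inn : ∀ x y, F.Adj x y → T.dep x < T.dep y → T.anc y (T.dep x) = x →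
        ∃ (c u w : V) (α β : ℝ), s(x, y) = s(u, w) ∧ α < β ∧
        c ∉ B ∧ ρ c = c ∧ (u ∉ B ∧ ρ u = c ∧ τ u = α ∨ u ∈ B ∧ α = 0 ∧ lo c u) ∧
        (w ∉ B ∧ ρ w = c ∧ (τ w = β ∨ β = 1 ∧ w = c ∧ cyc c) ∨ w ∈ B ∧ β = 1 ∧ hi c w) ∧
        ∀ v ∉ B, ρ v = c → τ v ∉ Ioo α β := by
      intro x y hxy hd ha
      obtain ⟨-, hx, hy⟩ := id hxy
      have hr := ρadj x y hxy
      have ny : ¬ cyc y := fun h => by have := h.1; omega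
      by_cases hd2 : T.dep y = T.dep x + 1
      · have brn : T.dep x ≠ 0 → T.anc x 1 = T.anc y 1 := by
          intro h0; rw [← ha, T.anc_anc _ _ _ (by omega) (by omega)]
        rcases lt_trichotomy (f y) 0 with fy | fy | fy
        · obtain ⟨g1, g2⟩ := (fneg y).1 fy
          have e : f x = f y + 1 := by
            by_cases h0 : T.dep x = 0
            · rw [(fzero x).2 h0]; simp only [f]; rw [if_neg g2]; omega
            · simp only [f]; rw [if_neg g2, if_neg (by rw [brn h0, hr]; exact g2)]; omega
          have nx : ¬ cyc x := by
            rintro ⟨h3, w, hw, hw2⟩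
            have := (cycf x w hw h3 hw2 y hy (by rw [← hr, ρeq x h3])).1 (nd (by omega))
            omega
          refine ⟨ρ y, y, x, g (f y), g (f x), Sym2.eq_swap, gm (by omega), ancB y hy 0 (Nat.zero_le _),
            ρρ y, Or.inl ⟨hy, rfl, τg y ny⟩, Or.inl ⟨hx, hr, Or.inl (τg x nx)⟩, ?_⟩
          intro v hv hvr hm
          by_cases hc : cyc v
          · rw [τ0 v hc] at hm; exact absurd hm.1 (g01 _).1.asymm
          · rw [τg v hc] at hm
            have h1 := gm.lt_iff_lt.1 hm.1
            have h2 := gm.lt_iff_lt.1 hm.2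
            omega
        · have := (fzero y).1 fy; omega
        · obtain ⟨g1, g2⟩ := (fpos y).1 fy
          have e : f y = f x + 1 := by
            by_cases h0 : T.dep x = 0
            · rw [(fzero x).2 h0]; simp only [f]; rw [if_pos g2]; omega
            · simp only [f]; rw [if_pos g2, if_pos (by rw [brn h0, hr]; exact g2)]; omega
          refine ⟨ρ y, x, y, τ x, g (f y), rfl, ?_, ancB y hy 0 (Nat.zero_le _),
            ρρ y, Or.inl ⟨hx, hr, rfl⟩, Or.inl ⟨hy, rfl, Or.inl (τg y ny)⟩, ?_⟩
          · by_cases hc : cyc x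
            · rw [τ0 x hc]; exact (g01 _).1
            · rw [τg x hc]; exact gm (by omega)
          · intro v hv hvr hm
            by_cases hcv : cyc v
            · rw [τ0 v hcv] at hm
              by_cases hc : cyc x
              · rw [τ0 x hc] at hm; exact absurd hm.1 (lt_irrefl _)
              · rw [τg x hc] at hm; exact absurd hm.1 (g01 _).1.asymm
            rw [τg v hcv] at hm
            have h2 := gm.lt_iff_lt.1 hm.2
            by_cases hc : cyc x
            · obtain ⟨h3, w, hw, hw2⟩ := id hc
              have hvx : ρ v = x := by rw [hvr, ← hr, ρeq x h3]
              have := (cycf x w hw h3 hw2 v hv hvx).1 (fun h => hcv (h ▸ hc))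
              have := (fzero x).2 h3
              omega
            · rw [τg x hc] at hm
              have h1 := gm.lt_iff_lt.1 hm.1
              omega
      · have hx0 : T.dep x = 0 := by
          by_contra h0
          obtain ⟨p1, p2, p3⟩ := par x hx (by omega)
          obtain ⟨q1, q2, q3⟩ := chi x y ha hd
          exact tn x hx _ _ _ p1 q1 hxy.1 (nd (by omega)) (nd (by omega)) (nd (by omega))
        have hc : cyc x := ⟨hx0, y, hxy, by omega⟩
        have hρx := ρeq x hx0
        refine ⟨x, y, x, g (f y), 1, Sym2.eq_swap, (g01 _).2, hx, hρx,
          Or.inl ⟨hy, by rw [← hr, hρx], τg y ny⟩, Or.inl ⟨hx, hρx, Or.inr ⟨rfl, rfl, hc⟩⟩, ?_⟩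
        intro v hv hvr hm
        by_cases hcv : cyc v
        · rw [τ0 v hcv] at hm; exact absurd hm.1 (g01 _).1.asymm
        · rw [τg v hcv] at hm
          have h1 := gm.lt_iff_lt.1 hm.1
          have := (cycf x y hxy hx0 (by omega) v hv hvr).2.1
          omega
    have out : ∀ x y, G.Adj x y → x ∉ B → y ∈ B →
        ∃ (c u w : V) (α β : ℝ), s(x, y) = s(u, w) ∧ α < β ∧
        c ∉ B ∧ ρ c = c ∧ (u ∉ B ∧ ρ u = c ∧ τ u = α ∨ u ∈ B ∧ α = 0 ∧ lo c u) ∧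
        (w ∉ B ∧ ρ w = c ∧ (τ w = β ∨ β = 1 ∧ w = c ∧ cyc c) ∨ w ∈ B ∧ β = 1 ∧ hi c w) ∧
        ∀ v ∉ B, ρ v = c → τ v ∉ Ioo α β := by
      intro x y hxy hx hy
      have nc := ncyc' x y hx hy hxy
      have hτ := τg x (nc x rfl)
      by_cases hp : 0 < f x ∨ f x = 0 ∧ y = R x
      · refine ⟨ρ x, x, y, τ x, 1, rfl, ?_, ancB x hx 0 (Nat.zero_le _), ρρ x,
          Or.inl ⟨hx, rfl, rfl⟩, Or.inr ⟨hy, rfl, hy, x, hx, rfl, hxy, hp⟩, ?_⟩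
        · rw [hτ]; exact (g01 _).2
        · intro v hv hvr hm
          rw [hτ, τg v (nc v hvr)] at hm
          have h1 := gm.lt_iff_lt.1 hm.1
          have := fmax x hx y hy hxy hp v hv hvr
          omega
      · have hp' : f x < 0 ∨ f x = 0 ∧ y ≠ R x := by
          push Not at hp
          rcases hp.1.lt_or_eq with h | h
          · exact Or.inl h
          · exact Or.inr ⟨h, hp.2 h⟩
        refine ⟨ρ x, y, x, 0, τ x, Sym2.eq_swap, ?_, ancB x hx 0 (Nat.zero_le _), ρρ x,
          Or.inr ⟨hy, rfl, hy, x, hx, rfl, hxy, hp'⟩, Or.inl ⟨hx, rfl, Or.inl rfl⟩, ?_⟩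
        · rw [hτ]; exact (g01 _).1
        · intro v hv hvr hm
          rw [hτ, τg v (nc v hvr)] at hm
          have h1 := gm.lt_iff_lt.1 hm.2
          have := fmin x hx y hy hxy hp' v hv hvr
          omega
    intro a b hab h
    by_cases ha : a ∈ B
    · have hb : b ∉ B := h.resolve_left (not_not.2 ha)
      rw [Sym2.eq_swap]
      exact out b a hab.symm hb ha
    · by_cases hb : b ∈ B
      · exact out a b hab ha hb
      · have hF : F.Adj a b := ⟨hab, ha, hb⟩
        rcases T.cmp a b hF with ⟨h1, h2⟩ | ⟨h1, h2⟩
        · exact inn a b hF h1 h2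
        · rw [Sym2.eq_swap]
          exact inn b a hF.symm h1 h2

/-! ### Redrawing from disjointness of independent edges -/

/-- Redrawing theorem: a countable family of midpoints `m j`, each joined inside `S j b` to two
distinct nodes `q (en j b)`, such that pieces of different midpoints only meet when they lead to
the same node, can be redrawn as a family of fat curves: for each `j` a one-parameter family of
pairwise internally disjoint curves from node to node, together with a one-parameter family of loops
at each node. -/
theorem fat_redraw {K J : Type*} [Countable K] [Countable J] (q : K → ℂ)
    (hq : Function.Injective q) (en : J → Bool → K) (hen : ∀ j, en j false ≠ en j true)
    (m : J → ℂ) (S : J → Bool → Set ℂ) (hj : ∀ j b, JoinedIn (S j b) (m j) (q (en j b)))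
    (hS : ∀ j b k, q k ∈ S j b → k = en j b)
    (hSS : ∀ j j' b b' z, j ≠ j' → z ∈ S j b → z ∈ S j' b' → en j b = en j' b') :
    ∃ (P : K → ℝ × ℝ) (host : K ⊕ J → ℝ → ℝ → ℝ × ℝ), P.Injective ∧
      (∀ n, ∀ s ∈ Ioo (0 : ℝ) 1, Continuous (host n s)) ∧
      (∀ k, ∀ s ∈ Ioo (0 : ℝ) 1, host (.inl k) s 0 = P k ∧ host (.inl k) s 1 = P k) ∧
      (∀ j, ∀ s ∈ Ioo (0 : ℝ) 1, host (.inr j) s 0 = P (en j false) ∧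
        host (.inr j) s 1 = P (en j true)) ∧
      (∀ n, ∀ s ∈ Ioo (0 : ℝ) 1, ∀ t ∈ Icc (0 : ℝ) 1, ‖host n s t‖ ≤ 3) ∧
      (∀ n n', ∀ s ∈ Ioo (0 : ℝ) 1, ∀ s' ∈ Ioo (0 : ℝ) 1, ∀ t ∈ Ioo (0 : ℝ) 1,
        ∀ t' ∈ Icc (0 : ℝ) 1, host n s t = host n' s' t' → n = n' ∧ s = s' ∧ t = t') := by
  classical
  have ms : ∀ j b, m j ∈ S j b := fun j b => (hj j b).source_mem
  have mq : ∀ j k, m j ≠ q k := by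
    intro j k h
    exact hen j ((hS j false k (h ▸ ms j false)).symm.trans (hS j true k (h ▸ ms j true)))
  have mS : ∀ j j' b, j ≠ j' → m j' ∉ S j b := by
    intro j j' b h hm
    exact hen j' ((hSS j j' b false _ h hm (ms _ _)).symm.trans (hSS j j' b true _ h hm (ms _ _)))
  have mi : Function.Injective m := by
    intro j j' h
    by_contra hc
    exact mS j j' false hc (h ▸ ms j false)
  let H : SimpleGraph (K ⊕ J) := SimpleGraph.fromRel (fun x y => ∃ j b, x = .inr j ∧ y = .inl (en j b))
  have hadj : ∀ x y, H.Adj x y ↔ (∃ j b, x = .inr j ∧ y = .inl (en j b)) ∨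
      (∃ j b, y = .inr j ∧ x = .inl (en j b)) := by
    intro x y
    simp only [H, SimpleGraph.fromRel_adj]
    constructor
    · exact fun h => h.2
    · intro h
      refine ⟨?_, h⟩
      rintro rfl
      rcases h with ⟨j, b, h1, h2⟩ | ⟨j, b, h1, h2⟩ <;> rw [h1] at h2 <;> simp at h2
  let pos : K ⊕ J → ℂ := Sum.elim q m
  have hpos : Function.Injective pos := by
    rintro (k | j) (k' | j') h
    · exact congrArg _ (hq h)
    · exact (mq _ _ h.symm).elim
    · exact (mq _ _ h).elim
    · exact congrArg _ (mi h)
  let SS : K ⊕ J → K ⊕ J → Set ℂ := fun x y => {z | ∃ j b, (x = .inr j ∧ y = .inl (en j b) ∨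
      y = .inr j ∧ x = .inl (en j b)) ∧ z ∈ S j b}
  obtain ⟨vk⟩ : Nonempty (VK H) := by
    refine VK.of_joined H pos hpos SS ?_ ?_ ?_
    · intro x y h
      rcases (hadj x y).1 h with ⟨j, b, rfl, rfl⟩ | ⟨j, b, rfl, rfl⟩
      · exact (hj j b).mono (fun z hz => ⟨j, b, .inl ⟨rfl, rfl⟩, hz⟩)
      · exact (hj j b).symm.mono (fun z hz => ⟨j, b, .inr ⟨rfl, rfl⟩, hz⟩)
    · intro a b c d _ _ h1 h2 h3 h4
      rw [Set.disjoint_left]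
      rintro z ⟨j, e, h, hz⟩ ⟨j', e', h', hz'⟩
      have hjj : j ≠ j' := by rintro rfl; grind
      have := hSS _ _ _ _ _ hjj hz hz'
      grind
    · rintro a b v _ ha hb ⟨j, e, h, hz⟩
      rcases v with k | j'
      · have := hS _ _ _ hz
        grind
      · by_cases hjj : j = j'
        · grind
        · exact mS _ _ _ hjj hz
  obtain ⟨idx, hidx⟩ := exists_injective_nat (K ⊕ J)
  let M : K ⊕ J → Prop := fun x => ∃ j, x = .inr j
  obtain ⟨T⟩ := NST.exists H idx (fun u v _ h => hidx h) (fun x => ¬ M x) (by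
    rintro (k | j)
    · exact ⟨.inl k, by simp [M], SimpleGraph.Reachable.refl _⟩
    · refine ⟨.inl (en j false), by simp [M], SimpleGraph.Adj.reachable ?_⟩
      exact (hadj _ _).2 (.inl ⟨j, false, rfl, rfl⟩))
  have hm : ∀ j y, H.Adj (.inr j) y → y = .inl (en j false) ∨ y = .inl (en j true) := by
    intro j y h
    rcases (hadj _ _).1 h with ⟨j', b, h1, h2⟩ | ⟨j', b, h1, h2⟩
    · cases h1
      cases b
      · exact .inl h2
      · exact .inr h2
    · cases h2
  have good : T.Good M idx := by
    refine ⟨?_, T.root, ?_, ?_, hidx⟩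
    · intro a b h
      rcases (hadj _ _).1 h with ⟨j', b, rfl, rfl⟩ | ⟨j', b, rfl, rfl⟩ <;> simp [M]
    · rintro _ a b c ⟨j, rfl⟩ ha hb hc
      have := hm _ _ ha
      have := hm _ _ hb
      have := hm _ _ hc
      grind
    · rintro _ ⟨j, rfl⟩
      exact ⟨.inl (en j false), .inl (en j true), fun h => hen j (Sum.inl_injective h),
        (hadj _ _).2 (.inl ⟨j, _, rfl, rfl⟩), (hadj _ _).2 (.inl ⟨j, _, rfl, rfl⟩)⟩
  obtain ⟨A⟩ := good.arcDiag vk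
  obtain ⟨P, host, hP, hc, h0, h1, hb, hk⟩ := A.hosts
  let rev : K ⊕ J → Prop := fun n => ∃ j, n = .inr j ∧ A.base n false ≠ .inl (en j false)
  let r : K ⊕ J → ℝ → ℝ := fun n t => if rev n then 1 - t else t
  have rI : ∀ n, ∀ t ∈ Icc (0 : ℝ) 1, r n t ∈ Icc (0 : ℝ) 1 := by
    intro n t ht
    simp only [r]; split_ifs
    · exact ⟨by linarith [ht.2], by linarith [ht.1]⟩
    · exact ht
  have rO : ∀ n, ∀ t ∈ Ioo (0 : ℝ) 1, r n t ∈ Ioo (0 : ℝ) 1 := by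
    intro n t ht
    simp only [r]; split_ifs
    · exact ⟨by linarith [ht.2], by linarith [ht.1]⟩
    · exact ht
  refine ⟨fun k => P (.inl k), fun n s t => host n s (r n t), fun a b h => Sum.inl_injective (hP h),
    ?_, ?_, ?_, fun n s hs t ht => hb n s hs _ (rI n t ht), ?_⟩
  · intro n s hs
    refine (hc n s hs).comp ?_
    simp only [r]; split_ifs <;> fun_prop
  · intro k s hs
    have : ¬ rev (.inl k) := by simp [rev]
    simp only [r, this, if_false]
    have hn : ¬ M (.inl k) := by simp [M]
    exact ⟨by rw [h0 _ _ hs, A.node _ _ hn], by rw [h1 _ _ hs, A.node _ _ hn]⟩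
  · intro j s hs
    have hM : M (.inr j) := ⟨j, rfl⟩
    have b0 := hm _ _ (A.mid _ false hM)
    have b1 := hm _ _ (A.mid _ true hM)
    have bn := A.mid_ne _ hM
    by_cases hr : rev (.inr j)
    · have hr' : A.base (.inr j) false ≠ .inl (en j false) := by
        obtain ⟨j', h1, h2⟩ := hr
        cases h1; exact h2
      simp only [r, hr, if_true, sub_zero, sub_self, h0 _ _ hs, h1 _ _ hs]
      constructor <;> congr 1 <;> grind
    · have hr' : A.base (.inr j) false = .inl (en j false) := by
        by_contra h; exact hr ⟨j, rfl, h⟩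
      simp only [r, hr, if_false, h0 _ _ hs, h1 _ _ hs]
      constructor <;> congr 1 <;> grind
  · intro n n' s hs s' hs' t ht t' ht' h
    obtain ⟨rfl, rfl, h2⟩ := hk n n' s hs s' hs' _ (rO n t ht) _ (rI n' t' ht') h
    refine ⟨rfl, rfl, ?_⟩
    simp only [r] at h2; split_ifs at h2 <;> linarith

/-! ### Drawings with darts -/

/-- A 1-planar drawing, with the edges parametrised from both sides: `cd e b` runs along the edge
`e` starting at its end `vt e b`. The plane is `ℂ` here. -/
structure CDrawing {V : Type*} (G : SimpleGraph V) where
  p : V → ℂ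
  p_inj : Function.Injective p
  vt : G.edgeSet → Bool → V
  vt_edge : ∀ e : G.edgeSet, (e : Sym2 V) = s(vt e false, vt e true)
  cd : G.edgeSet → Bool → C(ℝ, ℂ)
  cd_zero : ∀ e b, cd e b 0 = p (vt e b)
  cd_rev : ∀ e b t, cd e (!b) t = cd e b (1 - t)
  cd_inj : ∀ e b, InjOn (cd e b) (Icc 0 1)
  no_vertex : ∀ e b, ∀ t ∈ Ioo (0 : ℝ) 1, ∀ v, cd e b t ≠ p v
  finite : ∀ e f b b', e ≠ f →
    {s ∈ Icc (0 : ℝ) 1 | ∃ t ∈ Icc (0 : ℝ) 1, cd e b s = cd f b' t}.Finite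
  ap : ∀ e f g b1 b2 b3 b4, ∀ t1 ∈ Ioo (0 : ℝ) 1, ∀ t2 ∈ Ioo (0 : ℝ) 1, ∀ t3 ∈ Ioo (0 : ℝ) 1,
    ∀ t4 ∈ Ioo (0 : ℝ) 1, e ≠ f → e ≠ g → cd e b1 t1 = cd f b2 t2 → cd e b3 t3 = cd g b4 t4 → f = g

theorem CDrawing.of_drawing {V : Type*} {G : SimpleGraph V} (D : Drawing G)
    (hD : D.IsAlmostPlanar) : Nonempty (CDrawing G) := by
  classical
  let φ : ℝ × ℝ ≃ₜ ℂ := Complex.equivRealProdCLM.symm.toHomeomorph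
  choose va vb hab h0 h1 using D.curve_ends
  let cd0 : G.edgeSet → ℝ → ℂ := fun e => IccExtend (zero_le_one' ℝ) (fun t => φ (D.curve e t))
  have cd0_eq : ∀ e, ∀ t ∈ Icc (0 : ℝ) 1, cd0 e t = φ (D.curve e t) := by
    intro e t ht
    simp only [cd0]
    rw [IccExtend_of_mem _ _ ht]
  have cd0_c : ∀ e, Continuous (cd0 e) := by
    intro e
    refine Continuous.Icc_extend' ?_
    exact φ.continuous.comp (continuousOn_iff_continuous_domRestrict.1 (D.curve_cont e))
  let cd : G.edgeSet → Bool → C(ℝ, ℂ) := fun e b =>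
    ⟨fun t => cd0 e (if b then 1 - t else t), by
      cases b
      · simpa using cd0_c e
      · simpa [Function.comp_def] using (cd0_c e).comp (continuous_sub_left (1 : ℝ))⟩
  let r : Bool → ℝ → ℝ := fun b t => if b then 1 - t else t
  have rI : ∀ b, ∀ t ∈ Icc (0 : ℝ) 1, r b t ∈ Icc (0 : ℝ) 1 := by
    intro b t ht; cases b
    · simpa [r] using ht
    · simp only [r, if_true]; exact ⟨by linarith [ht.2], by linarith [ht.1]⟩
  have rO : ∀ b, ∀ t ∈ Ioo (0 : ℝ) 1, r b t ∈ Ioo (0 : ℝ) 1 := by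
    intro b t ht; cases b
    · simpa [r] using ht
    · simp only [r, if_true]; exact ⟨by linarith [ht.2], by linarith [ht.1]⟩
  have ri : ∀ b s t, r b s = r b t → s = t := by
    intro b s t h; cases b
    · simpa [r] using h
    · simpa [r] using h
  have cd_eq : ∀ e b, ∀ t ∈ Icc (0 : ℝ) 1, cd e b t = φ (D.curve e (r b t)) := by
    intro e b t ht
    exact cd0_eq e _ (rI b t ht)
  have sub : Ioo (0 : ℝ) 1 ⊆ Icc 0 1 := Ioo_subset_Icc_self
  refine ⟨⟨fun v => φ (D.pos v), fun a b h => D.pos_inj (φ.injective h),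
    fun e b => if b then vb e else va e, fun e => by simpa using hab e, cd, ?_, ?_, ?_, ?_, ?_, ?_⟩⟩
  · intro e b
    rw [cd_eq e b 0 (by simp)]
    cases b
    · simp [r, h0]
    · simp [r, h1]
  · intro e b t
    cases b <;> simp [cd]
  · intro e b s hs t ht h
    rw [cd_eq e b s hs, cd_eq e b t ht] at h
    exact ri b _ _ (D.curve_inj e (rI b s hs) (rI b t ht) (φ.injective h))
  · intro e b t ht v h
    rw [cd_eq e b t (sub ht)] at h
    exact D.interior_no_vertex e _ (rO b t ht) v (φ.injective h)
  · intro e f b b' hef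
    refine Finite.of_finite_image (f := fun s => D.curve e (r b s)) ?_ ?_
    · refine (D.finite_meet e f hef).subset ?_
      rintro _ ⟨s, ⟨hs, t, ht, h⟩, rfl⟩
      refine ⟨⟨_, rI b s hs, rfl⟩, ⟨r b' t, rI b' t ht, ?_⟩⟩
      rw [cd_eq e b s hs, cd_eq f b' t ht] at h
      exact (φ.injective h).symm
    · rintro s ⟨hs, -⟩ t ⟨ht, -⟩ h
      exact ri b _ _ (D.curve_inj e (rI b s hs) (rI b t ht) h)
  · intro e f g b1 b2 b3 b4 t1 h1 t2 h2 t3 h3 t4 h4 hef heg e1 e2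
    rw [cd_eq _ _ _ (sub h1), cd_eq _ _ _ (sub h2)] at e1
    rw [cd_eq _ _ _ (sub h3), cd_eq _ _ _ (sub h4)] at e2
    exact hD e f g ⟨hef, _, ⟨_, rO b1 t1 h1, rfl⟩, ⟨_, rO b2 t2 h2, (φ.injective e1).symm⟩⟩
      ⟨heg, _, ⟨_, rO b3 t3 h3, rfl⟩, ⟨_, rO b4 t4 h4, (φ.injective e2).symm⟩⟩

namespace CDrawing
variable {V : Type*} {G : SimpleGraph V} (D : CDrawing G)

/-- Two edges cross. -/
def Cr (e f : G.edgeSet) : Prop :=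
  e ≠ f ∧ ∃ b c, ∃ s ∈ Ioo (0 : ℝ) 1, ∃ t ∈ Ioo (0 : ℝ) 1, D.cd e b s = D.cd f c t

/-- Two crossing edges without a common end. -/
def X (e f : G.edgeSet) : Prop := D.Cr e f ∧ ∀ v : V, v ∈ (e : Sym2 V) → v ∉ (f : Sym2 V)

variable {D}

theorem Cr.symm {e f} (h : D.Cr e f) : D.Cr f e := by
  obtain ⟨h, b, b', s, hs, t, ht, e⟩ := h
  exact ⟨h.symm, b', b, t, ht, s, hs, e.symm⟩

theorem Cr.unique {e f g} (h : D.Cr e f) (h' : D.Cr e g) : f = g := by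
  obtain ⟨h, b, b', s, hs, t, ht, e⟩ := h
  obtain ⟨h', c, c', s', hs', t', ht', e'⟩ := h'
  exact D.ap _ _ _ _ _ _ _ _ hs _ ht _ hs' _ ht' h h' e e'

theorem X.symm {e f} (h : D.X e f) : D.X f e := ⟨h.1.symm, fun v h1 h2 => h.2 v h2 h1⟩

theorem X.of_cr {e f g} (h : D.X e f) (h' : D.Cr e g) : D.X e g := h.1.unique h' ▸ h

variable (D)

theorem cd_one (e b) : D.cd e b 1 = D.p (D.vt e (!b)) := by
  have := D.cd_rev e b 0
  rw [sub_zero] at this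
  rw [← this, D.cd_zero]

theorem cd_rev' (e b t) : D.cd e b t = D.cd e (!b) (1 - t) := by
  rw [D.cd_rev]; congr 1; ring

theorem mem_iff {e : G.edgeSet} {v : V} (b : Bool) :
    v ∈ (e : Sym2 V) ↔ v = D.vt e b ∨ v = D.vt e (!b) := by
  rw [D.vt_edge e, Sym2.mem_iff]
  cases b
  · simp
  · simp [or_comm]

theorem vt_mem (e : G.edgeSet) (b) : D.vt e b ∈ (e : Sym2 V) := (D.mem_iff b).2 (.inl rfl)

theorem adj (e b) : G.Adj (D.vt e b) (D.vt e (!b)) := by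
  have h : G.Adj (D.vt e false) (D.vt e true) := by
    have := e.2
    rw [D.vt_edge e] at this
    exact this
  cases b
  · exact h
  · exact h.symm

theorem vt_ne (e b) : D.vt e b ≠ D.vt e (!b) := (D.adj e b).ne

theorem edge_eq {e f : G.edgeSet} {u v : V} (h : u ≠ v) (h1 : u ∈ (e : Sym2 V))
    (h2 : v ∈ (e : Sym2 V)) (h3 : u ∈ (f : Sym2 V)) (h4 : v ∈ (f : Sym2 V)) : e = f :=
  Subtype.ext (Sym2.eq_of_ne_mem h h1 h2 h3 h4)

/-- On the closed edge only the two ends are vertices. -/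
theorem vertex_on {e b t v} (ht : t ∈ Icc (0 : ℝ) 1) (h : D.cd e b t = D.p v) :
    (t = 0 ∧ v = D.vt e b) ∨ (t = 1 ∧ v = D.vt e (!b)) := by
  rcases eq_or_lt_of_le ht.1 with h0 | h0
  · left
    subst h0
    rw [D.cd_zero] at h
    exact ⟨rfl, (D.p_inj h).symm⟩
  rcases eq_or_lt_of_le ht.2 with h1 | h1
  · right
    subst h1
    rw [D.cd_one] at h
    exact ⟨rfl, (D.p_inj h).symm⟩
  · exact (D.no_vertex e b t ⟨h0, h1⟩ v h).elim

theorem vertex_mem {e b t v} (ht : t ∈ Icc (0 : ℝ) 1) (h : D.cd e b t = D.p v) :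
    v ∈ (e : Sym2 V) :=
  (D.mem_iff b).2 ((D.vertex_on ht h).imp And.right And.right)

theorem interior_or (e b) {t} (ht : t ∈ Icc (0 : ℝ) 1) :
    t ∈ Ioo (0 : ℝ) 1 ∨ ∃ v, D.cd e b t = D.p v := by
  rcases eq_or_lt_of_le ht.1 with h0 | h0
  · exact .inr ⟨D.vt e b, by rw [← h0, D.cd_zero]⟩
  rcases eq_or_lt_of_le ht.2 with h1 | h1
  · exact .inr ⟨D.vt e (!b), by rw [h1, D.cd_one]⟩
  · exact .inl ⟨h0, h1⟩

/-- Two edges meet at crossings and common ends only. -/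
theorem meet {e f b b' s t} (hef : e ≠ f) (hs : s ∈ Icc (0 : ℝ) 1) (ht : t ∈ Icc (0 : ℝ) 1)
    (h : D.cd e b s = D.cd f b' t) :
    (s ∈ Ioo (0 : ℝ) 1 ∧ t ∈ Ioo (0 : ℝ) 1 ∧ D.Cr e f) ∨
      ∃ v, v ∈ (e : Sym2 V) ∧ v ∈ (f : Sym2 V) ∧ D.cd e b s = D.p v := by
  rcases D.interior_or e b hs with h1 | ⟨v, hv⟩
  · rcases D.interior_or f b' ht with h2 | ⟨v, hv⟩
    · exact .inl ⟨h1, h2, hef, b, b', s, h1, t, h2, h⟩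
    · exact (D.no_vertex e b s h1 v (h.trans hv)).elim
  · exact .inr ⟨v, D.vertex_mem hs hv, D.vertex_mem ht (h ▸ hv), hv⟩

/-- Near its ends an edge has no crossings. -/
theorem exists_eps (e : G.edgeSet) : ∃ ε : ℝ, 0 < ε ∧ ε < 1 / 2 ∧ ∀ b, ∀ s ∈ Ioc (0 : ℝ) ε,
    ∀ f b', ∀ t ∈ Icc (0 : ℝ) 1, e ≠ f → D.cd e b s ≠ D.cd f b' t := by
  by_cases hf : ∃ f, D.Cr e f
  · obtain ⟨f, hf⟩ := hf
    have fin : (⋃ b : Bool, {s ∈ Icc (0 : ℝ) 1 | ∃ t ∈ Icc (0 : ℝ) 1, D.cd e b s = D.cd f false t} \ {0}).Finite :=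
      finite_iUnion fun b => (D.finite e f b false hf.1).sdiff
    have hnhds := (fin.isClosed.isOpen_compl).mem_nhds (x := (0 : ℝ)) (by simp)
    obtain ⟨ε, he, hb⟩ := Metric.mem_nhds_iff.1 hnhds
    refine ⟨min (ε / 2) (1 / 4), by positivity, by
      have := min_le_right (ε / 2) (1 / 4 : ℝ); linarith, ?_⟩
    intro b s hs g b' t ht heg h
    have s1 : s ≤ ε / 2 := hs.2.trans (min_le_left _ _)
    have s2 : s ≤ 1 / 4 := hs.2.trans (min_le_right _ _)
    have hsI : s ∈ Icc (0 : ℝ) 1 := ⟨hs.1.le, by linarith⟩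
    rcases D.meet heg hsI ht h with ⟨h1, h2, hc⟩ | ⟨v, h1, h2, h3⟩
    · have := hf.unique hc
      subst this
      have hball : s ∈ Metric.ball (0 : ℝ) ε := by
        rw [Metric.mem_ball, Real.dist_eq, sub_zero, abs_of_pos hs.1]; linarith
      apply hb hball
      refine mem_iUnion.2 ⟨b, ⟨hsI, ?_⟩, hs.1.ne'⟩
      cases b'
      · exact ⟨t, ht, h⟩
      · exact ⟨1 - t, ⟨by linarith [ht.2], by linarith [ht.1]⟩, by rw [h]; exact D.cd_rev' f true t⟩
    · exact D.no_vertex e b s ⟨hs.1, by linarith⟩ v h3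
  · refine ⟨1 / 4, by norm_num, by norm_num, ?_⟩
    intro b s hs g b' t ht heg h
    have hsI : s ∈ Ioo (0 : ℝ) 1 := ⟨hs.1, by linarith [hs.2]⟩
    rcases D.meet heg (Ioo_subset_Icc_self hsI) ht h with ⟨h1, h2, hc⟩ | ⟨v, h1, h2, h3⟩
    · exact hf ⟨g, hc⟩
    · exact D.no_vertex e b s hsI v h3

/-- Length of the crossing-free initial piece of an edge. -/
noncomputable def ep (e : G.edgeSet) : ℝ := (D.exists_eps e).choose

theorem ep_pos (e) : 0 < D.ep e := (D.exists_eps e).choose_spec.1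
theorem ep_lt (e) : D.ep e < 1 / 2 := (D.exists_eps e).choose_spec.2.1
theorem ep_spec {e b s f b' t} (hs : s ∈ Ioc (0 : ℝ) (D.ep e)) (ht : t ∈ Icc (0 : ℝ) 1)
    (hef : e ≠ f) : D.cd e b s ≠ D.cd f b' t :=
  (D.exists_eps e).choose_spec.2.2 b s hs f b' t ht hef

/-- Initial pieces of different darts meet at a common starting vertex only. -/
theorem short {e b s f b' t} (hs : s ∈ Icc 0 (D.ep e)) (ht : t ∈ Icc 0 (D.ep f))
    (hd : (e, b) ≠ (f, b')) (h : D.cd e b s = D.cd f b' t) : s = 0 ∧ t = 0 ∧ D.vt e b = D.vt f b' := by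
  have h1 := D.ep_lt e
  have h2 := D.ep_lt f
  have hsI : s ∈ Icc (0 : ℝ) 1 := ⟨hs.1, by linarith [hs.2]⟩
  have htI : t ∈ Icc (0 : ℝ) 1 := ⟨ht.1, by linarith [ht.2]⟩
  by_cases hef : e = f
  · subst hef
    have : b' = !b := by cases b <;> cases b' <;> simp_all
    subst this
    rw [D.cd_rev] at h
    have := D.cd_inj e b hsI (by constructor <;> linarith [htI.1, htI.2]) h
    linarith [hs.2, ht.2]
  · rcases eq_or_lt_of_le hs.1 with h0 | h0
    · rcases eq_or_lt_of_le ht.1 with h0' | h0'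
      · refine ⟨h0.symm, h0'.symm, ?_⟩
        subst h0; subst h0'
        rw [D.cd_zero, D.cd_zero] at h
        exact D.p_inj h
      · exact (D.ep_spec ⟨h0', ht.2⟩ hsI (Ne.symm hef) h.symm).elim
    · exact (D.ep_spec ⟨h0, hs.2⟩ htI hef h).elim

end CDrawing

/-! ### Countability of the core -/

namespace CDrawing
variable {V : Type*} {G : SimpleGraph V} (D : CDrawing G)

/-- Vertices of degree at least three. -/
def V3 (_ : CDrawing G) : Set V :=
  {v | ∃ a b c, a ≠ b ∧ a ≠ c ∧ b ≠ c ∧ G.Adj v a ∧ G.Adj v b ∧ G.Adj v c}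

theorem exists_dart {v a : V} (h : G.Adj v a) : ∃ (e : G.edgeSet) (b : Bool), D.vt e b = v ∧ D.vt e (!b) = a := by
  refine ⟨⟨s(v, a), h⟩, ?_⟩
  have := D.vt_edge ⟨s(v, a), h⟩
  simp only [Sym2.eq_iff] at this
  rcases this with ⟨h1, h2⟩ | ⟨h1, h2⟩
  · exact ⟨false, h1.symm, h2.symm⟩
  · exact ⟨true, h1.symm, h2.symm⟩

/-- The initial pieces of edges at the vertices of degree at least three are disjoint triods. -/
theorem V3_countable : D.V3.Countable := by
  have key : ∀ v : D.V3, ∃ (e : Fin 3 → G.edgeSet) (b : Fin 3 → Bool), (∀ i, D.vt (e i) (b i) = v) ∧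
      ∀ i j, i ≠ j → e i ≠ e j := by
    rintro ⟨v, x, y, z, hxy, hxz, hyz, h1, h2, h3⟩
    obtain ⟨e1, b1, p1, q1⟩ := D.exists_dart h1
    obtain ⟨e2, b2, p2, q2⟩ := D.exists_dart h2
    obtain ⟨e3, b3, p3, q3⟩ := D.exists_dart h3
    have ne : ∀ {e e' : G.edgeSet} {b b' x y}, D.vt e b = v → D.vt e (!b) = x → D.vt e' b' = v →
        D.vt e' (!b') = y → x ≠ y → e ≠ e' := by
      rintro e e' b b' x y h1 h2 h3 h4 hne rfl
      cases b <;> cases b' <;> grind [D.vt_ne]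
    have n1 := ne p1 q1 p2 q2 hxy
    have n2 := ne p1 q1 p3 q3 hxz
    have n3 := ne p2 q2 p3 q3 hyz
    refine ⟨![e1, e2, e3], ![b1, b2, b3], ?_, ?_⟩
    · intro i; fin_cases i <;> simpa
    · intro i j; fin_cases i <;> fin_cases j <;> intro hij
      exacts [(hij rfl).elim, n1, n2, n1.symm, (hij rfl).elim, n3, n2.symm, n3.symm, (hij rfl).elim]
  choose e b hv he using key
  have mem : ∀ (f : G.edgeSet), ∀ s ∈ Icc (0 : ℝ) 1, s * D.ep f ∈ Icc 0 (D.ep f) := fun f s hs =>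
    ⟨mul_nonneg hs.1 (D.ep_pos f).le, mul_le_of_le_one_left (D.ep_pos f).le hs.2⟩
  refine Moore.countable (ι := D.V3)
    (fun v j => (D.cd (e v j) (b v j)).comp ⟨fun s => s * D.ep (e v j), by fun_prop⟩)
    (fun v => D.p v) ?_ ?_ ?_ ?_
  · intro v j
    simp [D.cd_zero, hv]
  · intro v j
    simp only [ContinuousMap.comp_apply, ContinuousMap.coe_mk, one_mul]
    exact D.no_vertex _ _ _ ⟨D.ep_pos _, by linarith [D.ep_lt (e v j)]⟩ _
  · intro v j j' hjj s hs t ht h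
    simp only [ContinuousMap.comp_apply, ContinuousMap.coe_mk] at h ⊢
    obtain ⟨h1, -, -⟩ := D.short (mem _ s hs) (mem _ t ht) (fun hh => he v j j' hjj (by simpa using congrArg Prod.fst hh)) h
    rw [h1, D.cd_zero, hv]
  · intro v v' hvv j j' s hs t ht h
    simp only [ContinuousMap.comp_apply, ContinuousMap.coe_mk] at h
    have hd : (e v j, b v j) ≠ (e v' j', b v' j') := by
      intro hh
      apply hvv
      apply Subtype.ext
      rw [← hv v j, ← hv v' j']
      rw [Prod.mk.injEq] at hh
      rw [hh.1, hh.2]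
    obtain ⟨-, -, h3⟩ := D.short (mem _ s hs) (mem _ t ht) hd h
    rw [hv, hv] at h3
    exact hvv (Subtype.ext h3)

/-- Crossing edges. -/
def CE : Set G.edgeSet := {e | ∃ f, D.Cr e f}

/-- The edge crossed by `e`. -/
noncomputable def pt (e : G.edgeSet) : G.edgeSet := open Classical in
  if h : ∃ f, D.Cr e f then h.choose else e

variable {D}

theorem pt_spec {e} (h : e ∈ D.CE) : D.Cr e (D.pt e) := by
  have h' : ∃ f, D.Cr e f := h
  rw [pt, dif_pos h']; exact h'.choose_spec

theorem Cr.pt_eq {e f} (h : D.Cr e f) : D.pt e = f := (pt_spec ⟨f, h⟩).unique h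

variable (D)

/-- Common interior points of two edges. -/
def Z (q : Sym2 G.edgeSet) : Set ℂ :=
  {z | ∀ e ∈ q, ∃ b, ∃ s ∈ Ioo (0 : ℝ) 1, D.cd e b s = z}

/-- A chosen common interior point of two edges, if there is one. -/
noncomputable def xq (q : Sym2 G.edgeSet) : ℂ := open Classical in
  if h : (D.Z q).Nonempty then h.some else 0

/-- A chosen crossing point of `e` and the edge crossed by it; both edges use the same point. -/
noncomputable def xp (e : G.edgeSet) : ℂ := D.xq s(e, D.pt e)

variable {D}

theorem xp_symm {e f} (h : D.Cr e f) : D.xp e = D.xp f := by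
  have : s(e, D.pt e) = s(f, D.pt f) := by rw [h.pt_eq, h.symm.pt_eq, Sym2.eq_swap]
  rw [xp, xp, this]

theorem xp_self {e} (h : e ∈ D.CE) (b) : ∃ s ∈ Ioo (0 : ℝ) 1, D.cd e b s = D.xp e := by
  have hne : (D.Z s(e, D.pt e)).Nonempty := by
    obtain ⟨-, b, b', s, hs, t, ht, h⟩ := pt_spec h
    refine ⟨D.cd e b s, ?_⟩
    intro g hg
    rw [Sym2.mem_iff] at hg
    rcases hg with rfl | rfl
    · exact ⟨b, s, hs, rfl⟩
    · exact ⟨b', t, ht, h.symm⟩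
  rw [xp, xq, dif_pos hne]
  obtain ⟨b', s, hs, h⟩ := hne.some_mem e (Sym2.mem_mk_left _ _)
  by_cases hb : b' = b
  · exact ⟨s, hs, by rw [← hb, h]⟩
  · have : b' = !b := by cases b <;> cases b' <;> simp_all
    subst this
    exact ⟨1 - s, ⟨by linarith [hs.2], by linarith [hs.1]⟩, by rw [← h, D.cd_rev]⟩

theorem xp_eq {e f} (he : e ∈ D.CE) (hf : f ∈ D.CE) (h : D.xp e = D.xp f) : e = f ∨ D.Cr e f := by
  by_cases hef : e = f
  · exact .inl hef
  · obtain ⟨s, hs, h1⟩ := xp_self he false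
    obtain ⟨t, ht, h2⟩ := xp_self hf false
    exact .inr ⟨hef, _, _, s, hs, t, ht, by rw [h1, h2, h]⟩

variable (D)

/-- The chosen crossing points are the centres of disjoint triods, formed by small pieces of the two
crossing edges. -/
theorem CE_countable : D.CE.Countable := by
  have key : ∀ z : (D.xp '' D.CE), ∃ (e f : G.edgeSet) (s0 t0 η θ : ℝ), D.Cr e f ∧ D.xp e = z ∧
      D.cd e false s0 = z ∧ D.cd f false t0 = z ∧ s0 ∈ Ioo (0 : ℝ) 1 ∧ t0 ∈ Ioo (0 : ℝ) 1 ∧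
      0 < η ∧ 0 < θ ∧ s0 - η ∈ Ioo (0 : ℝ) 1 ∧ s0 + η ∈ Ioo (0 : ℝ) 1 ∧ t0 + θ ∈ Ioo (0 : ℝ) 1 ∧
      ∀ s ∈ Icc (s0 - η) (s0 + η), ∀ t ∈ Icc (0 : ℝ) 1, D.cd e false s = D.cd f false t → s = s0 := by
    rintro ⟨_, e, he, rfl⟩
    have hc := pt_spec he
    obtain ⟨s0, hs0, h1⟩ := xp_self he false
    obtain ⟨t0, ht0, h2⟩ := xp_self ⟨e, hc.symm⟩ false
    have fin : ({s ∈ Icc (0 : ℝ) 1 | ∃ t ∈ Icc (0 : ℝ) 1, D.cd e false s = D.cd (D.pt e) false t} \ {s0}).Finite :=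
      (D.finite e (D.pt e) false false hc.1).sdiff
    have hn := Filter.inter_mem (fin.isClosed.isOpen_compl.mem_nhds (x := s0) (by simp))
      (isOpen_Ioo.mem_nhds hs0)
    obtain ⟨δ, hδ, hb⟩ := Metric.mem_nhds_iff.1 hn
    have hb' : ∀ s ∈ Icc (s0 - δ / 2) (s0 + δ / 2), s ∈ Metric.ball s0 δ := by
      intro s hs
      rw [Metric.mem_ball, Real.dist_eq, abs_lt]
      constructor <;> linarith [hs.1, hs.2]
    refine ⟨e, D.pt e, s0, t0, δ / 2, (1 - t0) / 2, hc, rfl, h1, h2.trans (xp_symm hc).symm, hs0, ht0, by positivity,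
      by linarith [ht0.2], (hb (hb' _ (by constructor <;> linarith))).2,
      (hb (hb' _ (by constructor <;> linarith))).2, ⟨by linarith [ht0.1, ht0.2], by linarith [ht0.2]⟩, ?_⟩
    intro s hs t ht h
    have := hb (hb' s hs)
    by_contra hne
    exact this.1 ⟨⟨Ioo_subset_Icc_self this.2, t, ht, h⟩, hne⟩
  choose e f s0 t0 η θ hc hx h1 h2 hs0 ht0 hη hθ hs1 hs2 ht1 hiso using key
  let ed : (D.xp '' D.CE) → Fin 3 → G.edgeSet := fun z => ![e z, e z, f z]
  let pr : (D.xp '' D.CE) → Fin 3 → ℝ := fun z => ![s0 z, s0 z, t0 z]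
  let sl : (D.xp '' D.CE) → Fin 3 → ℝ := fun z => ![η z, -η z, θ z]
  have ms0 : ∀ z, ∀ s ∈ Icc (0 : ℝ) 1, s0 z + s * η z ∈ Icc (s0 z - η z) (s0 z + η z) := by
    intro z s hs
    constructor <;> nlinarith [hη z, hs.1, hs.2]
  have ms1 : ∀ z, ∀ s ∈ Icc (0 : ℝ) 1, s0 z + s * -η z ∈ Icc (s0 z - η z) (s0 z + η z) := by
    intro z s hs
    constructor <;> nlinarith [hη z, hs.1, hs.2]
  have mt : ∀ z, ∀ s ∈ Icc (0 : ℝ) 1, t0 z + s * θ z ∈ Ioo (0 : ℝ) 1 := by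
    intro z s hs
    have a1 := mul_nonneg hs.1 (hθ z).le
    have a2 := mul_le_of_le_one_left (hθ z).le hs.2
    exact ⟨by linarith [(ht0 z).1], by linarith [(ht1 z).2]⟩
  have sub : ∀ z, ∀ s ∈ Icc (s0 z - η z) (s0 z + η z), s ∈ Ioo (0 : ℝ) 1 := fun z s hs =>
    ⟨by linarith [(hs1 z).1, hs.1], by linarith [(hs2 z).2, hs.2]⟩
  have mI : ∀ z j, ∀ s ∈ Icc (0 : ℝ) 1, pr z j + s * sl z j ∈ Ioo (0 : ℝ) 1 := by
    intro z j s hs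
    fin_cases j
    · exact sub z _ (ms0 z s hs)
    · exact sub z _ (ms1 z s hs)
    · exact mt z s hs
  have hed : ∀ z j, ed z j = e z ∨ ed z j = f z := by
    intro z j; fin_cases j <;> simp [ed]
  have z0 : ∀ z j, D.cd (ed z j) false (pr z j) = z := by
    intro z j; fin_cases j
    · exact h1 z
    · exact h1 z
    · exact h2 z
  have sl0 : ∀ z j, sl z j ≠ 0 := by
    intro z j; fin_cases j
    · exact (hη z).ne'
    · exact neg_ne_zero.2 (hη z).ne'
    · exact (hθ z).ne'
  have sub' : Ioo (0 : ℝ) 1 ⊆ Icc 0 1 := Ioo_subset_Icc_self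
  have prI : ∀ z j, pr z j ∈ Ioo (0 : ℝ) 1 := fun z j => by simpa using mI z j 0 (by simp)
  have cnt : Countable (D.xp '' D.CE) := by
    refine Moore.countable (ι := D.xp '' D.CE)
      (fun z j => (D.cd (ed z j) false).comp ⟨fun s => pr z j + s * sl z j, by fun_prop⟩)
      (fun z => z) ?_ ?_ ?_ ?_
    · intro z j
      simp [z0]
    · intro z j
      simp only [ContinuousMap.comp_apply, ContinuousMap.coe_mk]
      intro h
      rw [← z0 z j] at h
      have := D.cd_inj _ _ (sub' (mI z j 1 (by simp))) (sub' (prI z j)) h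
      exact sl0 z j (by linarith)
    · have main : ∀ z, ∀ s ∈ Icc (s0 z - η z) (s0 z + η z), ∀ t ∈ Icc (0 : ℝ) 1,
          D.cd (e z) false s = D.cd (f z) false t → D.cd (e z) false s = z := by
        intro z s hs t ht h
        rw [hiso z s hs t ht h, h1]
      have main2 : ∀ z, ∀ s ∈ Icc (0 : ℝ) 1, ∀ t ∈ Icc (0 : ℝ) 1,
          D.cd (e z) false (s0 z + s * η z) = D.cd (e z) false (s0 z + t * -η z) →
          D.cd (e z) false (s0 z + s * η z) = z := by
        intro z s hs t ht h
        have := D.cd_inj _ _ (sub' (sub z _ (ms0 z s hs))) (sub' (sub z _ (ms1 z t ht))) h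
        have hz : s * η z = 0 := by
          have a1 := mul_nonneg hs.1 (hη z).le
          have a2 := mul_nonneg ht.1 (hη z).le
          linarith
        rw [hz, add_zero, h1]
      intro z j j' hjj s hs t ht h
      simp only [ContinuousMap.comp_apply, ContinuousMap.coe_mk] at h ⊢
      fin_cases j <;> fin_cases j' <;> simp only [ed, pr, sl] at h ⊢ <;> try exact (hjj rfl).elim
      · exact main2 z s hs t ht h
      · exact main z _ (ms0 z s hs) _ (sub' (mt z t ht)) h
      · exact h.trans (main2 z t ht s hs h.symm)
      · exact main z _ (ms1 z s hs) _ (sub' (mt z t ht)) h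
      · exact h.trans (main z _ (ms0 z t ht) _ (sub' (mt z s hs)) h.symm)
      · exact h.trans (main z _ (ms1 z t ht) _ (sub' (mt z s hs)) h.symm)
    · intro z z' hzz j j' s hs t ht h
      simp only [ContinuousMap.comp_apply, ContinuousMap.coe_mk] at h
      apply hzz
      apply Subtype.ext
      have hcz : ∀ z j, ed z j ∈ D.CE ∧ D.xp (ed z j) = z := by
        intro z j
        rcases hed z j with hh | hh <;> rw [hh]
        · exact ⟨⟨_, hc z⟩, hx z⟩
        · exact ⟨⟨_, (hc z).symm⟩, by rw [← xp_symm (hc z), hx z]⟩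
      rw [← (hcz z j).2, ← (hcz z' j').2]
      by_cases hE : ed z j = ed z' j'
      · rw [hE]
      · exact xp_symm ⟨hE, _, _, _, mI z j s hs, _, mI z' j' t ht, h⟩
  have hcov : D.CE ⊆ ⋃ z ∈ D.xp '' D.CE, {g | g ∈ D.CE ∧ D.xp g = z} := by
    intro g hg
    simp only [mem_iUnion]
    exact ⟨_, ⟨g, hg, rfl⟩, hg, rfl⟩
  refine Countable.mono hcov ?_
  refine Countable.biUnion (Set.countable_coe_iff.1 cnt) ?_
  rintro _ ⟨g, hg, rfl⟩
  refine ((Set.finite_singleton g).union (Set.finite_singleton (D.pt g))).countable.mono ?_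
  rintro k ⟨hk, hkg⟩
  rcases xp_eq hg hk hkg.symm with h | h
  · exact .inl h.symm
  · exact .inr h.pt_eq.symm

/-- The vertices kept in the countable core: those of degree at least three and the ends of
crossing edges. -/
def B : Set V := D.V3 ∪ {v | ∃ e ∈ D.CE, v ∈ (e : Sym2 V)}

theorem B_countable : D.B.Countable := by
  refine D.V3_countable.union ?_
  have : {v | ∃ e ∈ D.CE, v ∈ (e : Sym2 V)} ⊆ ⋃ e ∈ D.CE, {v | v ∈ (e : Sym2 V)} := by
    rintro v ⟨e, he, hv⟩
    simp only [mem_iUnion]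
    exact ⟨e, he, hv⟩
  refine Countable.mono this (D.CE_countable.biUnion ?_)
  intro e _
  refine ((Set.finite_singleton (D.vt e false)).union (Set.finite_singleton (D.vt e true))).countable.mono ?_
  intro v hv
  exact (D.mem_iff false).1 hv

theorem B_deg : ∀ v ∉ D.B, ∀ a b c, G.Adj v a → G.Adj v b → G.Adj v c → a = b ∨ a = c ∨ b = c := by
  intro v hv a b c h1 h2 h3
  by_contra hc
  push Not at hc
  exact hv (.inl ⟨a, b, c, hc.1, hc.2.1, hc.2.2, h1, h2, h3⟩)

theorem not_CE {e : G.edgeSet} {v : V} (h : v ∈ (e : Sym2 V)) (hv : v ∉ D.B) : e ∉ D.CE :=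
  fun he => hv (.inr ⟨e, he, h⟩)

end CDrawing

/-! ### Redrawing the core -/

/-- Labels of the curves of the redrawn core: loops at vertices, curves replacing a component of
low degree vertices between two vertices, and edges or half-edges. -/
inductive Lab (V E : Type*)
  | loop (v : V)
  | pair (x y : V)
  | dart (e : E) (b : Bool)

namespace CDrawing
variable {V : Type*} {G : SimpleGraph V} (D : CDrawing G)

/-- Edges crossing an edge with no common end. -/
def Xe (e : G.edgeSet) : Prop := ∃ f, D.X e f

variable {D} in
theorem Xe.ce {e} (h : D.Xe e) : e ∈ D.CE := h.imp fun _ h => h.1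

theorem exists_fb (e : G.edgeSet) :
    ∃ b, ∀ f, D.Cr e f → ¬ D.X e f → D.vt e (!b) ∈ (f : Sym2 V) := by
  by_cases h : ∃ f, D.Cr e f ∧ ¬ D.X e f
  · obtain ⟨f, h1, h2⟩ := h
    have : ∃ v, v ∈ (e : Sym2 V) ∧ v ∈ (f : Sym2 V) := by
      by_contra hc
      push Not at hc
      exact h2 ⟨h1, hc⟩
    obtain ⟨v, hv, hf⟩ := this
    rcases (D.mem_iff false).1 hv with rfl | rfl
    · exact ⟨true, fun g hg _ => h1.unique hg ▸ hf⟩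
    · exact ⟨false, fun g hg _ => h1.unique hg ▸ hf⟩
  · push Not at h
    exact ⟨false, fun f h1 h2 => (h2 (h f h1)).elim⟩

/-- The foot of an edge `e` without independent crossing: if `e` crosses an adjacent edge, the
other end of `e` is the common one. -/
noncomputable def fb (e : G.edgeSet) : Bool := (D.exists_fb e).choose

variable {D} in
theorem fb_spec {e f} (h : D.Cr e f) (h' : ¬ D.X e f) : D.vt e (!D.fb e) ∈ (f : Sym2 V) :=
  (D.exists_fb e).choose_spec f h h'

theorem exists_k (e : G.edgeSet) (b : Bool) : ∃ k : ℝ, D.ep e < k ∧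
    ((D.Xe e ∧ k < 1 ∧ D.cd e b k = D.xp e) ∨ (¬ D.Xe e ∧ k = 1)) := by
  by_cases h : D.Xe e
  · obtain ⟨s, hs, h1⟩ := xp_self h.ce b
    refine ⟨s, ?_, .inl ⟨h, hs.2, h1⟩⟩
    by_contra hc
    obtain ⟨f, hf⟩ := h
    obtain ⟨t, ht, h2⟩ := xp_self (D := D) (e := f) ⟨e, hf.1.symm⟩ b
    exact D.ep_spec ⟨hs.1, not_lt.1 hc⟩ (Ioo_subset_Icc_self ht) hf.1.1
      (h1.trans ((xp_symm hf.1).trans h2.symm))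
  · exact ⟨1, by linarith [D.ep_lt e], .inr ⟨h, rfl⟩⟩

/-- The parameter of the hub of a dart: the crossing point, or the other end. -/
noncomputable def k (e : G.edgeSet) (b : Bool) : ℝ := (D.exists_k e b).choose

theorem lt_k (e b) : D.ep e < D.k e b := (D.exists_k e b).choose_spec.1
variable {D} in
theorem k_X {e} (h : D.Xe e) (b) : D.k e b < 1 ∧ D.cd e b (D.k e b) = D.xp e := by
  rcases (D.exists_k e b).choose_spec.2 with h1 | h1
  · exact h1.2
  · exact (h1.1 h).elim
variable {D} in
theorem k_N {e} (h : ¬ D.Xe e) (b) : D.k e b = 1 := by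
  rcases (D.exists_k e b).choose_spec.2 with h1 | h1
  · exact (h h1.1).elim
  · exact h1.2
theorem k_mem (e b) : D.k e b ∈ Icc (0 : ℝ) 1 := by
  refine ⟨((D.ep_pos e).trans (D.lt_k e b)).le, ?_⟩
  by_cases h : D.Xe e
  · exact (k_X h b).1.le
  · exact (k_N h b).le

variable {D} in
theorem k_add {e} (h : D.Xe e) (b) : D.k e b + D.k e (!b) = 1 := by
  have h1 := (k_X h b).2
  have h2 := (k_X h (!b)).2
  rw [D.cd_rev] at h2
  have m := D.k_mem e (!b)
  have := D.cd_inj e b (D.k_mem e b) (by constructor <;> linarith [m.1, m.2]) (h1.trans h2.symm)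
  linarith

/-- The nodes of the core. -/
def Nd : Set ℂ := D.p '' D.B ∪ D.xp '' {e | D.Xe e}

variable (L : Layout G D.B)

/-- The labels that are used. -/
def ok : Lab V G.edgeSet → Prop
  | .loop v => v ∈ D.B
  | .pair x y => x ≠ y ∧ ∃ c, L.lo c x ∧ L.hi c y
  | .dart e b => (∀ v ∈ (e : Sym2 V), v ∈ D.B) ∧ (D.Xe e ∨ b = D.fb e)

/-- The labels that are used and are not loops. -/
def okJ : Lab V G.edgeSet → Prop
  | .loop _ => False
  | .pair x y => x ≠ y ∧ ∃ c, L.lo c x ∧ L.hi c y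
  | .dart e b => (∀ v ∈ (e : Sym2 V), v ∈ D.B) ∧ (D.Xe e ∨ b = D.fb e)

/-- A component leading from `x` to `y`. -/
noncomputable def rt (x y : V) : V := open Classical in
  if h : ∃ c, L.lo c x ∧ L.hi c y then h.choose else x

theorem rt_spec {x y} (h : ∃ c, L.lo c x ∧ L.hi c y) :
    L.lo (D.rt L x y) x ∧ L.hi (D.rt L x y) y := by
  rw [rt, dif_pos h]; exact h.choose_spec

/-- The two ends of a labelled curve. -/
noncomputable def en : Lab V G.edgeSet → Bool → ℂ
  | .loop v, _ => D.p v
  | .pair x y, b => D.p (if b then y else x)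
  | .dart e b, c => if c then D.p (D.vt e b) else D.cd e b (D.k e b)

/-- An inner point of a labelled curve. -/
noncomputable def md : Lab V G.edgeSet → ℂ
  | .loop v => D.p v
  | .pair x y => D.p (D.rt L x y)
  | .dart e b => D.cd e b (D.ep e)

/-- The union of the edges of the component `c`, with the edges from it to `x`. -/
def Tc (c x : V) : Set ℂ := {z | ∃ (f : G.edgeSet) (b : Bool), (∃ t ∈ Icc (0 : ℝ) 1, D.cd f b t = z) ∧
  (∃ v ∈ (f : Sym2 V), v ∉ D.B ∧ L.ρ v = c) ∧ ∀ w ∈ (f : Sym2 V), w ∈ D.B → w = x}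

/-- The two pieces of a labelled curve. -/
noncomputable def SS : Lab V G.edgeSet → Bool → Set ℂ
  | .loop _, _ => ∅
  | .pair x y, b => D.Tc L (D.rt L x y) (if b then y else x)
  | .dart e b, c => D.cd e b '' (if c then Icc 0 (D.ep e) else Icc (D.ep e) (D.k e b))

theorem Tc_joined {c v x : V} (hv : v ∉ D.B) (hc : L.ρ v = c) (hx : G.Adj v x) :
    JoinedIn (D.Tc L c x) (D.p c) (D.p x) := by
  have step : ∀ a b, G.Adj a b → a ∉ D.B → L.ρ a = c → (b ∉ D.B ∨ b = x) →
      JoinedIn (D.Tc L c x) (D.p a) (D.p b) := by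
    intro a b hab ha hac hb
    obtain ⟨e, d, h1, h2⟩ := D.exists_dart hab
    have h0 : D.cd e d 0 = D.p a := by rw [D.cd_zero, h1]
    have h1' : D.cd e d 1 = D.p b := by rw [D.cd_one, h2]
    rw [← h0, ← h1']
    have hsub : D.cd e d '' Icc 0 1 ⊆ D.Tc L c x := by
      rintro z ⟨t, ht, rfl⟩
      refine ⟨e, d, ⟨t, ht, rfl⟩, ⟨a, h1 ▸ D.vt_mem e d, ha, hac⟩, ?_⟩
      intro w hw hwB
      rcases (D.mem_iff d).1 hw with rfl | rfl
      · exact (ha (h1 ▸ hwB)).elim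
      · rw [h2] at hwB ⊢
        exact hb.resolve_left (fun h => h hwB)
    refine JoinedIn.mono ?_ hsub
    have hp : IsPathConnected (Icc (0 : ℝ) 1) := (convex_Icc 0 1).isPathConnected ⟨0, by simp⟩
    exact (hp.image (D.cd e d).continuous).joinedIn _ ⟨0, by simp, rfl⟩ _ ⟨1, by simp, rfl⟩
  have hr := L.ρ_reach v hv
  rw [hc] at hr
  have : L.ρ c = c ∧ JoinedIn (D.Tc L c x) (D.p c) (D.p x) := by
    have : ∀ a, Relation.ReflTransGen (fun a b => G.Adj a b ∧ a ∉ D.B ∧ b ∉ D.B) a v →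
        L.ρ a = c ∧ JoinedIn (D.Tc L c x) (D.p a) (D.p x) := by
      intro a ha
      induction ha using Relation.ReflTransGen.head_induction_on with
      | refl => exact ⟨hc, step v x hx hv hc (.inr rfl)⟩
      | head h1 h2 ih =>
        have := (L.ρ_adj _ _ h1.1 h1.2.1 h1.2.2).trans ih.1
        exact ⟨this, (step _ _ h1.1 h1.2.1 this (.inl h1.2.2)).trans ih.2⟩
    exact this c hr
  exact this.2

theorem dart_joined (e b) : ∀ c, JoinedIn (D.SS L (.dart e b) c) (D.md L (.dart e b)) (D.en (.dart e b) c) := by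
  have hp : ∀ x y : ℝ, x ≤ y → ∀ u ∈ Icc x y, ∀ v ∈ Icc x y,
      JoinedIn (D.cd e b '' Icc x y) (D.cd e b u) (D.cd e b v) := by
    intro x y hxy u hu v hv
    have hp : IsPathConnected (Icc x y) := (convex_Icc x y).isPathConnected ⟨u, hu⟩
    exact (hp.image (D.cd e b).continuous).joinedIn _ ⟨u, hu, rfl⟩ _ ⟨v, hv, rfl⟩
  intro c
  have h1 := (D.ep_pos e).le
  have h2 := (D.lt_k e b).le
  cases c
  · exact hp _ _ h2 _ ⟨le_rfl, h2⟩ _ ⟨h2, le_rfl⟩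
  · have := hp _ _ h1 _ ⟨h1, le_rfl⟩ 0 ⟨le_rfl, h1⟩
    rw [D.cd_zero] at this
    exact this

theorem SS_joined {l} (h : D.okJ L l) (c) : JoinedIn (D.SS L l c) (D.md L l) (D.en l c) := by
  match l with
  | .loop _ => exact h.elim
  | .dart e b => exact D.dart_joined L e b c
  | .pair x y =>
    obtain ⟨h1, h2⟩ := D.rt_spec L h.2
    cases c
    · obtain ⟨-, v, hv, hc, ha⟩ := L.lo_spec _ _ h1
      exact D.Tc_joined L hv hc ha
    · obtain ⟨-, v, hv, hc, ha⟩ := L.hi_spec _ _ h2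
      exact D.Tc_joined L hv hc ha

theorem en_ne {l} (h : D.okJ L l) : D.en l false ≠ D.en l true := by
  match l with
  | .loop _ => exact h.elim
  | .pair x y => exact fun hh => h.1 (D.p_inj hh)
  | .dart e b =>
    intro hh
    change D.cd e b (D.k e b) = D.p (D.vt e b) at hh
    rw [← D.cd_zero] at hh
    have := D.cd_inj e b (D.k_mem e b) (by simp) hh
    linarith [D.lt_k e b, D.ep_pos e]

theorem en_mem {l} (h : D.okJ L l) (c) : D.en l c ∈ D.Nd := by
  match l with
  | .loop _ => exact h.elim
  | .pair x y =>
    obtain ⟨h1, h2⟩ := D.rt_spec L h.2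
    left
    cases c
    · exact ⟨x, (L.lo_spec _ _ h1).1, rfl⟩
    · exact ⟨y, (L.hi_spec _ _ h2).1, rfl⟩
  | .dart e b =>
    cases c
    · change D.cd e b (D.k e b) ∈ _
      by_cases hx : D.Xe e
      · exact .inr ⟨e, hx, (k_X hx b).2.symm⟩
      · rw [k_N hx b, D.cd_one]
        exact .inl ⟨_, h.1 _ (D.vt_mem e _), rfl⟩
    · exact .inl ⟨_, h.1 _ (D.vt_mem e b), rfl⟩

theorem SS_dart {e b c z} (h : z ∈ D.SS L (.dart e b) c) : ∃ s ∈ Icc (0 : ℝ) 1, D.cd e b s = z ∧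
    (c = true ∧ s ≤ D.ep e ∨ c = false ∧ D.ep e ≤ s ∧ s ≤ D.k e b) := by
  obtain ⟨s, hs, rfl⟩ := h
  have := D.ep_pos e
  have := D.ep_lt e
  have := D.k_mem e b
  cases c
  · have hs : s ∈ Icc (D.ep e) (D.k e b) := hs
    exact ⟨s, ⟨by linarith [hs.1], by linarith [hs.2, this.2]⟩, rfl, .inr ⟨rfl, hs⟩⟩
  · have hs : s ∈ Icc 0 (D.ep e) := hs
    exact ⟨s, ⟨by linarith [hs.1], by linarith [hs.2]⟩, rfl, .inl ⟨rfl, hs.2⟩⟩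

/-- A labelled curve passes through no other nodes. -/
theorem SS_node {l c q} (h : D.okJ L l) (hq : q ∈ D.Nd) (hS : q ∈ D.SS L l c) : q = D.en l c := by
  match l with
  | .loop _ => exact h.elim
  | .pair x y =>
    obtain ⟨f, b, ⟨t, ht, rfl⟩, ⟨v, hv, hvB, hvc⟩, hw⟩ := hS
    rcases hq with ⟨w, hwB, hq⟩ | ⟨e, he, hq⟩
    · rw [← hq, hw w (D.vertex_mem ht hq.symm) hwB]; rfl
    · exfalso
      have hf := D.not_CE hv hvB
      obtain ⟨s, hs, h1⟩ := xp_self (Xe.ce he) false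
      have hef : e ≠ f := by rintro rfl; exact hf (Xe.ce he)
      rcases D.meet hef (Ioo_subset_Icc_self hs) ht (h1.trans hq) with ⟨-, -, hc⟩ | ⟨u, -, -, hu⟩
      · exact hf ⟨e, hc.symm⟩
      · exact D.no_vertex _ _ _ hs _ hu
  | .dart e b =>
    obtain ⟨s, hs, rfl, hc⟩ := D.SS_dart L hS
    have hk := D.lt_k e b
    have hk1 := D.k_mem e b
    have := D.ep_pos e
    have := D.ep_lt e
    rcases hq with ⟨w, hwB, hq⟩ | ⟨f, hf, hq⟩
    · rcases D.vertex_on hs hq.symm with ⟨h0, h1⟩ | ⟨h0, h1⟩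
      · rcases hc with ⟨rfl, hc⟩ | ⟨rfl, hc⟩
        · rw [h0, D.cd_zero]; rfl
        · linarith
      · rcases hc with ⟨rfl, hc⟩ | ⟨rfl, hc⟩
        · linarith
        · have : s = D.k e b := by linarith [hk1.2]
          rw [this]; rfl
    · obtain ⟨t, ht, h1⟩ := xp_self (Xe.ce hf) b
      -- the node is the crossing point of `e`
      have main : D.Xe e ∧ D.xp f = D.xp e := by
        by_cases hef : e = f
        · subst hef; exact ⟨hf, rfl⟩
        · rcases D.meet hef hs (Ioo_subset_Icc_self ht) (hq.symm.trans h1.symm) with ⟨-, -, hcr⟩ | ⟨u, -, -, hu⟩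
          · obtain ⟨g, hg⟩ := hf
            exact ⟨⟨f, (hg.of_cr hcr.symm).symm⟩, (xp_symm hcr).symm⟩
          · exact (D.no_vertex _ _ _ ht u (h1.trans (hq.trans hu))).elim
      have hks := k_X main.1 b
      have : s = D.k e b := D.cd_inj e b hs hk1 (hq.symm.trans (main.2.trans hks.2.symm))
      rcases hc with ⟨rfl, hc⟩ | ⟨rfl, hc⟩
      · linarith
      · rw [this]; rfl

/-- Pieces of different labelled curves meet only if they lead to the same node. -/
theorem SS_SS {l l' c c' z} (h : D.okJ L l) (h' : D.okJ L l') (hne : l ≠ l') (hz : z ∈ D.SS L l c)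
    (hz' : z ∈ D.SS L l' c') : D.en l c = D.en l' c' := by
  have dn : ∀ {e b x y c c'}, D.okJ L (.dart e b) → D.okJ L (.pair x y) → z ∈ D.SS L (.dart e b) c →
      z ∈ D.SS L (.pair x y) c' → z ∈ D.Nd := by
    intro e b x y c c' h1 h2 h3 h4
    obtain ⟨s, hs, rfl, -⟩ := D.SS_dart L h3
    obtain ⟨f, b', ⟨t, ht, h5⟩, ⟨v, hv, hvB, hvc⟩, hw⟩ := h4
    have hef : e ≠ f := by rintro rfl; exact hvB (h1.1 v hv)
    rcases D.meet hef hs ht h5.symm with ⟨-, -, hc⟩ | ⟨u, hu, -, hu'⟩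
    · exact (D.not_CE hv hvB ⟨e, hc.symm⟩).elim
    · exact .inl ⟨u, h1.1 u hu, hu'.symm⟩
  match l, l' with
  | .loop _, _ => exact h.elim
  | _, .loop _ => exact h'.elim
  | .pair x y, .dart e b =>
    have hn := dn h' h hz' hz
    rw [← D.SS_node L h hn hz, ← D.SS_node L h' hn hz']
  | .dart e b, .pair x y =>
    have hn := dn h h' hz hz'
    rw [← D.SS_node L h hn hz, ← D.SS_node L h' hn hz']
  | .pair x y, .pair x' y' =>
    have hcc : D.rt L x y ≠ D.rt L x' y' := by
      intro hh
      obtain ⟨h1, h2⟩ := D.rt_spec L h.2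
      obtain ⟨h3, h4⟩ := D.rt_spec L h'.2
      rw [hh] at h1 h2
      exact hne (by rw [L.lo_unique _ _ _ h1 h3, L.hi_unique _ _ _ h2 h4])
    have hn : z ∈ D.Nd := by
      obtain ⟨f, b, ⟨t, ht, rfl⟩, ⟨v, hv, hvB, hvc⟩, hw⟩ := hz
      obtain ⟨f', b', ⟨t', ht', h5⟩, ⟨v', hv', hvB', hvc'⟩, hw'⟩ := hz'
      have rr : ∀ (f : G.edgeSet) u v, u ∈ (f : Sym2 V) → v ∈ (f : Sym2 V) → u ∉ D.B → v ∉ D.B → L.ρ u = L.ρ v := by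
        intro f u v hu hv huB hvB
        by_cases huv : u = v
        · rw [huv]
        · refine L.ρ_adj _ _ ?_ huB hvB
          have := f.2
          rw [(Sym2.mem_and_mem_iff huv).1 ⟨hu, hv⟩] at this
          exact this
      by_cases hff : f = f'
      · subst hff
        exact (hcc (by rw [← hvc, ← hvc']; exact rr f _ _ hv hv' hvB hvB')).elim
      · rcases D.meet hff ht ht' h5.symm with ⟨-, -, hc⟩ | ⟨u, hu, hu', hup⟩
        · exact (D.not_CE hv hvB ⟨f', hc⟩).elim
        · by_cases huB : u ∈ D.B
          · exact .inl ⟨u, huB, hup.symm⟩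
          · refine (hcc ?_).elim
            rw [← hvc, ← hvc', rr f _ _ hv hu hvB huB, rr f' _ _ hv' hu' hvB' huB]
    rw [← D.SS_node L h hn hz, ← D.SS_node L h' hn hz']
  | .dart e b, .dart e' b' =>
    obtain ⟨s, hs, h1, hc⟩ := D.SS_dart L hz
    obtain ⟨s', hs', h1', hc'⟩ := D.SS_dart L hz'
    have hk := D.lt_k e b
    have hk' := D.lt_k e' b'
    by_cases hee : e = e'
    · subst hee
      have hb : b' = !b := by
        by_contra hh
        apply hne
        congr 1
        cases b <;> cases b' <;> simp_all
      subst hb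
      have hX : D.Xe e := by
        rcases h.2 with hx | hx
        · exact hx
        · rcases h'.2 with hx' | hx'
          · exact hx'
          · rw [← hx] at hx'; simp at hx'
      have hadd := k_add hX b
      have hss : s = 1 - s' := by
        refine D.cd_inj e b hs (by constructor <;> linarith [hs'.1, hs'.2]) ?_
        rw [← D.cd_rev, h1, h1']
      rcases hc with ⟨rfl, hc⟩ | ⟨rfl, hc⟩
      · rcases hc' with ⟨rfl, hc'⟩ | ⟨rfl, hc'⟩ <;> linarith
      · rcases hc' with ⟨rfl, hc'⟩ | ⟨rfl, hc'⟩
        · linarith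
        · exact (k_X hX b).2.trans (k_X hX (!b)).2.symm
    · rcases D.meet hee hs hs' (h1.trans h1'.symm) with ⟨hsO, hsO', hcr⟩ | ⟨u, hu, -, hup⟩
      · have c1 : c = false := by
          rcases hc with ⟨rfl, hc⟩ | ⟨rfl, hc⟩
          · exact (D.ep_spec ⟨hsO.1, hc⟩ hs' hee (h1.trans h1'.symm)).elim
          · rfl
        have c2 : c' = false := by
          rcases hc' with ⟨rfl, hc⟩ | ⟨rfl, hc⟩
          · exact (D.ep_spec ⟨hsO'.1, hc⟩ hs (Ne.symm hee) (h1'.trans h1.symm)).elim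
          · rfl
        subst c1; subst c2
        change D.cd e b (D.k e b) = D.cd e' b' (D.k e' b')
        by_cases hX : D.X e e'
        · rw [(k_X ⟨e', hX⟩ b).2, (k_X ⟨e, hX.symm⟩ b').2, xp_symm hcr]
        · have n1 : ¬ D.Xe e := fun ⟨g, hg⟩ => hX (hg.of_cr hcr)
          have n2 : ¬ D.Xe e' := fun ⟨g, hg⟩ => hX (hg.of_cr hcr.symm).symm
          rw [k_N n1, k_N n2, D.cd_one, D.cd_one]
          have f1 := fb_spec hcr hX
          have f2 := fb_spec hcr.symm (fun hh => hX hh.symm)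
          rw [← h.2.resolve_left n1] at f1
          rw [← h'.2.resolve_left n2] at f2
          by_contra hcon
          exact hee (edge_eq (fun hh => hcon (congrArg D.p hh)) (D.vt_mem e _) f2 f1 (D.vt_mem e' _))
      · have hn : z ∈ D.Nd := .inl ⟨u, h.1 u hu, by rw [← h1, hup]⟩
        rw [← D.SS_node L h hn hz, ← D.SS_node L h' hn hz']

theorem okJ_countable : {l | D.okJ L l}.Countable := by
  have hB := D.B_countable
  have h1 : ((fun q : V × V => (Lab.pair q.1 q.2 : Lab V G.edgeSet)) '' (D.B ×ˢ D.B)).Countable :=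
    (hB.prod hB).image _
  have h2 : {e : G.edgeSet | ∀ v ∈ (e : Sym2 V), v ∈ D.B}.Countable := by
    have hi : Function.Injective (fun e : G.edgeSet => (D.vt e false, D.vt e true)) := by
      intro e f h
      simp only [Prod.mk.injEq] at h
      apply Subtype.ext
      rw [D.vt_edge e, D.vt_edge f, h.1, h.2]
    refine ((hB.prod hB).preimage hi).mono ?_
    intro e he
    exact ⟨he _ (D.vt_mem e _), he _ (D.vt_mem e _)⟩
  have h3 : ((fun q : G.edgeSet × Bool => (Lab.dart q.1 q.2 : Lab V G.edgeSet)) ''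
      ({e : G.edgeSet | ∀ v ∈ (e : Sym2 V), v ∈ D.B} ×ˢ univ)).Countable :=
    (h2.prod (Set.to_countable _)).image _
  refine (h1.union h3).mono ?_
  rintro (v | ⟨x, y⟩ | ⟨e, b⟩) h
  · exact h.elim
  · obtain ⟨-, c, h1, h2⟩ := h
    exact .inl ⟨(x, y), ⟨(L.lo_spec _ _ h1).1, (L.hi_spec _ _ h2).1⟩, rfl⟩
  · exact .inr ⟨(e, b), ⟨h.1, trivial⟩, rfl⟩

theorem Nd_countable : D.Nd.Countable :=
  (D.B_countable.image _).union ((D.CE_countable.mono fun _ h => Xe.ce h).image _)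

/-- The core redrawn by `fat_redraw`: vertices are placed by `P`, the crossing points of independent
crossing edges by `Q`, and every label has a family of curves, all disjoint apart from their ends. -/
theorem core : ∃ (P : V → ℝ × ℝ) (Q : G.edgeSet → ℝ × ℝ) (host : Lab V G.edgeSet → ℝ → ℝ → ℝ × ℝ),
    InjOn P D.B ∧
    (∀ l, D.ok L l → ∀ s ∈ Ioo (0 : ℝ) 1, Continuous (host l s)) ∧
    (∀ v ∈ D.B, ∀ s ∈ Ioo (0 : ℝ) 1, host (.loop v) s 0 = P v ∧ host (.loop v) s 1 = P v) ∧
    (∀ x y, D.ok L (.pair x y) → ∀ s ∈ Ioo (0 : ℝ) 1, host (.pair x y) s 0 = P x ∧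
      host (.pair x y) s 1 = P y) ∧
    (∀ e b, D.ok L (.dart e b) → D.Xe e → ∀ s ∈ Ioo (0 : ℝ) 1, host (.dart e b) s 0 = Q e ∧
      host (.dart e b) s 1 = P (D.vt e b)) ∧
    (∀ e b, D.ok L (.dart e b) → ¬ D.Xe e → ∀ s ∈ Ioo (0 : ℝ) 1,
      host (.dart e b) s 0 = P (D.vt e (!b)) ∧ host (.dart e b) s 1 = P (D.vt e b)) ∧
    (∀ l, D.ok L l → ∀ s ∈ Ioo (0 : ℝ) 1, ∀ t ∈ Icc (0 : ℝ) 1, ‖host l s t‖ ≤ 3) ∧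
    (∀ l l', D.ok L l → D.ok L l' → ∀ s ∈ Ioo (0 : ℝ) 1, ∀ s' ∈ Ioo (0 : ℝ) 1, ∀ t ∈ Ioo (0 : ℝ) 1,
        ∀ t' ∈ Icc (0 : ℝ) 1, host l s t = host l' s' t' → l = l' ∧ s = s' ∧ t = t') ∧
    (∀ e f, D.Xe e → D.Xe f → Q e = Q f → e = f ∨ D.X e f) ∧
    (∀ e f, D.X e f → Q e = Q f) ∧
    (∀ e v, D.Xe e → v ∈ D.B → Q e ≠ P v) := by
  classical
  have c1 : Countable D.Nd := D.Nd_countable.to_subtype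
  have c2 : Countable {l // D.okJ L l} := (D.okJ_countable L).to_subtype
  obtain ⟨P, host, hP, hc, hl, hj, hb, hk⟩ := fat_redraw (K := D.Nd) (J := {l // D.okJ L l})
    Subtype.val Subtype.val_injective (fun l c => ⟨D.en l.1 c, D.en_mem L l.2 c⟩)
    (fun l h => D.en_ne L l.2 (congrArg Subtype.val h)) (fun l => D.md L l.1) (fun l c => D.SS L l.1 c)
    (fun l c => D.SS_joined L l.2 c) (fun l c q hq => Subtype.ext (D.SS_node L l.2 q.2 hq))
    (fun l l' c c' z hne hz hz' => Subtype.ext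
      (D.SS_SS L l.2 l'.2 (fun hh => hne (Subtype.ext hh)) hz hz'))
  let P' : ℂ → ℝ × ℝ := fun z => if h : z ∈ D.Nd then P ⟨z, h⟩ else 0
  have P'_eq : ∀ z (h : z ∈ D.Nd), P' z = P ⟨z, h⟩ := fun z h => dif_pos h
  have P'_inj : ∀ z z', z ∈ D.Nd → z' ∈ D.Nd → P' z = P' z' → z = z' := by
    intro z z' h h' he
    rw [P'_eq z h, P'_eq z' h'] at he
    exact congrArg Subtype.val (hP he)
  have ndB : ∀ v ∈ D.B, D.p v ∈ D.Nd := fun v hv => .inl ⟨v, hv, rfl⟩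
  have ndX : ∀ e, D.Xe e → D.xp e ∈ D.Nd := fun e he => .inr ⟨e, he, rfl⟩
  have hidx : ∀ l, ∃ hst : ℝ → ℝ → ℝ × ℝ, D.ok L l → ∃ n : D.Nd ⊕ {l // D.okJ L l}, hst = host n ∧
      ((∃ v, ∃ hv : v ∈ D.B, l = .loop v ∧ n = .inl ⟨D.p v, ndB v hv⟩) ∨ ∃ h : D.okJ L l, n = .inr ⟨l, h⟩) := by
    intro l
    by_cases h : D.ok L l
    · match l with
      | .loop v => exact ⟨_, fun _ => ⟨.inl ⟨D.p v, ndB v h⟩, rfl, .inl ⟨v, h, rfl, rfl⟩⟩⟩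
      | .pair x y => exact ⟨_, fun _ => ⟨.inr ⟨.pair x y, h⟩, rfl, .inr ⟨h, rfl⟩⟩⟩
      | .dart e b => exact ⟨_, fun _ => ⟨.inr ⟨.dart e b, h⟩, rfl, .inr ⟨h, rfl⟩⟩⟩
    · exact ⟨0, fun hh => (h hh).elim⟩
  choose hst hn using hidx
  have nj : ∀ l (h : D.okJ L l), hst l = host (.inr ⟨l, h⟩) := by
    intro l h
    have h' : D.ok L l := by
      match l with
      | .loop _ => exact h.elim
      | .pair x y => exact h
      | .dart e b => exact h
    obtain ⟨n, h0, ⟨v, hv, rfl, h2⟩ | ⟨h1, h2⟩⟩ := hn l h'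
    · exact h.elim
    · rw [h0, h2]
  have nl : ∀ v (hv : v ∈ D.B), hst (.loop v) = host (.inl ⟨D.p v, ndB v hv⟩) := by
    intro v hv
    obtain ⟨n, h0, ⟨w, hw, h1, h2⟩ | ⟨h1, h2⟩⟩ := hn (.loop v) hv
    · cases h1
      rw [h0, h2]
    · exact h1.elim
  refine ⟨fun v => P' (D.p v), fun e => P' (D.xp e), hst, ?_, ?_, ?_, ?_, ?_, ?_, ?_, ?_, ?_, ?_, ?_⟩
  · intro u hu v hv h
    exact D.p_inj (P'_inj _ _ (ndB u hu) (ndB v hv) h)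
  · intro l h s hs
    obtain ⟨n, h0, -⟩ := hn l h
    rw [h0]
    exact hc n s hs
  · intro v hv s hs
    simp only [nl v hv, P'_eq _ (ndB v hv)]
    exact hl _ s hs
  · intro x y h s hs
    have hJ : D.okJ L (.pair x y) := h
    rw [nj _ hJ, (hj _ s hs).1, (hj _ s hs).2, ← P'_eq, ← P'_eq]
    exact ⟨rfl, rfl⟩
  · intro e b h he s hs
    have hJ : D.okJ L (.dart e b) := h
    rw [nj _ hJ, (hj _ s hs).1, (hj _ s hs).2, ← P'_eq, ← P'_eq]
    refine ⟨?_, rfl⟩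
    change P' (D.cd e b (D.k e b)) = _
    rw [(k_X he b).2]
  · intro e b h he s hs
    have hJ : D.okJ L (.dart e b) := h
    rw [nj _ hJ, (hj _ s hs).1, (hj _ s hs).2, ← P'_eq, ← P'_eq]
    refine ⟨?_, rfl⟩
    change P' (D.cd e b (D.k e b)) = _
    rw [k_N he b, D.cd_one]
  · intro l h s hs t ht
    obtain ⟨n, h0, -⟩ := hn l h
    rw [h0]
    exact hb n s hs t ht
  · intro l l' h h' s hs s' hs' t ht t' ht' he
    obtain ⟨n, h0, hn1⟩ := hn l h
    obtain ⟨n', h0', hn1'⟩ := hn l' h'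
    rw [h0, h0'] at he
    obtain ⟨h1, h2, h3⟩ := hk _ _ s hs s' hs' t ht t' ht' he
    refine ⟨?_, h2, h3⟩
    rcases hn1 with ⟨v, hv, rfl, e1⟩ | ⟨h4, e1⟩ <;> rcases hn1' with ⟨v', hv', rfl, e2⟩ | ⟨h5, e2⟩
    · rw [e1, e2] at h1
      rw [D.p_inj (congrArg Subtype.val (Sum.inl_injective h1))]
    · rw [e1, e2] at h1; cases h1
    · rw [e1, e2] at h1; cases h1
    · rw [e1, e2] at h1
      exact congrArg Subtype.val (Sum.inr_injective h1)
  · intro e f he hf h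
    rcases xp_eq he.ce hf.ce (P'_inj _ _ (ndX e he) (ndX f hf) h) with h | h
    · exact .inl h
    · obtain ⟨g, hg⟩ := he
      exact .inr (hg.of_cr h)
  · intro e f h
    exact congrArg P' (xp_symm h.1)
  · intro e v he hv h
    have := P'_inj _ _ (ndX e he) (ndB v hv) h
    obtain ⟨s, hs, h1⟩ := xp_self he.ce false
    exact D.no_vertex _ _ _ hs v (h1.trans this)

end CDrawing

/-! ### Carriers -/

/-- A family of curves that meet, apart from their ends, only in prescribed points of independent
pairs `X` is a drawing of the required kind. -/
theorem nice_of_curves {V : Type*} {G : SimpleGraph V} (pos : V → ℝ × ℝ)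
    (pos_inj : Function.Injective pos) (γ : G.edgeSet → ℝ → ℝ × ℝ)
    (cont : ∀ e, ContinuousOn (γ e) (Icc 0 1)) (inj : ∀ e, InjOn (γ e) (Icc 0 1))
    (ends : ∀ e : G.edgeSet, ∃ a b : V, (e : Sym2 V) = s(a, b) ∧ γ e 0 = pos a ∧ γ e 1 = pos b)
    (nov : ∀ e, ∀ t ∈ Ioo (0 : ℝ) 1, ∀ v, γ e t ≠ pos v)
    (X : G.edgeSet → G.edgeSet → Prop) (Q : G.edgeSet → ℝ × ℝ)
    (hX : ∀ e f g, X e f → X e g → f = g)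
    (hX' : ∀ e f, X e f → ∀ v : V, v ∈ (e : Sym2 V) → v ∉ (f : Sym2 V))
    (meet : ∀ e f, e ≠ f → ∀ t ∈ Ioo (0 : ℝ) 1, ∀ t' ∈ Ioo (0 : ℝ) 1, γ e t = γ f t' →
      X e f ∧ γ e t = Q e) :
    ∃ D : Drawing G,
      D.IsAlmostPlanar ∧
      (∀ e f, D.Crosses e f → ∀ v : V, ¬ (v ∈ (e : Sym2 V) ∧ v ∈ (f : Sym2 V))) ∧
      (∀ e f, D.Crosses e f →
        ∃! p : ℝ × ℝ, p ∈ D.curve e '' Ioo 0 1 ∧ p ∈ D.curve f '' Ioo 0 1) := by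
  have cases3 : ∀ t ∈ Icc (0 : ℝ) 1, t = 0 ∨ t = 1 ∨ t ∈ Ioo (0 : ℝ) 1 := by
    intro t ht
    rcases ht.1.eq_or_lt with h | h
    · exact .inl h.symm
    · rcases ht.2.eq_or_lt with h' | h'
      · exact .inr (.inl h')
      · exact .inr (.inr ⟨h, h'⟩)
  let D : Drawing G :=
    { pos := pos
      pos_inj := pos_inj
      curve := γ
      curve_cont := cont
      curve_inj := inj
      curve_ends := ends
      interior_no_vertex := nov
      finite_meet := by
        intro e f hef
        refine Set.Finite.subset (s := {Q e, γ e 0, γ e 1, γ f 0, γ f 1}) (by simp) ?_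
        rintro _ ⟨⟨t, ht, rfl⟩, ⟨t', ht', h⟩⟩
        rcases cases3 t ht with rfl | rfl | h1
        · simp
        · simp
        · rcases cases3 t' ht' with rfl | rfl | h2
          · simp [h]
          · simp [h]
          · simp [(meet e f hef t h1 t' h2 h.symm).2]
      no_triple_point := by
        rintro _ e f g hef heg hfg ⟨t, ht, rfl⟩ ⟨t', ht', h'⟩ ⟨t'', ht'', h''⟩
        exact hfg (hX e f g (meet e f hef t ht t' ht' h'.symm).1 (meet e g heg t ht t'' ht'' h''.symm).1) }
  have cr : ∀ e f, D.Crosses e f → X e f := by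
    rintro e f ⟨hef, _, ⟨t, ht, rfl⟩, ⟨t', ht', h⟩⟩
    exact (meet e f hef t ht t' ht' h.symm).1
  refine ⟨D, fun e f g h h' => hX e f g (cr e f h) (cr e g h'),
    fun e f h v hv => hX' e f (cr e f h) v hv.1 hv.2, ?_⟩
  rintro e f ⟨hef, p, hp⟩
  refine ⟨p, hp, ?_⟩
  have key : ∀ q, q ∈ γ e '' Ioo 0 1 ∧ q ∈ γ f '' Ioo 0 1 → q = Q e := by
    rintro _ ⟨⟨t, ht, rfl⟩, ⟨t', ht', h⟩⟩
    exact (meet e f hef t ht t' ht' h.symm).2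
  intro q hq
  rw [key q hq, key p hp]

/-- The circle of radius `R` around the origin. -/
noncomputable def circ (R t : ℝ) : ℝ × ℝ :=
  (R * Real.cos (2 * Real.pi * t), R * Real.sin (2 * Real.pi * t))

theorem circ_cont (R : ℝ) : Continuous (circ R) := by unfold circ; fun_prop

theorem circ_norm {R : ℝ} (hR : 10 < R) (t : ℝ) : 3 < ‖circ R t‖ := by
  by_contra h
  push Not at h
  have h1 := (norm_fst_le (circ R t)).trans h
  have h2 := (norm_snd_le (circ R t)).trans h
  rw [Real.norm_eq_abs] at h1 h2
  have h1' := sq_le_sq' (by linarith [(abs_le.1 h1).1]) (abs_le.1 h1).2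
  have h2' := sq_le_sq' (by linarith [(abs_le.1 h2).1]) (abs_le.1 h2).2
  simp only [circ] at h1' h2'
  have h3 : R ^ 2 = (R * Real.cos (2 * Real.pi * t)) ^ 2 + (R * Real.sin (2 * Real.pi * t)) ^ 2 := by
    linear_combination (-R ^ 2) * Real.sin_sq_add_cos_sq (2 * Real.pi * t)
  nlinarith

theorem circ_radius {R R' t t' : ℝ} (hR : 0 < R) (hR' : 0 < R') (h : circ R t = circ R' t') : R = R' := by
  simp only [circ, Prod.mk.injEq] at h
  have h1 := Real.sin_sq_add_cos_sq (2 * Real.pi * t)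
  have h2 := Real.sin_sq_add_cos_sq (2 * Real.pi * t')
  have : R ^ 2 = R' ^ 2 := by
    calc R ^ 2 = (R * Real.cos (2 * Real.pi * t)) ^ 2 + (R * Real.sin (2 * Real.pi * t)) ^ 2 := by
          linear_combination (-R ^ 2) * h1
      _ = R' ^ 2 := by rw [h.1, h.2]; linear_combination (R' ^ 2) * h2
  exact (pow_left_inj₀ hR.le hR'.le two_ne_zero).1 this

theorem circ_inj {R t t' : ℝ} (hR : 0 < R) (ht : t ∈ Ioo (0 : ℝ) 1) (ht' : t' ∈ Icc (0 : ℝ) 1)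
    (h : circ R t = circ R t') : t = t' := by
  simp only [circ, Prod.mk.injEq] at h
  have h1 := mul_left_cancel₀ hR.ne' h.1
  have h2 := mul_left_cancel₀ hR.ne' h.2
  have hc : Real.cos (2 * Real.pi * t - 2 * Real.pi * t') = 1 := by
    rw [Real.cos_sub, h1, h2]
    linarith [Real.sin_sq_add_cos_sq (2 * Real.pi * t')]
  have hp := Real.pi_pos
  rw [Real.cos_eq_one_iff_of_lt_of_lt] at hc
  · have : 2 * Real.pi * (t - t') = 0 := by linarith
    rcases mul_eq_zero.1 this with h | h
    · linarith
    · linarith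
  · nlinarith [ht.1, ht.2, ht'.1, ht'.2]
  · nlinarith [ht.1, ht.2, ht'.1, ht'.2]

namespace CDrawing
variable {V : Type*} {G : SimpleGraph V}

/-- The vertices, being points of the plane, can be labelled injectively by real parameters. -/
theorem exists_param (D : CDrawing G) : ∃ s : V → ℝ, Function.Injective s ∧ ∀ v, s v ∈ Ioo (0 : ℝ) 1 := by
  have h : Cardinal.mk ℂ = Cardinal.mk (Ioo (0 : ℝ) 1) := by
    rw [Cardinal.mk_complex, Cardinal.mk_Ioo_real (by norm_num)]
  obtain ⟨φ⟩ := Cardinal.eq.1 h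
  exact ⟨fun v => φ (D.p v), fun a b hab => D.p_inj (φ.injective (Subtype.ext hab)), fun v => (φ _).2⟩

variable (D : CDrawing G) (L : Layout G D.B)

/-- Carriers of the new edges: one for each component of low degree vertices (given by its root)
and one for each dart. -/
def valid : V ⊕ (G.edgeSet × Bool) → Prop
  | .inl c => c ∉ D.B ∧ L.ρ c = c
  | .inr d => D.ok L (.dart d.1 d.2)

/-- Disjoint carrier curves for all components of low degree vertices and for all darts. Components
attached to `B` run along curves of the redrawn core, each with its own parameter; free components
run along concentric circles far out. -/
theorem carriers : ∃ (P : V → ℝ × ℝ) (Q : G.edgeSet → ℝ × ℝ) (U : V ⊕ (G.edgeSet × Bool) → ℝ → ℝ × ℝ),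
    InjOn P D.B ∧
    (∀ z, D.valid L z → Continuous (U z)) ∧
    (∀ z z', D.valid L z → D.valid L z' → ∀ t ∈ Ioo (0 : ℝ) 1, ∀ t' ∈ Icc (0 : ℝ) 1,
      U z t = U z' t' → z = z' ∧ t = t') ∧
    (∀ c x, D.valid L (.inl c) → L.lo c x → U (.inl c) 0 = P x) ∧
    (∀ c x, D.valid L (.inl c) → L.hi c x → U (.inl c) 1 = P x) ∧
    (∀ c, L.cyc c → U (.inl c) 0 = U (.inl c) 1) ∧
    (∀ c c', L.cyc c → L.cyc c' → U (.inl c) 0 = U (.inl c') 0 → c = c') ∧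
    (∀ c x, L.cyc c → x ∈ D.B → U (.inl c) 0 ≠ P x) ∧
    (∀ c e, L.cyc c → D.Xe e → U (.inl c) 0 ≠ Q e) ∧
    (∀ z x, D.valid L z → x ∈ D.B → ∀ t ∈ Ioo (0 : ℝ) 1, U z t ≠ P x) ∧
    (∀ z e, D.valid L z → D.Xe e → ∀ t ∈ Ioo (0 : ℝ) 1, U z t ≠ Q e) ∧
    (∀ c e b, L.cyc c → D.valid L (.inr (e, b)) → ∀ t ∈ Icc (0 : ℝ) 1, U (.inl c) 0 ≠ U (.inr (e, b)) t) ∧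
    (∀ e b, D.valid L (.inr (e, b)) → D.Xe e → U (.inr (e, b)) 0 = Q e ∧
      U (.inr (e, b)) 1 = P (D.vt e b)) ∧
    (∀ e b, D.valid L (.inr (e, b)) → ¬ D.Xe e → U (.inr (e, b)) 0 = P (D.vt e (!b)) ∧
      U (.inr (e, b)) 1 = P (D.vt e b)) ∧
    (∀ e f, D.Xe e → D.Xe f → Q e = Q f → e = f ∨ D.X e f) ∧
    (∀ e f, D.X e f → Q e = Q f) ∧
    (∀ e v, D.Xe e → v ∈ D.B → Q e ≠ P v) := by
  classical
  obtain ⟨s, hs, hsI⟩ := D.exists_param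
  obtain ⟨P, Q, host, hP, hc, hloop, hpair, hX, hN, hb, hk, hQ, hQ', hQP⟩ := D.core L
  have half : (1 / 2 : ℝ) ∈ Ioo (0 : ℝ) 1 := by constructor <;> norm_num
  have Xok : ∀ e b, D.Xe e → D.ok L (.dart e b) := by
    intro e b he
    exact ⟨fun v hv => .inr ⟨e, he.ce, hv⟩, .inl he⟩
  have Pn : ∀ v ∈ D.B, ‖P v‖ ≤ 3 := by
    intro v hv
    rw [← (hloop v hv _ half).1]
    exact hb (.loop v) hv _ half 0 (by simp)
  have Qn : ∀ e, D.Xe e → ‖Q e‖ ≤ 3 := by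
    intro e he
    rw [← (hX e false (Xok e _ he) he _ half).1]
    exact hb _ (Xok e _ he) _ half 0 (by simp)
  have hroot : ∀ c, ∃ u : ℝ → ℝ × ℝ, D.valid L (.inl c) →
      (∃ l, D.ok L l ∧ u = host l (s c) ∧ (∀ e b, l ≠ .dart e b) ∧ (∀ x, L.lo c x → u 0 = P x) ∧
        (∀ x, L.hi c x → u 1 = P x) ∧ ¬ L.cyc c) ∨
      ((∀ x, ¬ L.lo c x ∧ ¬ L.hi c x) ∧ u = circ (10 + s c)) := by
    intro c
    by_cases h1 : ∃ x, L.lo c x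
    · obtain ⟨x, hx⟩ := h1
      have hcy : ¬ L.cyc c := fun h => L.cyc_lo c x h hx
      by_cases h2 : ∃ y, L.hi c y ∧ x ≠ y
      · obtain ⟨y, hy, hxy⟩ := h2
        have ok : D.ok L (.pair x y) := ⟨hxy, c, hx, hy⟩
        refine ⟨host (.pair x y) (s c), fun _ => .inl ⟨_, ok, rfl, by simp, ?_, ?_, hcy⟩⟩
        · intro x' hx'
          rw [L.lo_unique _ _ _ hx' hx]
          exact (hpair x y ok _ (hsI c)).1
        · intro y' hy'
          rw [L.hi_unique _ _ _ hy' hy]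
          exact (hpair x y ok _ (hsI c)).2
      · push Not at h2
        have hxB := (L.lo_spec _ _ hx).1
        refine ⟨host (.loop x) (s c), fun _ => .inl ⟨.loop x, hxB, rfl, by simp, ?_, ?_, hcy⟩⟩
        · intro x' hx'
          rw [L.lo_unique _ _ _ hx' hx]
          exact (hloop x hxB _ (hsI c)).1
        · intro y' hy'
          rw [← h2 y' hy']
          exact (hloop x hxB _ (hsI c)).2
    · by_cases h2 : ∃ y, L.hi c y
      · obtain ⟨y, hy⟩ := h2
        have hcy : ¬ L.cyc c := fun h => L.cyc_hi c y h hy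
        have hyB := (L.hi_spec _ _ hy).1
        refine ⟨host (.loop y) (s c), fun _ => .inl ⟨.loop y, hyB, rfl, by simp, fun x hx => (h1 ⟨x, hx⟩).elim, ?_, hcy⟩⟩
        intro y' hy'
        rw [L.hi_unique _ _ _ hy' hy]
        exact (hloop y hyB _ (hsI c)).2
      · exact ⟨_, fun _ => .inr ⟨fun x => ⟨fun h => h1 ⟨x, h⟩, fun h => h2 ⟨x, h⟩⟩, rfl⟩⟩
  choose u hu using hroot
  let U : V ⊕ (G.edgeSet × Bool) → ℝ → ℝ × ℝ := Sum.elim u (fun d => host (.dart d.1 d.2) (1 / 2))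
  -- every carrier is either a host curve of the core or a large circle
  have main : ∀ z, D.valid L z → (∃ l σ, D.ok L l ∧ σ ∈ Ioo (0 : ℝ) 1 ∧ U z = host l σ ∧
      (∀ c, z = .inl c → σ = s c ∧ ∀ e b, l ≠ .dart e b) ∧ (∀ e b, z = .inr (e, b) → l = .dart e b)) ∨
      (∃ c, z = .inl c ∧ U z = circ (10 + s c)) := by
    rintro (c | ⟨e, b⟩) hz
    · rcases hu c hz with ⟨l, h1, h2, h3, -⟩ | ⟨-, h2⟩
      · refine .inl ⟨l, s c, h1, hsI c, h2, ?_, by simp⟩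
        rintro c' h
        cases h
        exact ⟨rfl, h3⟩
      · exact .inr ⟨c, rfl, h2⟩
    · refine .inl ⟨.dart e b, 1 / 2, hz, half, rfl, by simp, ?_⟩
      intro e' b' h
      cases h
      rfl
  have R10 : ∀ c, 10 < 10 + s c := fun c => by linarith [(hsI c).1]
  have R0 : ∀ c, 0 < 10 + s c := fun c => by linarith [(hsI c).1]
  have cycv : ∀ c, L.cyc c → D.valid L (.inl c) := fun c h => ⟨(L.cyc_root c h).2.2, (L.cyc_root c h).1⟩
  have cycu : ∀ c, L.cyc c → U (.inl c) = circ (10 + s c) := by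
    intro c h
    rcases hu c (cycv c h) with ⟨l, -, -, -, -, -, h'⟩ | ⟨-, h2⟩
    · exact (h' h).elim
    · exact h2
  have key : ∀ z z', D.valid L z → D.valid L z' → ∀ t ∈ Ioo (0 : ℝ) 1, ∀ t' ∈ Icc (0 : ℝ) 1,
      U z t = U z' t' → z = z' ∧ t = t' := by
    intro z z' hz hz' t ht t' ht' h
    have htI := Ioo_subset_Icc_self ht
    rcases main z hz with ⟨l, σ, o1, o2, o3, o4, o5⟩ | ⟨c, rfl, o⟩ <;>
    rcases main z' hz' with ⟨l', σ', o1', o2', o3', o4', o5'⟩ | ⟨c', rfl, o'⟩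
    · rw [o3, o3'] at h
      obtain ⟨rfl, rfl, rfl⟩ := hk _ _ o1 o1' _ o2 _ o2' _ ht _ ht' h
      refine ⟨?_, rfl⟩
      rcases z with c | ⟨e, b⟩ <;> rcases z' with c' | ⟨e', b'⟩
      · rw [hs ((o4 c rfl).1.symm.trans (o4' c' rfl).1)]
      · exact ((o4 c rfl).2 _ _ (o5' _ _ rfl)).elim
      · exact ((o4' c' rfl).2 _ _ (o5 _ _ rfl)).elim
      · have := (o5 _ _ rfl).symm.trans (o5' _ _ rfl)
        cases this
        rfl
    · rw [o3, o'] at h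
      have h1 := hb l o1 σ o2 t htI
      have h2 := circ_norm (R10 c') t'
      rw [h] at h1
      linarith
    · rw [o3', o] at h
      have h1 := hb l' o1' σ' o2' t' ht'
      have h2 := circ_norm (R10 c) t
      rw [← h] at h1
      linarith
    · rw [o, o'] at h
      have hr := circ_radius (R0 c) (R0 c') h
      have hcc : c = c' := hs (by linarith)
      subst hcc
      exact ⟨rfl, circ_inj (R0 c) ht ht' h⟩
  refine ⟨P, Q, U, hP, ?_, key, ?_, ?_, ?_, ?_, ?_, ?_, ?_, ?_, ?_, ?_, ?_, hQ, hQ', hQP⟩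
  · intro z hz
    rcases main z hz with ⟨l, σ, o1, o2, o3, -⟩ | ⟨c, rfl, o⟩
    · rw [o3]; exact hc l o1 σ o2
    · rw [o]; exact circ_cont _
  · intro c x hc hx
    rcases hu c hc with ⟨l, -, -, -, h1, -⟩ | ⟨h1, -⟩
    · exact h1 x hx
    · exact ((h1 x).1 hx).elim
  · intro c x hc hx
    rcases hu c hc with ⟨l, -, -, -, -, h1, -⟩ | ⟨h1, -⟩
    · exact h1 x hx
    · exact ((h1 x).2 hx).elim
  · intro c h
    rw [cycu c h]
    simp [circ]
  · intro c c' h h' he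
    rw [cycu c h, cycu c' h'] at he
    exact hs (by linarith [circ_radius (R0 c) (R0 c') he])
  · intro c x h hx he
    have h1 := Pn x hx
    have h2 := circ_norm (R10 c) 0
    rw [← he, cycu c h] at h1
    linarith
  · intro c e h hx he
    have h1 := Qn e hx
    have h2 := circ_norm (R10 c) 0
    rw [← he, cycu c h] at h1
    linarith
  · intro z x hz hx t ht h
    rcases main z hz with ⟨l, σ, o1, o2, o3, -⟩ | ⟨c, rfl, o⟩
    · rw [o3, ← (hloop x hx _ half).1] at h
      obtain ⟨-, -, h0⟩ := hk _ (.loop x) o1 hx _ o2 _ half _ ht 0 (by simp) h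
      exact ht.1.ne' h0
    · have h1 := Pn x hx
      have h2 := circ_norm (R10 c) t
      rw [← h, o] at h1
      linarith
  · intro z e hz he t ht h
    rcases main z hz with ⟨l, σ, o1, o2, o3, -⟩ | ⟨c, rfl, o⟩
    · rw [o3, ← (hX e false (Xok e _ he) he _ half).1] at h
      obtain ⟨-, -, h0⟩ := hk _ _ o1 (Xok e _ he) _ o2 _ half _ ht 0 (by simp) h
      exact ht.1.ne' h0
    · have h1 := Qn e he
      have h2 := circ_norm (R10 c) t
      rw [← h, o] at h1
      linarith
  · intro c e b h hv t ht he
    have h1 := hb (.dart e b) hv _ half t ht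
    have h2 := circ_norm (R10 c) 0
    rw [cycu c h] at he
    change _ = host (.dart e b) (1 / 2) t at he
    rw [← he] at h1
    linarith
  · intro e b hv he
    exact hX e b hv he _ half
  · intro e b hv he
    exact hN e b hv he _ half

end CDrawing

/-! ### The new drawing -/

namespace Layout
variable {V : Type*} {G : SimpleGraph V} {B : Set V} (L : Layout G B)

/-- The edge `e = uw` occupies the parameter interval `[α, β]` of the carrier with root `c`. -/
def Occ (e : Sym2 V) (c u w : V) (α β : ℝ) : Prop :=
  e = s(u, w) ∧ α < β ∧ c ∉ B ∧ L.ρ c = c ∧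
    (u ∉ B ∧ L.ρ u = c ∧ L.τ u = α ∨ u ∈ B ∧ α = 0 ∧ L.lo c u) ∧
    (w ∉ B ∧ L.ρ w = c ∧ (L.τ w = β ∨ β = 1 ∧ w = c ∧ L.cyc c) ∨ w ∈ B ∧ β = 1 ∧ L.hi c w) ∧
    ∀ v ∉ B, L.ρ v = c → L.τ v ∉ Ioo α β

variable {L}

theorem Occ.bounds {e c u w α β} (h : L.Occ e c u w α β) : 0 ≤ α ∧ β ≤ 1 := by
  obtain ⟨-, h1, -, -, h2, h3, -⟩ := h
  constructor
  · rcases h2 with ⟨h, -, rfl⟩ | ⟨-, rfl, -⟩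
    · exact (L.τ_mem u h).1
    · exact le_rfl
  · rcases h3 with ⟨h, -, rfl | ⟨rfl, -⟩⟩ | ⟨-, rfl, -⟩
    · exact (L.τ_mem w h).2.le
    · exact le_rfl
    · exact le_rfl

theorem Occ.le {e c u w α β f u' w' α' β' t} (h : L.Occ e c u w α β) (h' : L.Occ f c u' w' α' β')
    (ht : t ∈ Ioo α β) (ht' : t ∈ Ioo α' β') : α' ≤ α ∧ β ≤ β' := by
  have hb := h.bounds
  have hb' := h'.bounds
  obtain ⟨-, -, -, -, -, -, hv⟩ := h
  obtain ⟨-, -, -, -, h2, h3, -⟩ := h'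
  constructor
  · rcases h2 with ⟨h, hc, rfl⟩ | ⟨-, rfl, -⟩
    · by_contra hlt
      exact hv u' h hc ⟨not_le.1 hlt, ht'.1.trans ht.2⟩
    · exact hb.1
  · rcases h3 with ⟨h, hc, rfl | ⟨rfl, -⟩⟩ | ⟨-, rfl, -⟩
    · by_contra hlt
      exact hv w' h hc ⟨ht.1.trans ht'.2, not_le.1 hlt⟩
    · exact hb.2
    · exact hb.2

/-- Distinct edges on one carrier occupy disjoint open intervals. -/
theorem Occ.eq {e c u w α β f u' w' α' β' t} (h : L.Occ e c u w α β) (h' : L.Occ f c u' w' α' β')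
    (ht : t ∈ Ioo α β) (ht' : t ∈ Ioo α' β') : e = f := by
  obtain ⟨a1, b1⟩ := h.le h' ht ht'
  obtain ⟨a2, b2⟩ := h'.le h ht' ht
  obtain rfl := le_antisymm a1 a2
  obtain rfl := le_antisymm b1 b2
  obtain ⟨he, -, -, -, h2, h3, -⟩ := h
  obtain ⟨he', -, -, -, h2', h3', -⟩ := h'
  have hu : u = u' := by
    rcases h2 with ⟨h, hc, hτ⟩ | ⟨h, h0, hl⟩ <;> rcases h2' with ⟨h', hc', hτ'⟩ | ⟨h', h0', hl'⟩
    · exact L.τ_inj _ h _ h' (hc.trans hc'.symm) (hτ.trans hτ'.symm)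
    · exact (L.cyc_lo _ _ (hc ▸ (L.τ_zero u h (hτ.trans h0')).1) hl').elim
    · exact (L.cyc_lo _ _ (hc' ▸ (L.τ_zero u' h' (hτ'.trans h0)).1) hl).elim
    · exact L.lo_unique _ _ _ hl hl'
  have hw : w = w' := by
    have lt : ∀ v ∉ B, L.τ v ≠ 1 := fun v hv => (L.τ_mem v hv).2.ne
    rcases h3 with ⟨h, hc, hτ | ⟨h0, hwc, hy⟩⟩ | ⟨h, h0, hl⟩ <;>
    rcases h3' with ⟨h', hc', hτ' | ⟨h0', hwc', hy'⟩⟩ | ⟨h', h0', hl'⟩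
    · exact L.τ_inj _ h _ h' (hc.trans hc'.symm) (hτ.trans hτ'.symm)
    · exact (lt w h (hτ.trans h0')).elim
    · exact (lt w h (hτ.trans h0')).elim
    · exact (lt w' h' (hτ'.trans h0)).elim
    · exact hwc.trans hwc'.symm
    · exact (L.cyc_hi _ _ hy hl').elim
    · exact (lt w' h' (hτ'.trans h0)).elim
    · exact (L.cyc_hi _ _ hy' hl).elim
    · exact L.hi_unique _ _ _ hl hl'
  rw [he, he', hu, hw]

theorem ρ_ρ (v : V) (hv : v ∉ B) : L.ρ (L.ρ v) = L.ρ v := by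
  have h : ∀ a b, Relation.ReflTransGen (fun a b => G.Adj a b ∧ a ∉ B ∧ b ∉ B) a b →
      L.ρ a = L.ρ b := by
    intro a b h
    induction h with
    | refl => rfl
    | tail _ h ih => exact ih.trans (L.ρ_adj _ _ h.1 h.2.1 h.2.2)
  exact h _ _ (L.ρ_reach v hv)

end Layout

/-- A curve is injective on `[0, 1]` if its ends differ and its interior points are simple. -/
theorem injOn_of_key {g : ℝ → ℝ × ℝ} (hne : g 0 ≠ g 1)
    (h : ∀ t ∈ Ioo (0 : ℝ) 1, ∀ t' ∈ Icc (0 : ℝ) 1, g t = g t' → t = t') : InjOn g (Icc 0 1) := by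
  have c3 : ∀ t ∈ Icc (0 : ℝ) 1, t = 0 ∨ t = 1 ∨ t ∈ Ioo (0 : ℝ) 1 := by
    intro t ht
    rcases ht.1.eq_or_lt with h | h
    · exact .inl h.symm
    · rcases ht.2.eq_or_lt with h' | h'
      · exact .inr (.inl h')
      · exact .inr (.inr ⟨h, h'⟩)
  intro t ht t' ht' e
  rcases c3 t ht with h1 | h1 | h1
  · rcases c3 t' ht' with h2 | h2 | h2
    · rw [h1, h2]
    · rw [h1, h2] at e; exact (hne e).elim
    · exact (h t' h2 t ht e.symm).symm
  · rcases c3 t' ht' with h2 | h2 | h2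
    · rw [h1, h2] at e; exact (hne e.symm).elim
    · rw [h1, h2]
    · exact (h t' h2 t ht e.symm).symm
  · exact h t h1 t' ht' e

namespace CDrawing
variable {V : Type*} {G : SimpleGraph V} (D : CDrawing G) (L : Layout G D.B)

/-- The point with parameter `t` on the carrier `z` belongs to the interior of the edge `e`. -/
def Addr (e : G.edgeSet) (z : V ⊕ (G.edgeSet × Bool)) (t : ℝ) : Prop :=
  (∃ b, z = .inr (e, b)) ∨ ∃ c u w α β, z = .inl c ∧ L.Occ e c u w α β ∧ t ∈ Ioo α β

variable {D L}

theorem Addr.eq {e f : G.edgeSet} {z t} (h : D.Addr L e z t) (h' : D.Addr L f z t) : e = f := by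
  rcases h with ⟨b, rfl⟩ | ⟨c, u, w, α, β, rfl, h, ht⟩ <;>
  rcases h' with ⟨b', h1⟩ | ⟨c', u', w', α', β', h1, h', ht'⟩
  · cases h1; rfl
  · cases h1
  · cases h1
  · cases h1
    have he := h.eq h' ht ht'
    exact Subtype.ext he

/-- Edges with an end of low degree occupy intervals on the carriers of their components. The other
edges are a single dart, or two darts joined at the crossing point. -/
theorem nice_drawing (D : CDrawing G) (L : Layout G D.B) : ∃ D : Drawing G,
      D.IsAlmostPlanar ∧
      (∀ e f, D.Crosses e f → ∀ v : V, ¬ (v ∈ (e : Sym2 V) ∧ v ∈ (f : Sym2 V))) ∧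
      (∀ e f, D.Crosses e f →
        ∃! p : ℝ × ℝ, p ∈ D.curve e '' Ioo 0 1 ∧ p ∈ D.curve f '' Ioo 0 1) := by
  classical
  obtain ⟨P, Q, U, hP, cont, key, lo, hi, cyc, cycinj, cycP, cycQ, intP, intQ, cycd, dX, dN,
    hQ, hQ', hQP⟩ := D.carriers L
  let pos : V → ℝ × ℝ := fun v => if v ∈ D.B then P v else U (.inl (L.ρ v)) (L.τ v)
  have posB : ∀ v ∈ D.B, pos v = P v := fun v hv => if_pos hv
  have posN : ∀ v ∉ D.B, pos v = U (.inl (L.ρ v)) (L.τ v) := fun v hv => if_neg hv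
  have valρ : ∀ v ∉ D.B, D.valid L (.inl (L.ρ v)) := fun v hv => ⟨L.ρ_mem v hv, L.ρ_ρ v hv⟩
  have τcases : ∀ v ∉ D.B, L.τ v ∈ Ioo (0 : ℝ) 1 ∨ L.τ v = 0 ∧ L.cyc (L.ρ v) ∧ v = L.ρ v := by
    intro v hv
    rcases (L.τ_mem v hv).1.eq_or_lt with h | h
    · exact .inr ⟨h.symm, L.τ_zero v hv h.symm⟩
    · exact .inl ⟨h, (L.τ_mem v hv).2⟩
  have τI : ∀ v ∉ D.B, L.τ v ∈ Icc (0 : ℝ) 1 := fun v hv => Ico_subset_Icc_self (L.τ_mem v hv)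
  have NP : ∀ v ∉ D.B, ∀ x ∈ D.B, U (.inl (L.ρ v)) (L.τ v) ≠ P x := by
    intro v hv x hx
    rcases τcases v hv with h | ⟨h, hc, -⟩
    · exact intP _ _ (valρ v hv) hx _ h
    · rw [h]; exact cycP _ _ hc hx
  have pos_inj : Function.Injective pos := by
    intro v w h
    by_cases hv : v ∈ D.B <;> by_cases hw : w ∈ D.B
    · rw [posB v hv, posB w hw] at h
      exact hP hv hw h
    · rw [posB v hv, posN w hw] at h
      exact (NP w hw v hv h.symm).elim
    · rw [posN v hv, posB w hw] at h
      exact (NP v hv w hw h).elim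
    · rw [posN v hv, posN w hw] at h
      rcases τcases v hv with h1 | ⟨h1, h2, h3⟩
      · obtain ⟨h4, h5⟩ := key _ _ (valρ v hv) (valρ w hw) _ h1 _ (τI w hw) h
        exact L.τ_inj _ hv _ hw (Sum.inl.inj h4) h5
      · rcases τcases w hw with h1' | ⟨h1', h2', h3'⟩
        · obtain ⟨h4, h5⟩ := key _ _ (valρ w hw) (valρ v hv) _ h1' _ (τI v hv) h.symm
          exact L.τ_inj _ hv _ hw (Sum.inl.inj h4).symm h5.symm
        · rw [h1, h1'] at h
          have hvw := cycinj _ _ h2 h2' h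
          rw [h3, h3']
          exact hvw
  -- points in the interior of an edge are not vertices
  have addr_pos : ∀ e z t, D.valid L z → t ∈ Ioo (0 : ℝ) 1 → D.Addr L e z t → ∀ v, U z t ≠ pos v := by
    intro e z t hz ht ha v h
    by_cases hv : v ∈ D.B
    · rw [posB v hv] at h
      exact intP z v hz hv t ht h
    · rw [posN v hv] at h
      obtain ⟨rfl, h2⟩ := key _ _ hz (valρ v hv) _ ht _ (τI v hv) h
      rcases ha with ⟨b, hb⟩ | ⟨c, u, w, α, β, hc, ho, ht'⟩
      · cases hb
      · cases hc
        exact ho.2.2.2.2.2.2 v hv rfl (h2 ▸ ht')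
  have Q_pos : ∀ e, D.Xe e → ∀ v, Q e ≠ pos v := by
    intro e he v h
    by_cases hv : v ∈ D.B
    · rw [posB v hv] at h
      exact hQP e v he hv h
    · rw [posN v hv] at h
      rcases τcases v hv with h1 | ⟨h1, h2, -⟩
      · exact intQ _ e (valρ v hv) he _ h1 h.symm
      · rw [h1] at h
        exact cycQ _ e h2 he h.symm
  have main : ∀ e : G.edgeSet, ∃ g : ℝ → ℝ × ℝ, ContinuousOn g (Icc 0 1) ∧ InjOn g (Icc 0 1) ∧
      (∃ a b : V, (e : Sym2 V) = s(a, b) ∧ g 0 = pos a ∧ g 1 = pos b) ∧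
      ∀ t ∈ Ioo (0 : ℝ) 1, (∃ z τ, D.valid L z ∧ τ ∈ Ioo (0 : ℝ) 1 ∧ g t = U z τ ∧ D.Addr L e z τ) ∨
        (D.Xe e ∧ g t = Q e) := by
    intro e
    have hvt := D.vt_edge e
    by_cases hB : ∀ v ∈ (e : Sym2 V), v ∈ D.B
    · by_cases hXe : D.Xe e
      · -- a crossed edge consists of two darts
        have val : ∀ b, D.valid L (.inr (e, b)) := fun b => ⟨hB, .inl hXe⟩
        have d0 : ∀ b, U (.inr (e, b)) 0 = Q e := fun b => (dX e b (val b) hXe).1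
        have d1 : ∀ b, U (.inr (e, b)) 1 = pos (D.vt e b) := fun b => by
          rw [posB _ (hB _ (D.vt_mem e b))]; exact (dX e b (val b) hXe).2
        let g : ℝ → ℝ × ℝ := fun t =>
          if t ≤ 1 / 2 then U (.inr (e, false)) (1 - 2 * t) else U (.inr (e, true)) (2 * t - 1)
        have gl : ∀ t ≤ (1 / 2 : ℝ), g t = U (.inr (e, false)) (1 - 2 * t) := fun t ht => if_pos ht
        have gr : ∀ t, (1 / 2 : ℝ) ≤ t → g t = U (.inr (e, true)) (2 * t - 1) := by
          intro t ht
          rcases ht.eq_or_lt with rfl | ht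
          · rw [gl _ le_rfl]
            norm_num [d0]
          · exact if_neg (not_le.2 ht)
        have g0 : g 0 = pos (D.vt e false) := by rw [gl 0 (by norm_num)]; simpa using d1 false
        have g1 : g 1 = pos (D.vt e true) := by
          rw [gr 1 (by norm_num), ← d1 true]; norm_num
        have gint : ∀ t ∈ Ioo (0 : ℝ) 1, (∃ b, ∃ τ ∈ Ioo (0 : ℝ) 1, g t = U (.inr (e, b)) τ ∧
            t = if b then (1 + τ) / 2 else (1 - τ) / 2) ∨ g t = Q e ∧ t = 1 / 2 := by
          intro t ht
          rcases lt_trichotomy t (1 / 2) with h | h | h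
          · exact .inl ⟨false, 1 - 2 * t, ⟨by linarith, by linarith [ht.1]⟩, gl t h.le, by simp⟩
          · refine .inr ⟨?_, h⟩
            rw [gl t h.le, h]
            norm_num [d0]
          · exact .inl ⟨true, 2 * t - 1, ⟨by linarith, by linarith [ht.2]⟩, gr t h.le, by simp⟩
        have nop : ∀ t ∈ Ioo (0 : ℝ) 1, ∀ v, g t ≠ pos v := by
          intro t ht v
          rcases gint t ht with ⟨b, τ, hτ, h, -⟩ | ⟨h, -⟩
          · rw [h]; exact addr_pos e _ _ (val b) hτ (.inl ⟨b, rfl⟩) v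
          · rw [h]; exact Q_pos e hXe v
        refine ⟨g, ?_, ?_, ⟨_, _, hvt, g0, g1⟩, ?_⟩
        · apply Continuous.continuousOn
          refine Continuous.if_le (((cont _ (val false)).comp (by fun_prop : Continuous fun t : ℝ => 1 - 2 * t)))
            (((cont _ (val true)).comp (by fun_prop : Continuous fun t : ℝ => 2 * t - 1))) continuous_id
            continuous_const ?_
          rintro t rfl
          norm_num [d0]
        · refine injOn_of_key ?_ ?_
          · rw [g0, g1]
            exact fun h => D.vt_ne e false (pos_inj h)
          intro t h1 t' ht' h
          have h2 : t' ∈ Ioo (0 : ℝ) 1 := by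
            refine ⟨ht'.1.lt_of_ne' ?_, ht'.2.lt_of_ne ?_⟩
            · rintro rfl
              rw [g0] at h; exact nop _ h1 _ h
            · rintro rfl
              rw [g1] at h; exact nop _ h1 _ h
          rcases gint t h1 with ⟨b, τ, hτ, h3, h4⟩ | ⟨h3, h4⟩ <;>
          rcases gint t' h2 with ⟨b', τ', hτ', h3', h4'⟩ | ⟨h3', h4'⟩
          · rw [h3, h3'] at h
            obtain ⟨h5, h6⟩ := key _ _ (val b) (val b') _ hτ _ (Ioo_subset_Icc_self hτ') h
            cases h5
            rw [h4, h4', h6]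
          · rw [h3, h3'] at h
            exact (intQ _ _ (val b) hXe _ hτ h).elim
          · rw [h3, h3'] at h
            exact (intQ _ _ (val b') hXe _ hτ' h.symm).elim
          · rw [h4, h4']
        · intro t ht
          rcases gint t ht with ⟨b, τ, hτ, h, -⟩ | ⟨h, -⟩
          · exact .inl ⟨_, τ, val b, hτ, h, .inl ⟨b, rfl⟩⟩
          · exact .inr ⟨hXe, h⟩
      · have val : D.valid L (.inr (e, D.fb e)) := ⟨hB, .inr rfl⟩
        obtain ⟨d0, d1⟩ := dN e _ val hXe
        rw [← posB _ (hB _ (D.vt_mem e _))] at d0 d1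
        refine ⟨U (.inr (e, D.fb e)), (cont _ val).continuousOn, ?_, ⟨_, _, ?_, d0, d1⟩, ?_⟩
        · have hne : U (.inr (e, D.fb e)) 0 ≠ U (.inr (e, D.fb e)) 1 := by
            rw [d0, d1]
            exact fun h => D.vt_ne e _ (pos_inj h).symm
          exact injOn_of_key hne fun t ht t' ht' h => (key _ _ val val t ht t' ht' h).2
        · rw [hvt]
          cases D.fb e
          · simp [Sym2.eq_swap]
          · simp
        · intro t ht
          exact .inl ⟨_, t, val, ht, rfl, .inl ⟨_, rfl⟩⟩
    · -- an edge with an end of low degree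
      have hex : ∃ c u w α β, L.Occ e c u w α β := by
        rw [hvt]
        refine L.edge _ _ (D.adj e false) ?_
        by_contra h
        push Not at h
        refine hB fun v hv => ?_
        rcases (D.mem_iff false).1 hv with rfl | rfl
        · exact h.1
        · exact h.2
      obtain ⟨c, u, w, α, β, ho⟩ := hex
      have hb := ho.bounds
      have ho' := ho
      obtain ⟨he, hαβ, hcB, hcc, hu, hw, -⟩ := ho
      have val : D.valid L (.inl c) := ⟨hcB, hcc⟩
      have hne : u ≠ w := by
        have := e.2
        rw [he] at this
        exact G.ne_of_adj this
      have e0 : U (.inl c) α = pos u := by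
        rcases hu with ⟨h, rfl, rfl⟩ | ⟨h, rfl, hl⟩
        · rw [posN u h]
        · rw [posB u h]; exact lo c u val hl
      have e1 : U (.inl c) β = pos w := by
        rcases hw with ⟨h, hr, rfl | ⟨rfl, rfl, hy⟩⟩ | ⟨h, rfl, hl⟩
        · rw [posN w h, hr]
        · rw [posN w h, hr, (L.cyc_root _ hy).2.1]; exact (cyc _ hy).symm
        · rw [posB w h]; exact hi c w val hl
      have hm : ∀ t ∈ Ioo (0 : ℝ) 1, α + t * (β - α) ∈ Ioo α β := by
        intro t ht
        have := sub_pos.2 hαβ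
        constructor <;> nlinarith [ht.1, ht.2, mul_pos ht.1 this, mul_pos (sub_pos.2 ht.2) this]
      have hmI : ∀ t ∈ Icc (0 : ℝ) 1, α + t * (β - α) ∈ Icc (0 : ℝ) 1 := by
        intro t ht
        have := sub_pos.2 hαβ
        constructor <;> nlinarith [ht.1, ht.2, mul_nonneg ht.1 this.le, mul_nonneg (sub_nonneg.2 ht.2) this.le]
      have hmo : ∀ t ∈ Ioo (0 : ℝ) 1, α + t * (β - α) ∈ Ioo (0 : ℝ) 1 := fun t ht =>
        ⟨hb.1.trans_lt (hm t ht).1, (hm t ht).2.trans_le hb.2⟩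
      refine ⟨fun t => U (.inl c) (α + t * (β - α)), ?_, ?_, ⟨u, w, he, ?_, ?_⟩, ?_⟩
      · exact ((cont _ val).comp (by fun_prop)).continuousOn
      · refine injOn_of_key ?_ ?_
        · simp only [zero_mul, add_zero, one_mul, add_sub_cancel]
          rw [e0, e1]
          exact fun h => hne (pos_inj h)
        · intro t ht t' ht' h
          have := (key _ _ val val _ (hmo t ht) _ (hmI t' ht') h).2
          exact mul_right_cancel₀ (sub_pos.2 hαβ).ne' (add_left_cancel this)
      · simpa using e0
      · simpa using e1
      · intro t ht
        exact .inl ⟨_, _, val, hmo t ht, rfl, .inr ⟨c, u, w, α, β, rfl, ho', hm t ht⟩⟩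
  choose γ gc gi ge ga using main
  refine nice_of_curves pos pos_inj γ gc gi ge ?_ D.X Q (fun e f g h h' => h.1.unique h'.1)
    (fun e f h => h.2) ?_
  · intro e t ht v
    rcases ga e t ht with ⟨z, τ, hz, hτ, h, ha⟩ | ⟨he, h⟩
    · rw [h]; exact addr_pos e z τ hz hτ ha v
    · rw [h]; exact Q_pos e he v
  · intro e f hef t ht t' ht' h
    rcases ga e t ht with ⟨z, τ, hz, hτ, h1, ha⟩ | ⟨he, h1⟩ <;>
    rcases ga f t' ht' with ⟨z', τ', hz', hτ', h1', ha'⟩ | ⟨he', h1'⟩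
    · rw [h1, h1'] at h
      obtain ⟨rfl, rfl⟩ := key _ _ hz hz' _ hτ _ (Ioo_subset_Icc_self hτ') h
      exact (hef (ha.eq ha')).elim
    · rw [h1, h1'] at h
      exact (intQ _ _ hz he' _ hτ h).elim
    · rw [h1, h1'] at h
      exact (intQ _ _ hz' he _ hτ' h.symm).elim
    · rw [h1, h1'] at h
      exact ⟨(hQ e f he he' h).resolve_left hef, h1⟩

end CDrawing

/-- Every almost planar simple graph admits a drawing in which every edge crosses at most
one other edge, crossing edges share no endpoint, and crossing edges cross in exactly one
point. -/
theorem exists_nice_almostPlanar_drawing {V : Type*} (G : SimpleGraph V)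
    (hap : G.AlmostPlanar) :
    ∃ D : Drawing G,
      D.IsAlmostPlanar ∧
      (∀ e f, D.Crosses e f → ∀ v : V, ¬ (v ∈ (e : Sym2 V) ∧ v ∈ (f : Sym2 V))) ∧
      (∀ e f, D.Crosses e f →
        ∃! p : ℝ × ℝ, p ∈ D.curve e '' Ioo 0 1 ∧ p ∈ D.curve f '' Ioo 0 1) := by
  obtain ⟨D₀, h₀⟩ := hap
  obtain ⟨D⟩ := CDrawing.of_drawing D₀ h₀
  obtain ⟨L⟩ := Layout.exists G D.B D.B_deg
  exact D.nice_drawing L
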